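/- arXiv:math/0301178 — 2 statements merged into one kernel-verified Lean document; each statement's English description precedes it below -/
import Mathlib

section
/- Let n = p₁^{e₁}···p_k^{e_k} where p₁,…,p_k are distinct primes, and let φ : Γ(p₁^{2e₁},…,p_k^{2e_k}) → ℤ^k be the surjective homomorphism with φ(a_i) = e_i and φ(b) = 0. Then the kernel of φ is isomorphic as a group to the additive group of ℤ[1/n], the subring of ℚ generated by ℤ and 1/n. -/
/-- `ℤ[1/n]`: the subring of `ℚ` generated by `ℤ` and `1/n`. -/
def Zinv (n : ℕ) : Subring ℚ := Subring.closure {((n : ℚ))⁻¹}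

/-- The relators for the group
`Γ(n₁,…,n_k) = ⟨a₁,…,a_k, b ∣ aᵢ⁻¹ b aᵢ = b^{nᵢ}, aᵢaⱼ = aⱼaᵢ (i ≠ j)⟩`.
The generator `aᵢ` is `Sum.inl i` and `b` is `Sum.inr ()`. -/
def gammaRels {k : ℕ} (n : Fin k → ℕ) : Set (FreeGroup (Fin k ⊕ Unit)) :=
  {r | (∃ i : Fin k,
        r = (FreeGroup.of (Sum.inl i))⁻¹ * FreeGroup.of (Sum.inr ()) *
            FreeGroup.of (Sum.inl i) * (FreeGroup.of (Sum.inr ()) ^ (n i))⁻¹) ∨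
      (∃ i j : Fin k, i ≠ j ∧
        r = FreeGroup.of (Sum.inl i) * FreeGroup.of (Sum.inl j) *
            (FreeGroup.of (Sum.inl i))⁻¹ * (FreeGroup.of (Sum.inl j))⁻¹)}

/-- The group `Γ(n₁,…,n_k)` given by the presentation
`⟨a₁,…,a_k, b ∣ aᵢ⁻¹ b aᵢ = b^{nᵢ}, aᵢaⱼ = aⱼaᵢ (i ≠ j)⟩`. -/
def GammaGroup {k : ℕ} (n : Fin k → ℕ) : Type := PresentedGroup (gammaRels n)

instance {k : ℕ} (n : Fin k → ℕ) : Group (GammaGroup n) := by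
  unfold GammaGroup; infer_instance

/-- The generator `aᵢ` of `Γ(n₁,…,n_k)`. -/
def gammaA {k : ℕ} (n : Fin k → ℕ) (i : Fin k) : GammaGroup n :=
  PresentedGroup.of (rels := gammaRels n) (Sum.inl i)

/-- The generator `b` of `Γ(n₁,…,n_k)`. -/
def gammaB {k : ℕ} (n : Fin k → ℕ) : GammaGroup n :=
  PresentedGroup.of (rels := gammaRels n) (Sum.inr ())

/-- The solvable Baumslag–Solitar group `BS(1,n) = ⟨a, b ∣ a b a⁻¹ = bⁿ⟩`.
The generator `a` is `true` and `b` is `false`. -/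
def BS (n : ℕ) : Type :=
  PresentedGroup {FreeGroup.of true * FreeGroup.of false * (FreeGroup.of true)⁻¹ *
    (FreeGroup.of false ^ n)⁻¹}

instance (n : ℕ) : Group (BS n) := by unfold BS; infer_instance

/-!
Write `a^s` for a product of generators `aᵢ` and `N^s` for the corresponding product of the `Nᵢ`.
The relations in the form `b aᵢ = aᵢ b^{Nᵢ}` and `aᵢ⁻¹ b = b^{Nᵢ} aᵢ⁻¹` push positive powers of the
`aᵢ` to the left and negative ones to the right, so every element of `Γ(N)` is `a^s b^m a^{-t}`.
It lies in `ker φ` only if `s = t`. In the action on `ℚ` where `aᵢ` divides by `Nᵢ` and `b`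
translates by `1`, the element `a^s b^m a^{-s}` is the translation by `m / N^s`: it determines the
element, since `m = 0` forces it to be trivial, and such fractions fill `ℤ[1/∏ Nᵢ]`.
For `Nᵢ = pᵢ^{2eᵢ}` we have `∏ Nᵢ = n²`, and `ℤ[1/n²] = ℤ[1/n]`.
-/

theorem inv_mem_Zinv (n : ℕ) : (n : ℚ)⁻¹ ∈ Zinv n :=
  Subring.subset_closure rfl

theorem inv_mem_Zinv_of_dvd {d n : ℕ} (hn : n ≠ 0) (h : d ∣ n) : (d : ℚ)⁻¹ ∈ Zinv n := by
  obtain ⟨q, rfl⟩ := h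
  have hq : (q : ℚ) ≠ 0 := Nat.cast_ne_zero.mpr (right_ne_zero_of_mul hn)
  have heq : (d : ℚ)⁻¹ = q * ((d * q : ℕ) : ℚ)⁻¹ := by
    rw [Nat.cast_mul, mul_inv_rev, mul_inv_cancel_left₀ hq]
  rw [heq]
  exact mul_mem (natCast_mem _ q) (inv_mem_Zinv _)

theorem Zinv_pow {r : ℕ} (hr : r ≠ 0) (n : ℕ) : Zinv (n ^ r) = Zinv n := by
  rcases eq_or_ne n 0 with rfl | hn
  · rw [zero_pow hr]
  apply le_antisymm <;> refine Subring.closure_le.mpr (Set.singleton_subset_iff.mpr ?_)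
  · rw [Nat.cast_pow, ← inv_pow]
    exact pow_mem (inv_mem_Zinv n) r
  · exact inv_mem_Zinv_of_dvd (pow_ne_zero r hn) (dvd_pow_self n hr)

theorem inv_prod_map_mem_Zinv_prod {ι : Type*} [Fintype ι] {N : ι → ℕ} (hN : ∀ i, N i ≠ 0)
    (s : Multiset ι) : ((s.map N).prod : ℚ)⁻¹ ∈ Zinv (∏ i, N i) := by
  induction s using Multiset.induction_on with
  | empty => simp
  | cons i s ih =>
    rw [Multiset.map_cons, Multiset.prod_cons, Nat.cast_mul, mul_inv]
    have hi : N i ∣ ∏ j, N j := Finset.dvd_prod_of_mem N (Finset.mem_univ i)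
    exact mul_mem (inv_mem_Zinv_of_dvd (Finset.prod_ne_zero_iff.mpr fun j _ => hN j) hi) ih

theorem exists_eq_div_pow_of_mem_Zinv {n : ℕ} (hn : n ≠ 0) {q : ℚ} (hq : q ∈ Zinv n) :
    ∃ (m : ℤ) (t : ℕ), q = m / (n : ℚ) ^ t := by
  have hn' : (n : ℚ) ≠ 0 := Nat.cast_ne_zero.mpr hn
  induction hq using Subring.closure_induction with
  | mem q hq => exact ⟨1, 1, by simpa using hq⟩
  | zero => exact ⟨0, 0, by simp⟩
  | one => exact ⟨1, 0, by simp⟩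
  | add _ _ _ _ hx hy =>
    obtain ⟨⟨m, t, rfl⟩, l, s, rfl⟩ := hx, hy
    exact ⟨m * n ^ s + n ^ t * l, t + s, by
      push_cast
      rw [div_add_div _ _ (pow_ne_zero t hn') (pow_ne_zero s hn'), pow_add]⟩
  | neg _ _ hx =>
    obtain ⟨m, t, rfl⟩ := hx
    exact ⟨-m, t, by rw [Int.cast_neg, neg_div]⟩
  | mul _ _ _ _ hx hy =>
    obtain ⟨⟨m, t, rfl⟩, l, s, rfl⟩ := hx, hy
    exact ⟨m * l, t + s, by rw [Int.cast_mul, pow_add, div_mul_div_comm]⟩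

section Affine

variable {K : Type*} [Field K]

theorem semiconjBy_divRight₀_addRight {n : ℕ} (hn : (n : K) ≠ 0) :
    SemiconjBy (Equiv.divRight₀ (n : K) hn) (Equiv.addRight 1 ^ n) (Equiv.addRight 1) := by
  ext x
  simp [add_div, hn]

theorem commute_divRight₀ {c d : K} (hc : c ≠ 0) (hd : d ≠ 0) :
    Commute (Equiv.divRight₀ c hc) (Equiv.divRight₀ d hd) := by
  ext x
  exact div_right_comm x d c

end Affine

namespace GammaGroup

variable {k : ℕ} {N : Fin k → ℕ}

theorem semiconjBy_gammaA (i : Fin k) :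
    SemiconjBy (gammaA N i) (gammaB N ^ N i) (gammaB N) := by
  have h : (gammaA N i)⁻¹ * gammaB N * gammaA N i * (gammaB N ^ N i)⁻¹ = 1 :=
    PresentedGroup.one_of_mem (rels := gammaRels N) (Or.inl ⟨i, rfl⟩)
  rw [SemiconjBy, ← mul_inv_eq_one.mp h]
  group

theorem gammaA_inv_mul_gammaB_zpow (i : Fin k) (m : ℤ) :
    (gammaA N i)⁻¹ * gammaB N ^ m = gammaB N ^ (N i * m) * (gammaA N i)⁻¹ := by
  rw [zpow_mul, zpow_natCast, ((semiconjBy_gammaA i).zpow_right m).inv_symm_left.eq]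

theorem commute_gammaA (i j : Fin k) : Commute (gammaA N i) (gammaA N j) := by
  rcases eq_or_ne i j with rfl | hij
  · exact Commute.refl _
  have h : gammaA N i * gammaA N j * (gammaA N i)⁻¹ * (gammaA N j)⁻¹ = 1 :=
    PresentedGroup.one_of_mem (rels := gammaRels N) (Or.inr ⟨i, j, hij, rfl⟩)
  exact mul_inv_eq_iff_eq_mul.mp (mul_inv_eq_one.mp h)

theorem induction_left {P : GammaGroup N → Prop} (one : P 1)
    (gammaA_mul : ∀ i g, P g → P (gammaA N i * g))
    (gammaA_inv_mul : ∀ i g, P g → P ((gammaA N i)⁻¹ * g))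
    (gammaB_mul : ∀ g, P g → P (gammaB N * g))
    (gammaB_inv_mul : ∀ g, P g → P ((gammaB N)⁻¹ * g)) (g : GammaGroup N) : P g := by
  have hg : g ∈ Subgroup.closure (Set.range (PresentedGroup.of (rels := gammaRels N))) :=
    (PresentedGroup.closure_range_of (gammaRels N)).symm ▸ Subgroup.mem_top g
  induction hg using Subgroup.closure_induction_left with
  | one => exact one
  | mul_left _ hx g _ ih =>
    obtain ⟨i | _, rfl⟩ := hx
    exacts [gammaA_mul i g ih, gammaB_mul g ih]
  | inv_mul_cancel _ hx g _ ih =>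
    obtain ⟨i | _, rfl⟩ := hx
    exacts [gammaA_inv_mul i g ih, gammaB_inv_mul g ih]

section lift

variable {G : Type*} [Group G] {a : Fin k → G} {b : G}
  (hab : ∀ i, SemiconjBy (a i) (b ^ N i) b) (haa : ∀ i j, i ≠ j → Commute (a i) (a j))

/-- The universal property of `Γ(N)`: elements of a group `G` that satisfy the defining relations
determine a homomorphism `Γ(N) →* G`. -/
def lift : GammaGroup N →* G :=
  PresentedGroup.toGroup (rels := gammaRels N) (f := Sum.elim a fun _ => b) <| by
    rintro _ (⟨i, rfl⟩ | ⟨i, j, hij, rfl⟩)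
    · simp only [map_mul, map_inv, map_pow, FreeGroup.lift_apply_of, Sum.elim_inl, Sum.elim_inr]
      rw [mul_inv_eq_one, mul_assoc, inv_mul_eq_iff_eq_mul]
      exact (hab i).eq.symm
    · simp only [map_mul, map_inv, FreeGroup.lift_apply_of, Sum.elim_inl]
      rw [mul_inv_eq_one, mul_inv_eq_iff_eq_mul]
      exact haa i j hij

theorem lift_gammaA (i : Fin k) : lift hab haa (gammaA N i) = a i :=
  PresentedGroup.toGroup.of _

theorem lift_gammaB : lift hab haa (gammaB N) = b :=
  PresentedGroup.toGroup.of _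

end lift

section monomial

variable (N) in
/-- The monomial `a^s = ∏_{i ∈ s} aᵢ` in the commuting generators `aᵢ`. The exponent, a vector in
`ℕ^k`, is encoded as the multiset `s` in which `i` has the multiplicity of its `i`-th entry. -/
def monomial (s : Multiset (Fin k)) : GammaGroup N :=
  (s.map (gammaA N)).noncommProd fun _ hx _ hy _ => by
    obtain ⟨i, -, rfl⟩ := Multiset.mem_map.mp hx
    obtain ⟨j, -, rfl⟩ := Multiset.mem_map.mp hy
    exact commute_gammaA i j

theorem monomial_zero : monomial N 0 = 1 := by
  simp [monomial]

theorem monomial_cons (i : Fin k) (s : Multiset (Fin k)) :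
    monomial N (i ::ₘ s) = gammaA N i * monomial N s := by
  simp [monomial]

theorem commute_gammaA_monomial (i : Fin k) (s : Multiset (Fin k)) :
    Commute (gammaA N i) (monomial N s) := by
  refine Multiset.noncommProd_commute _ _ _ fun x hx => ?_
  obtain ⟨j, -, rfl⟩ := Multiset.mem_map.mp hx
  exact commute_gammaA i j

theorem semiconjBy_monomial (s : Multiset (Fin k)) :
    SemiconjBy (monomial N s) (gammaB N ^ (s.map N).prod) (gammaB N) := by
  induction s using Multiset.induction_on with
  | empty => simp [monomial_zero]
  | cons i s ih =>
    rw [monomial_cons, Multiset.map_cons, Multiset.prod_cons, mul_comm, pow_mul]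
    exact (semiconjBy_gammaA i).mul_left (ih.pow_right (N i))

theorem exists_eq_monomial_mul_gammaB_zpow_mul_inv (g : GammaGroup N) :
    ∃ (s t : Multiset (Fin k)) (m : ℤ), g = monomial N s * gammaB N ^ m * (monomial N t)⁻¹ := by
  induction g using induction_left with
  | one => exact ⟨0, 0, 0, by simp⟩
  | gammaA_mul i _ ih =>
    obtain ⟨s, t, m, rfl⟩ := ih
    exact ⟨i ::ₘ s, t, m, by simp only [monomial_cons, mul_assoc]⟩
  | gammaA_inv_mul i _ ih =>
    obtain ⟨s, t, m, rfl⟩ := ih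
    refine ⟨s, i ::ₘ t, N i * m, ?_⟩
    calc (gammaA N i)⁻¹ * (monomial N s * gammaB N ^ m * (monomial N t)⁻¹)
        = (gammaA N i)⁻¹ * monomial N s * gammaB N ^ m * (monomial N t)⁻¹ := by
          simp only [mul_assoc]
      _ = monomial N s * ((gammaA N i)⁻¹ * gammaB N ^ m) * (monomial N t)⁻¹ := by
          rw [(commute_gammaA_monomial i s).inv_left.eq, mul_assoc (monomial N s)]
      _ = monomial N s * gammaB N ^ (N i * m) * ((gammaA N i)⁻¹ * (monomial N t)⁻¹) := by
          rw [gammaA_inv_mul_gammaB_zpow]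
          simp only [mul_assoc]
      _ = monomial N s * gammaB N ^ (N i * m) * (monomial N (i ::ₘ t))⁻¹ := by
          rw [monomial_cons, (commute_gammaA_monomial i t).eq, mul_inv_rev]
  | gammaB_mul _ ih =>
    obtain ⟨s, t, m, rfl⟩ := ih
    exact ⟨s, t, (s.map N).prod + m, by
      simp only [← mul_assoc, ← (semiconjBy_monomial s).eq, zpow_add, zpow_natCast]⟩
  | gammaB_inv_mul _ ih =>
    obtain ⟨s, t, m, rfl⟩ := ih
    exact ⟨s, t, -(s.map N).prod + m, by
      simp only [← mul_assoc, ← (semiconjBy_monomial s).inv_right.eq, zpow_add, zpow_neg,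
        zpow_natCast]⟩

end monomial

section affineAction

variable (hN : ∀ i, N i ≠ 0)

/-- The affine action of `Γ(N)` on `ℚ`, in which `aᵢ` divides by `Nᵢ` and `b` translates by `1`. -/
def affineAction : GammaGroup N →* Equiv.Perm ℚ :=
  lift (a := fun i => Equiv.divRight₀ (N i : ℚ) (Nat.cast_ne_zero.mpr (hN i)))
    (b := Equiv.addRight 1)
    (fun _ => semiconjBy_divRight₀_addRight _) (fun _ _ _ => commute_divRight₀ _ _)

theorem affineAction_gammaA_apply (i : Fin k) (x : ℚ) :
    affineAction hN (gammaA N i) x = x / N i := by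
  rw [affineAction, lift_gammaA, Equiv.divRight₀_apply]

theorem affineAction_gammaB_zpow_apply (m : ℤ) (x : ℚ) :
    affineAction hN (gammaB N ^ m) x = x + m := by
  rw [affineAction, map_zpow, lift_gammaB, Equiv.zsmul_addRight, Equiv.coe_addRight, zsmul_one]

theorem affineAction_monomial_apply (s : Multiset (Fin k)) (x : ℚ) :
    affineAction hN (monomial N s) x = x / (s.map N).prod := by
  induction s using Multiset.induction_on with
  | empty => simp [monomial_zero]
  | cons i s ih =>
    rw [monomial_cons, map_mul, Equiv.Perm.mul_apply, ih, affineAction_gammaA_apply,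
      Multiset.map_cons, Multiset.prod_cons, Nat.cast_mul, div_div, mul_comm]

theorem affineAction_conj_apply (s : Multiset (Fin k)) (m : ℤ) (x : ℚ) :
    affineAction hN (monomial N s * gammaB N ^ m * (monomial N s)⁻¹) x =
      x + m / (s.map N).prod := by
  obtain ⟨y, rfl⟩ := (affineAction hN (monomial N s)).surjective x
  rw [map_mul, map_mul, map_inv, Equiv.Perm.mul_apply, Equiv.Perm.mul_apply,
    Equiv.Perm.inv_def, Equiv.symm_apply_apply, affineAction_gammaB_zpow_apply,
    affineAction_monomial_apply, affineAction_monomial_apply, add_div]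

end affineAction

section ker

variable {φ : GammaGroup N →* Multiplicative (Fin k → ℤ)} (hN : ∀ i, N i ≠ 0)
  (hA : ∀ i, φ (gammaA N i) = Multiplicative.ofAdd (Pi.single i 1)) (hB : φ (gammaB N) = 1)

include hA in
theorem map_monomial (s : Multiset (Fin k)) :
    φ (monomial N s) = Multiplicative.ofAdd fun i => (s.count i : ℤ) := by
  induction s using Multiset.induction_on with
  | empty => simp only [monomial_zero, map_one, Multiset.count_zero, Nat.cast_zero]; rfl
  | cons i s ih =>
    rw [monomial_cons, map_mul, hA, ih, ← ofAdd_add]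
    congr 1
    ext j
    simp [Multiset.count_cons, Pi.single_apply, add_comm]

include hA hB

theorem mem_ker_iff {g : GammaGroup N} :
    g ∈ φ.ker ↔ ∃ (s : Multiset (Fin k)) (m : ℤ),
      g = monomial N s * gammaB N ^ m * (monomial N s)⁻¹ := by
  refine ⟨fun hg => ?_, ?_⟩
  · obtain ⟨s, t, m, rfl⟩ := exists_eq_monomial_mul_gammaB_zpow_mul_inv g
    have hst : φ (monomial N s) = φ (monomial N t) := by
      simpa [hB, mul_inv_eq_one] using MonoidHom.mem_ker.mp hg
    rw [map_monomial hA, map_monomial hA] at hst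
    obtain rfl : s = t := Multiset.ext.mpr fun i =>
      Nat.cast_injective (R := ℤ) (congrFun (Multiplicative.ofAdd.injective hst) i)
    exact ⟨s, m, rfl⟩
  · rintro ⟨s, m, rfl⟩
    simp [MonoidHom.mem_ker, hB]

/-- The homomorphism `ker φ → ℚ` that sends `g` to the rational by which it translates `ℚ` under
the affine action, read off as the image of `0`. -/
def kerTranslation : Additive φ.ker →+ ℚ :=
  AddMonoidHom.mk' (fun g => affineAction hN (g.toMul : GammaGroup N) 0) fun g h => by
    obtain ⟨s, m, hg⟩ := (mem_ker_iff hA hB).mp g.toMul.2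
    rw [toMul_add, Subgroup.coe_mul, map_mul, Equiv.Perm.mul_apply, hg,
      affineAction_conj_apply, affineAction_conj_apply, zero_add, add_comm]

theorem kerTranslation_apply (g : Additive φ.ker) :
    kerTranslation hN hA hB g = affineAction hN (g.toMul : GammaGroup N) 0 :=
  rfl

theorem kerTranslation_injective : Function.Injective (kerTranslation hN hA hB) := by
  refine (injective_iff_map_eq_zero _).mpr fun g hg => ?_
  obtain ⟨s, m, hgm⟩ := (mem_ker_iff hA hB).mp g.toMul.2
  have hs : ((s.map N).prod : ℚ) ≠ 0 := by
    simpa [Multiset.prod_eq_zero_iff] using fun i _ => hN i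
  have hm : m = 0 := by
    rw [kerTranslation_apply, hgm, affineAction_conj_apply, zero_add] at hg
    exact_mod_cast (div_eq_zero_iff.mp hg).resolve_right hs
  apply Additive.toMul.injective
  apply Subtype.ext
  simp [hgm, hm]

theorem range_kerTranslation :
    (kerTranslation hN hA hB).range = (Zinv (∏ i, N i)).toAddSubgroup := by
  have hprod : ∏ i, N i ≠ 0 := Finset.prod_ne_zero_iff.mpr fun i _ => hN i
  ext q
  constructor
  · rintro ⟨g, rfl⟩
    obtain ⟨s, m, hgm⟩ := (mem_ker_iff hA hB).mp g.toMul.2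
    rw [kerTranslation_apply, hgm, affineAction_conj_apply, zero_add, div_eq_mul_inv]
    exact (Zinv _).mul_mem (intCast_mem _ m) (inv_prod_map_mem_Zinv_prod hN s)
  · intro hq
    obtain ⟨m, t, rfl⟩ := exists_eq_div_pow_of_mem_Zinv hprod hq
    have ht : ((t • Finset.univ.val).map N).prod = (∏ i, N i) ^ t := by
      rw [Multiset.map_nsmul, Multiset.prod_nsmul, Finset.prod_map_val]
    let s : Multiset (Fin k) := t • Finset.univ.val
    let g := monomial N s * gammaB N ^ m * (monomial N s)⁻¹
    have hg : g ∈ φ.ker := (mem_ker_iff hA hB).mpr ⟨_, m, rfl⟩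
    refine ⟨Additive.ofMul ⟨g, hg⟩, ?_⟩
    rw [kerTranslation_apply, toMul_ofMul, affineAction_conj_apply, ht, zero_add, Nat.cast_pow]

end ker

end GammaGroup

theorem gammaGroup_ker_iso_Zinv_general {k : ℕ} {N : Fin k → ℕ} (hN : ∀ i, N i ≠ 0)
    (φ : GammaGroup N →* Multiplicative (Fin k → ℤ))
    (hA : ∀ i, φ (gammaA N i) = Multiplicative.ofAdd (Pi.single i 1)) (hB : φ (gammaB N) = 1) :
    Nonempty (Additive φ.ker ≃+ Zinv (∏ i, N i)) :=
  ⟨(AddMonoidHom.ofInjective (GammaGroup.kerTranslation_injective hN hA hB)).trans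
    (AddEquiv.addSubgroupCongr (GammaGroup.range_kerTranslation hN hA hB))⟩

/-- For `n = p₁^{e₁} ⋯ p_k^{e_k}` (distinct primes), the kernel of the
projection `φ : Γ(p₁^{2e₁},…,p_k^{2e_k}) → ℤ^k` is isomorphic, as a group, to
the additive group of `ℤ[1/n]`. -/
theorem gammaGroup_ker_iso_Zinv {k : ℕ} (p e : Fin k → ℕ)
    (hp : ∀ i, (p i).Prime) (hpinj : Function.Injective p) (he : ∀ i, 1 ≤ e i)
    (n : ℕ) (hn : n = ∏ i, p i ^ e i)
    (φ : GammaGroup (fun i => p i ^ (2 * e i)) →* Multiplicative (Fin k → ℤ))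
    (hsurj : Function.Surjective φ)
    (hA : ∀ i : Fin k, φ (gammaA (fun i => p i ^ (2 * e i)) i) =
      Multiplicative.ofAdd (Pi.single i 1))
    (hB : φ (gammaB (fun i => p i ^ (2 * e i))) = 1) :
    Nonempty (Additive (MonoidHom.ker φ) ≃+ ↥(Zinv n)) := by
  have hprod : ∏ i, p i ^ (2 * e i) = n ^ 2 := by
    simp only [hn, ← Finset.prod_pow, ← pow_mul, mul_comm]
  rw [← Zinv_pow two_ne_zero n, ← hprod]
  exact gammaGroup_ker_iso_Zinv_general (fun i => pow_ne_zero _ (hp i).ne_zero) φ hA hB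
end

section
/- Let T be a bounded valence, bushy tree with its graph metric, and suppose a group G quasi-acts on T, i.e. there is an assignment g ↦ A_g of (K,C)-quasi-isometries of T with uniform constants K, C such that A_identity is within uniformly bounded sup-distance of the identity map and, for all g, h ∈ G, A_{gh} is within uniformly bounded sup-distance of A_g ∘ A_h. Then there exist a bounded valence, bushy tree T', an isometric action of G on T' by graph automorphisms, and a quasi-isometry f : T' → T which intertwines the action of G on T' with the quasi-action of G on T to within a uniformly bounded distance, i.e. sup over g ∈ G and x ∈ T' of d(f(g·x), A_g(f(x))) is finite. -/
def IsQI {X Y : Type*} (K C : ℝ) (dX : X → X → ℝ) (dY : Y → Y → ℝ)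
    (f : X → Y) : Prop :=
  (∀ x₁ x₂ : X, dX x₁ x₂ / K - C ≤ dY (f x₁) (f x₂)) ∧
  (∀ x₁ x₂ : X, dY (f x₁) (f x₂) ≤ K * dX x₁ x₂ + C) ∧
  (∀ y : Y, ∃ x : X, dY (f x) y ≤ C)

/-- The graph (shortest path) metric of a graph, with values in `ℝ`. -/
noncomputable def gdist {V : Type*} (T : SimpleGraph V) (u v : V) : ℝ :=
  (T.dist u v : ℝ)

/-- A graph has bounded valence if all vertex degrees are uniformly bounded. -/
def BoundedValence {V : Type*} (T : SimpleGraph V) : Prop :=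
  ∃ D : ℕ, ∀ v : V, (T.neighborSet v).Finite ∧ (T.neighborSet v).ncard ≤ D

/-- A tree is bushy if every vertex is a uniformly bounded distance from a
vertex whose removal leaves at least three unbounded connected components. -/
def Bushy {V : Type*} (T : SimpleGraph V) : Prop :=
  ∃ β : ℕ, ∀ v : V, ∃ w : V, T.dist v w ≤ β ∧
    ∃ c : Fin 3 → (T.induce ({w}ᶜ : Set V)).ConnectedComponent,
      Function.Injective c ∧
      ∀ (i : Fin 3) (R : ℕ), ∃ u : ({w}ᶜ : Set V),
        (T.induce ({w}ᶜ : Set V)).connectedComponentMk u = c i ∧ R ≤ T.dist w u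

/-!
A quasi-action on `T` induces an honest action on the ends of `T`, which moves clopen sets of ends
around with controlled locality. The half-spaces of `T` and their translates may cross, but crossing
numbers are submodular under passing to opposite corners; hence the sets of least crossing
complexity separating a given pair of ends yield a `G`-invariant, pairwise nested family of clopen
sets of ends which still separates the ends across each edge of `T`. Dunwoody's construction turns
this family into a tree `T'` on which `G` acts. Its members are local to balls of bounded radius,
and sending a vertex of `T'` to a centre of such a ball is a quasi-isometry `T' → T`, along which
bushiness is transported.
-/

namespace BushyTree

open SimpleGraph

open scoped Pointwise

section Shadows

variable {V : Type*} {T : SimpleGraph V}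

/-- `p` is the vertex preceding `x` on the geodesic from `v` to `x`. -/
structure IsParent (T : SimpleGraph V) (v p x : V) : Prop where
  adj : T.Adj p x
  dist_eq : T.dist v x = T.dist v p + 1

theorem exists_isParent (hconn : T.Connected) {v x : V} (hne : v ≠ x) : ∃ p, IsParent T v p x := by
  obtain ⟨w, hw⟩ := hconn.exists_walk_length_eq_dist x v
  cases w with
  | nil => exact absurd rfl hne
  | @cons _ p _ hadj q =>
    refine ⟨p, hadj.symm, ?_⟩
    have hvp : T.dist p v ≤ q.length := dist_le q
    have hvx : T.dist v x ≤ T.dist v p + T.dist p x := hconn.dist_triangle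
    rw [dist_eq_one_iff_adj.2 hadj.symm] at hvx
    rw [Walk.length_cons, T.dist_comm] at hw
    rw [T.dist_comm] at hvp
    omega

theorem IsParent.unique (hT : T.IsTree) {v x p q : V} (hp : IsParent T v p x)
    (hq : IsParent T v q x) : p = q := by
  have exists_path : ∀ {p}, (hp : IsParent T v p x) →
      ∃ w : T.Walk p v, (Walk.cons hp.adj.symm w).IsPath := by
    intro p hp
    obtain ⟨w, hw⟩ := hT.connected.exists_walk_length_eq_dist p v
    refine ⟨w, Walk.isPath_of_length_eq_dist _ ?_⟩
    rw [Walk.length_cons, hw, T.dist_comm, T.dist_comm (u := x), hp.dist_eq]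
  obtain ⟨wp, hwp⟩ := exists_path hp
  obtain ⟨wq, hwq⟩ := exists_path hq
  simpa using congrArg Walk.snd ((hT.existsUnique_path x v).unique hwp hwq)

/-- The shadow of `x` seen from `v`: the vertices `z` such that `x` lies on the geodesic from `v`
to `z`. -/
def shadow (T : SimpleGraph V) (v x : V) : Set V :=
  {z | T.dist v z = T.dist v x + T.dist x z}

theorem mem_shadow {v x z : V} : z ∈ shadow T v x ↔ T.dist v z = T.dist v x + T.dist x z := Iff.rfl

theorem self_mem_shadow (v x : V) : x ∈ shadow T v x := by simp [shadow]

theorem shadow_self (v : V) : shadow T v v = Set.univ := by ext; simp [shadow]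

theorem mem_shadow_comm {v x z : V} : z ∈ shadow T v x ↔ v ∈ shadow T z x := by
  rw [mem_shadow, mem_shadow, T.dist_comm, T.dist_comm (u := v) (v := x),
    T.dist_comm (u := x) (v := z), add_comm]

theorem shadow_subset_shadow (hconn : T.Connected) {v x z : V} (hz : z ∈ shadow T v x) :
    shadow T v z ⊆ shadow T v x := by
  intro y hy
  have hxy : T.dist x y ≤ T.dist x z + T.dist z y := hconn.dist_triangle
  have hvy : T.dist v y ≤ T.dist v x + T.dist x y := hconn.dist_triangle
  rw [mem_shadow] at *
  omega

theorem IsParent.mem_shadow_of_parent (hconn : T.Connected) {v x z w : V} (hw : IsParent T v z w)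
    (hz : z ∈ shadow T v x) : w ∈ shadow T v x :=
  shadow_subset_shadow hconn hz <| by rw [mem_shadow, dist_eq_one_iff_adj.2 hw.adj, hw.dist_eq]

theorem IsParent.of_mem_shadow (hT : T.IsTree) {v x z p : V} (hp : IsParent T v p z)
    (hz : z ∈ shadow T v x) (hne : x ≠ z) : IsParent T x p z := by
  obtain ⟨q, hq⟩ := exists_isParent hT.connected hne
  have hvq : T.dist v q ≤ T.dist v x + T.dist x q := hT.connected.dist_triangle
  have hstep := hT.dist_eq_dist_add_one_of_adj v hq.adj
  have hxz := hq.dist_eq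
  rw [mem_shadow] at hz
  have hqp : q = p := IsParent.unique hT ⟨hq.adj, by omega⟩ hp
  exact hqp ▸ hq

theorem IsParent.parent_mem_shadow (hT : T.IsTree) {v x z p : V} (hp : IsParent T v p z)
    (hz : z ∈ shadow T v x) (hne : x ≠ z) : p ∈ shadow T v x := by
  have hvz := hp.dist_eq
  have hxz := (hp.of_mem_shadow hT hz hne).dist_eq
  rw [mem_shadow] at *
  omega

theorem mem_shadow_iff_of_adj (hT : T.IsTree) {v x z w : V} (hzw : T.Adj z w) (hz : x ≠ z)
    (hw : x ≠ w) : z ∈ shadow T v x ↔ w ∈ shadow T v x := by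
  rcases hT.dist_eq_dist_add_one_of_adj v hzw with hd | hd
  · have hp : IsParent T v w z := ⟨hzw.symm, hd⟩
    exact ⟨fun h ↦ hp.parent_mem_shadow hT h hz, fun h ↦ hp.mem_shadow_of_parent hT.connected h⟩
  · have hp : IsParent T v z w := ⟨hzw, hd⟩
    exact ⟨fun h ↦ hp.mem_shadow_of_parent hT.connected h, fun h ↦ hp.parent_mem_shadow hT h hw⟩

theorem compl_shadow (hT : T.IsTree) {p q : V} (hpq : T.Adj p q) :
    (shadow T p q)ᶜ = shadow T q p := by
  ext z
  have hstep := hT.dist_eq_dist_add_one_of_adj z hpq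
  rw [Set.mem_compl_iff, mem_shadow, mem_shadow, dist_eq_one_iff_adj.2 hpq,
    dist_eq_one_iff_adj.2 hpq.symm, T.dist_comm (u := p), T.dist_comm (u := q)]
  omega

theorem eq_of_mem_shadow_of_dist_eq (hT : T.IsTree) {v x x' z : V} (hx : z ∈ shadow T v x)
    (hx' : z ∈ shadow T v x') (hd : T.dist v x = T.dist v x') : x = x' := by
  induction hn : T.dist x z generalizing z with
  | zero =>
    rw [mem_shadow] at hx hx'
    have hxz : x = z := hT.connected.dist_eq_zero_iff.1 hn
    have hxz' : x' = z := hT.connected.dist_eq_zero_iff.1 (by omega)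
    rw [hxz, hxz']
  | succ n ih =>
    have hvz := mem_shadow.1 hx
    have hvz' := mem_shadow.1 hx'
    have hne : x ≠ z := by rintro rfl; simp at hn
    have hne' : x' ≠ z := by rintro rfl; simp at hvz'; omega
    obtain ⟨p, hp⟩ :=
      exists_isParent hT.connected (v := v) (x := z) (by rintro rfl; simp at hvz; omega)
    have hxz := (hp.of_mem_shadow hT hx hne).dist_eq
    exact ih (hp.parent_mem_shadow hT hx hne) (hp.parent_mem_shadow hT hx' hne') (by omega)

theorem exists_dist_eq_mem_shadow (hconn : T.Connected) {v z : V} {t : ℕ} (ht : t ≤ T.dist v z) :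
    ∃ x, T.dist v x = t ∧ z ∈ shadow T v x := by
  obtain ⟨k, hk⟩ := Nat.exists_eq_add_of_le ht
  induction k generalizing z with
  | zero => exact ⟨z, hk, self_mem_shadow _ _⟩
  | succ k ih =>
    obtain ⟨p, hp⟩ := exists_isParent hconn (v := v) (x := z) (by rintro rfl; simp at hk)
    have hvz := hp.dist_eq
    obtain ⟨x, hx, hpx⟩ := ih (z := p) (by omega) (by omega)
    exact ⟨x, hx, hp.mem_shadow_of_parent hconn hpx⟩

theorem mem_shadow_of_dist_le (hT : T.IsTree) {v x y z : V} (hx : z ∈ shadow T v x)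
    (hy : z ∈ shadow T v y) (hd : T.dist v x ≤ T.dist v y) : y ∈ shadow T v x := by
  obtain ⟨x', hx', hyx'⟩ := exists_dist_eq_mem_shadow hT.connected hd
  obtain rfl : x = x' :=
    eq_of_mem_shadow_of_dist_eq hT hx (shadow_subset_shadow hT.connected hyx' hy) hx'.symm
  exact hyx'

theorem mem_shadow_of_mem_shadow_of_ne (hT : T.IsTree) {v p q z : V} (hpq : p ≠ q)
    (hq : q ∈ shadow T v p) (hz : z ∈ shadow T p q) : z ∈ shadow T v q := by
  induction hn : T.dist p v generalizing v with
  | zero => rwa [← hT.connected.dist_eq_zero_iff.1 hn]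
  | succ n ih =>
    have hv : v ∈ shadow T q p := mem_shadow_comm.1 hq
    have hpos : 0 < T.dist q p := hT.connected.pos_dist_of_ne hpq.symm
    have hqv := mem_shadow.1 hv
    obtain ⟨v', hv'⟩ :=
      exists_isParent hT.connected (v := q) (x := v) (by rintro rfl; simp at hqv; omega)
    have hpv : p ≠ v := by rintro rfl; simp at hn
    have hpv' := (hv'.of_mem_shadow hT hv hpv).dist_eq
    have hqv' := hv'.parent_mem_shadow hT hv hpv
    have hz' : z ∈ shadow T v' q := ih (mem_shadow_comm.1 hqv') (by omega)
    rcases hT.dist_eq_dist_add_one_of_adj z hv'.adj with hd | hd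
    · have hback : IsParent T z v v' := ⟨hv'.adj.symm, hd⟩
      have hne : q ≠ v' := by rintro rfl; rw [mem_shadow, dist_self] at hqv'; omega
      have := (hback.of_mem_shadow hT (mem_shadow_comm.1 hz') hne).dist_eq
      have := hv'.dist_eq
      omega
    · exact mem_shadow_comm.1 <|
        IsParent.mem_shadow_of_parent hT.connected ⟨hv'.adj, hd⟩ (mem_shadow_comm.1 hz')

theorem shadow_eq_shadow (hT : T.IsTree) {v p x : V} (hpx : p ≠ x) (hx : x ∈ shadow T v p) :
    shadow T v x = shadow T p x := by
  refine Set.Subset.antisymm (fun z hz ↦ ?_)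
    fun z hz ↦ mem_shadow_of_mem_shadow_of_ne hT hpx hx hz
  have hvz : T.dist v z ≤ T.dist v p + T.dist p z := hT.connected.dist_triangle
  have hpz : T.dist p z ≤ T.dist p x + T.dist x z := hT.connected.dist_triangle
  rw [mem_shadow] at *
  omega

theorem IsParent.shadow_eq (hT : T.IsTree) {v p q : V} (h : IsParent T v p q) :
    shadow T v q = shadow T p q :=
  shadow_eq_shadow hT h.adj.ne <| by rw [mem_shadow, dist_eq_one_iff_adj.2 h.adj, h.dist_eq]

theorem shadow_eq_of_notMem (hT : T.IsTree) {v w x : V} (hne : v ≠ x) (hw : w ∉ shadow T v x) :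
    shadow T v x = shadow T w x := by
  obtain ⟨p, hp⟩ := exists_isParent hT.connected hne
  rw [hp.shadow_eq hT] at hw ⊢
  have hw' : w ∈ shadow T x p := by rwa [← compl_shadow hT hp.adj]
  exact (shadow_eq_shadow hT hp.adj.ne (mem_shadow_comm.1 hw')).symm

theorem exists_median (hT : T.IsTree) (v w y : V) :
    ∃ m, w ∈ shadow T v m ∧ y ∈ shadow T v m ∧ y ∈ shadow T w m := by
  induction hn : T.dist v w generalizing w with
  | zero =>
    obtain rfl : v = w := hT.connected.dist_eq_zero_iff.1 hn
    exact ⟨v, by simp [shadow]⟩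
  | succ n ih =>
    obtain ⟨w', hw'⟩ := exists_isParent hT.connected (v := v) (x := w) (by rintro rfl; simp at hn)
    obtain ⟨m, hvw', hvy, hwy⟩ := ih w' (by have := hw'.dist_eq; omega)
    have hvw : w ∈ shadow T v m := hw'.mem_shadow_of_parent hT.connected hvw'
    rcases hT.dist_eq_dist_add_one_of_adj y hw'.adj with hd | hd
    · by_cases hm : m = w'
      · subst hm
        refine ⟨w, self_mem_shadow _ _, ?_, by rw [shadow_self]; trivial⟩
        have hvd := hw'.dist_eq
        rw [mem_shadow] at *
        rw [T.dist_comm, T.dist_comm (u := y)] at hd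
        omega
      · have hvd := hw'.dist_eq
        have hmd :=
          (IsParent.of_mem_shadow hT ⟨hw'.adj.symm, hd⟩ (mem_shadow_comm.1 hwy) hm).dist_eq
        rw [mem_shadow] at *
        omega
    · exact ⟨m, hvw, hvy, mem_shadow_comm.1 <|
        IsParent.mem_shadow_of_parent hT.connected ⟨hw'.adj, hd⟩ (mem_shadow_comm.1 hwy)⟩

theorem exists_finset_sphere_subset (hconn : T.Connected) {D : ℕ}
    (hD : ∀ v : V, (T.neighborSet v).Finite ∧ (T.neighborSet v).ncard ≤ D) (v : V) (t : ℕ) :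
    ∃ S : Finset V, S.card ≤ D ^ t ∧ ∀ x, T.dist v x = t → x ∈ S := by
  classical
  induction t with
  | zero =>
    refine ⟨{v}, by simp, fun x hx ↦ ?_⟩
    rw [hconn.dist_eq_zero_iff.1 hx, Finset.mem_singleton]
  | succ t ih =>
    obtain ⟨S, hcard, hS⟩ := ih
    refine ⟨S.biUnion fun y ↦ (hD y).1.toFinset, ?_, fun x hx ↦ ?_⟩
    · refine (Finset.card_biUnion_le_card_mul S _ D fun y _ ↦ ?_).trans ?_
      · rw [← Set.ncard_eq_toFinset_card _ (hD y).1]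
        exact (hD y).2
      · rw [pow_succ]
        gcongr
    · obtain ⟨p, hp⟩ := exists_isParent hconn (v := v) (x := x) (by rintro rfl; simp at hx)
      have hvp := hp.dist_eq
      exact Finset.mem_biUnion.2 ⟨p, hS p (by omega), by simpa using hp.adj⟩

theorem finite_closedBall (hconn : T.Connected) (hval : BoundedValence T) (v : V) (t : ℕ) :
    {x | T.dist v x ≤ t}.Finite := by
  obtain ⟨D, hD⟩ := hval
  choose S _ hS using exists_finset_sphere_subset hconn hD v
  refine ((Set.finite_Iic t).biUnion fun i _ ↦ (S i).finite_toSet).subset fun x hx ↦ ?_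
  exact Set.mem_biUnion hx (hS _ x rfl)

end Shadows

section Coboundaries

variable {V : Type*} {T : SimpleGraph V} {U W : Set V} {v w : V} {r s : ℕ}

/-- Membership in `U` is constant along every edge of `T` lying outside the closed ball of radius
`r` about `v`. -/
def CoboundaryIn (T : SimpleGraph V) (U : Set V) (v : V) (r : ℕ) : Prop :=
  ∀ x y, T.Adj x y → r < T.dist v x → r < T.dist v y → (x ∈ U ↔ y ∈ U)

/-- The edges joining `U` to its complement lie in a ball; in a locally finite graph, this says that
there are finitely many of them. -/
def BoundedCoboundary (T : SimpleGraph V) (U : Set V) : Prop := ∃ v r, CoboundaryIn T U v r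

theorem CoboundaryIn.of_add_dist_le (hconn : T.Connected) (h : CoboundaryIn T U v r)
    (hs : r + T.dist v w ≤ s) : CoboundaryIn T U w s := by
  have far : ∀ x, s < T.dist w x → r < T.dist v x := fun x hx ↦ by
    have : T.dist w x ≤ T.dist w v + T.dist v x := hconn.dist_triangle
    rw [T.dist_comm (u := w) (v := v)] at this
    omega
  exact fun x y hxy hx hy ↦ h x y hxy (far x hx) (far y hy)

theorem CoboundaryIn.compl (h : CoboundaryIn T U v r) : CoboundaryIn T Uᶜ v r :=
  fun x y hxy hx hy ↦ not_congr (h x y hxy hx hy)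

theorem CoboundaryIn.inter (hU : CoboundaryIn T U v r) (hW : CoboundaryIn T W v r) :
    CoboundaryIn T (U ∩ W) v r :=
  fun x y hxy hx hy ↦ and_congr (hU x y hxy hx hy) (hW x y hxy hx hy)

theorem BoundedCoboundary.compl (h : BoundedCoboundary T U) : BoundedCoboundary T Uᶜ :=
  let ⟨v, r, hU⟩ := h
  ⟨v, r, hU.compl⟩

theorem BoundedCoboundary.inter (hconn : T.Connected) (hU : BoundedCoboundary T U)
    (hW : BoundedCoboundary T W) : BoundedCoboundary T (U ∩ W) := by
  obtain ⟨v, r, hU⟩ := hU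
  obtain ⟨w, s, hW⟩ := hW
  exact ⟨v, max r (s + T.dist w v), .inter (hU.of_add_dist_le hconn (by simp))
    (hW.of_add_dist_le hconn (by simp))⟩

theorem CoboundaryIn.mem_iff_of_dist_lt (hconn : T.Connected) (h : CoboundaryIn T U v r) {a b : V}
    (hd : r + T.dist a b < T.dist v a) : a ∈ U ↔ b ∈ U := by
  induction hn : T.dist a b generalizing b with
  | zero => rw [hconn.dist_eq_zero_iff.1 hn]
  | succ n ih =>
    obtain ⟨p, hp⟩ := exists_isParent hconn (v := a) (x := b) (by rintro rfl; simp at hn)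
    have hap := hp.dist_eq
    have hvp : T.dist v a ≤ T.dist v p + T.dist p a := hconn.dist_triangle
    have hvb : T.dist v a ≤ T.dist v b + T.dist b a := hconn.dist_triangle
    rw [T.dist_comm (u := p)] at hvp
    rw [T.dist_comm (u := b)] at hvb
    rw [ih (b := p) (by omega) (by omega)]
    exact h p b hp.adj (by omega) (by omega)

theorem CoboundaryIn.mem_iff_of_mem_shadow (hT : T.IsTree) (h : CoboundaryIn T U v r) {x z : V}
    (hd : r < T.dist v x) (hz : z ∈ shadow T v x) : x ∈ U ↔ z ∈ U := by
  induction hn : T.dist x z generalizing z with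
  | zero => rw [hT.connected.dist_eq_zero_iff.1 hn]
  | succ n ih =>
    have hvz := mem_shadow.1 hz
    have hne : x ≠ z := by rintro rfl; simp at hn
    obtain ⟨p, hp⟩ :=
      exists_isParent hT.connected (v := v) (x := z) (by rintro rfl; simp at hvz; omega)
    have hvp := hp.dist_eq
    have hxp := (hp.of_mem_shadow hT hz hne).dist_eq
    rw [ih (hp.parent_mem_shadow hT hz hne) (by omega)]
    exact h p z hp.adj (by omega) (by omega)

theorem coboundaryIn_shadow (hT : T.IsTree) (v x : V) : CoboundaryIn T (shadow T v x) x 0 :=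
  fun _ _ hab ha hb ↦ mem_shadow_iff_of_adj hT hab (by rintro rfl; simp at ha)
    (by rintro rfl; simp at hb)

theorem boundedCoboundary_shadow (hT : T.IsTree) (v x : V) : BoundedCoboundary T (shadow T v x) :=
  ⟨x, 0, coboundaryIn_shadow hT v x⟩

end Coboundaries

section Ends

variable {V : Type*} {T : SimpleGraph V} {U W : Set V}

/-- An end of `T`, encoded as the ultrafilter, on the Boolean algebra of vertex sets with bounded
coboundary, of the sets which contain a neighbourhood of the end. Unlike rays, such ultrafilters are
moved by a quasi-isometry without any choice, by taking preimages. -/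
@[ext] structure TreeEnd (T : SimpleGraph V) where
  /-- The sets of vertices with bounded coboundary which contain a neighbourhood of the end. -/
  sets : Set (Set V)
  boundedCoboundary : ∀ U ∈ sets, BoundedCoboundary T U
  inter_mem : ∀ U ∈ sets, ∀ W ∈ sets, U ∩ W ∈ sets
  compl_mem_iff : ∀ U, BoundedCoboundary T U → (Uᶜ ∈ sets ↔ U ∉ sets)
  notMem_of_finite : ∀ U : Set V, U.Finite → U ∉ sets

namespace TreeEnd

variable (P : TreeEnd T)

theorem mem_of_finite_diff (hU : U ∈ P.sets) (hW : BoundedCoboundary T W) (h : (U \ W).Finite) :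
    W ∈ P.sets := by
  by_contra hc
  exact P.notMem_of_finite _ h (P.inter_mem _ hU _ ((P.compl_mem_iff W hW).2 hc))

theorem nonempty_of_mem (hU : U ∈ P.sets) : U.Nonempty :=
  Set.nonempty_iff_ne_empty.2 fun h ↦ P.notMem_of_finite U (h ▸ Set.finite_empty) hU

theorem mem_of_subset (hU : U ∈ P.sets) (hW : BoundedCoboundary T W) (h : U ⊆ W) : W ∈ P.sets :=
  P.mem_of_finite_diff hU hW (by simp [Set.sdiff_eq_empty.2 h])

theorem univ_mem [Nonempty V] : Set.univ ∈ P.sets := by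
  have h : BoundedCoboundary T (∅ : Set V) := ⟨Classical.arbitrary V, 0, fun x y _ _ _ ↦ Iff.rfl⟩
  simpa using (P.compl_mem_iff ∅ h).2 (P.notMem_of_finite _ Set.finite_empty)

theorem biInter_mem [Nonempty V] {ι : Type*} (S : Finset ι) (U : ι → Set V)
    (hU : ∀ i ∈ S, U i ∈ P.sets) : ⋂ i ∈ S, U i ∈ P.sets := by
  classical
  induction S using Finset.induction_on with
  | empty => simpa using P.univ_mem
  | insert a S _ ih =>
    rw [Finset.set_biInter_insert]
    exact P.inter_mem _ (hU a (Finset.mem_insert_self _ _)) _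
      (ih fun i hi ↦ hU i (Finset.mem_insert_of_mem hi))

theorem exists_mem_of_finite_compl_biUnion [Nonempty V] {ι : Type*} (S : Finset ι) (U : ι → Set V)
    (hU : ∀ i ∈ S, BoundedCoboundary T (U i)) (hfin : (⋃ i ∈ S, U i)ᶜ.Finite) :
    ∃ i ∈ S, U i ∈ P.sets := by
  by_contra! hc
  refine P.notMem_of_finite _ hfin ?_
  simpa only [Set.compl_iUnion] using
    P.biInter_mem S (fun i ↦ (U i)ᶜ) fun i hi ↦ (P.compl_mem_iff _ (hU i hi)).2 (hc i hi)

end TreeEnd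

/-- The ends of `T` that lie in `U`. -/
def endsIn (T : SimpleGraph V) (U : Set V) : Set (TreeEnd T) := {P | U ∈ P.sets}

theorem mem_endsIn {P : TreeEnd T} : P ∈ endsIn T U ↔ U ∈ P.sets := Iff.rfl

theorem endsIn_compl (hU : BoundedCoboundary T U) : endsIn T Uᶜ = (endsIn T U)ᶜ :=
  Set.ext fun P ↦ P.compl_mem_iff U hU

theorem endsIn_mono (hW : BoundedCoboundary T W) (h : U ⊆ W) : endsIn T U ⊆ endsIn T W :=
  fun P hP ↦ P.mem_of_subset hP hW h

theorem endsIn_nonempty (hconn : T.Connected) (hU : BoundedCoboundary T U) (hinf : U.Infinite) :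
    (endsIn T U).Nonempty := by
  have hne : (Filter.cofinite ⊓ Filter.principal U).NeBot :=
    Filter.frequently_mem_iff_neBot.1 (Filter.frequently_cofinite_mem_iff_infinite.2 hinf)
  obtain ⟨ω, hω⟩ := Filter.exists_ultrafilter_le (Filter.cofinite ⊓ Filter.principal U)
  have hωU : U ∈ ω := Filter.le_principal_iff.1 (hω.trans inf_le_right)
  refine ⟨⟨{W | BoundedCoboundary T W ∧ W ∈ ω}, fun W h ↦ h.1,
    fun W h W' h' ↦ ⟨h.1.inter hconn h'.1, Filter.inter_mem h.2 h'.2⟩,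
    fun W hW ↦ ?_, fun W hW h ↦ ?_⟩, hU, hωU⟩
  · simp [hW, hW.compl, Ultrafilter.compl_mem_iff_notMem]
  · exact Ultrafilter.compl_mem_iff_notMem.1 (hω.trans inf_le_left hW.compl_mem_cofinite) h.2

/-- The ends of `T` in the shadow of `x` seen from `v`. -/
def endShadow (T : SimpleGraph V) (v x : V) : Set (TreeEnd T) := endsIn T (shadow T v x)

theorem endShadow_self (v : V) : endShadow T v v = Set.univ := by
  have : Nonempty V := ⟨v⟩
  ext P
  simp [endShadow, shadow_self, mem_endsIn, P.univ_mem]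

theorem endShadow_subset_endShadow (hT : T.IsTree) {v x z : V} (h : z ∈ shadow T v x) :
    endShadow T v z ⊆ endShadow T v x :=
  endsIn_mono (boundedCoboundary_shadow hT v x) (shadow_subset_shadow hT.connected h)

theorem compl_endShadow (hT : T.IsTree) {p q : V} (h : T.Adj p q) :
    (endShadow T p q)ᶜ = endShadow T q p := by
  rw [endShadow, ← endsIn_compl (boundedCoboundary_shadow hT p q), compl_shadow hT h, endShadow]

theorem endShadow_eq_of_notMem (hT : T.IsTree) {v w x : V} (hv : v ≠ x) (hw : w ∉ shadow T v x) :
    endShadow T v x = endShadow T w x := by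
  rw [endShadow, shadow_eq_of_notMem hT hv hw, endShadow]

theorem IsParent.endShadow_eq (hT : T.IsTree) {v p q : V} (h : IsParent T v p q) :
    endShadow T v q = endShadow T p q := by
  rw [endShadow, h.shadow_eq hT, endShadow]

theorem eq_of_mem_endShadow_of_dist_eq (hT : T.IsTree) {v x y : V} {P : TreeEnd T}
    (hx : P ∈ endShadow T v x) (hy : P ∈ endShadow T v y) (hd : T.dist v x = T.dist v y) :
    x = y := by
  obtain ⟨z, hzx, hzy⟩ := P.nonempty_of_mem (P.inter_mem _ hx _ hy)
  exact eq_of_mem_shadow_of_dist_eq hT hzx hzy hd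

theorem mem_shadow_of_mem_endShadow (hT : T.IsTree) {v x y : V} {P : TreeEnd T}
    (hx : P ∈ endShadow T v x) (hy : P ∈ endShadow T v y) (hd : T.dist v x ≤ T.dist v y) :
    y ∈ shadow T v x := by
  obtain ⟨z, hzx, hzy⟩ := P.nonempty_of_mem (P.inter_mem _ hx _ hy)
  exact mem_shadow_of_dist_le hT hzx hzy hd

theorem exists_dist_eq_mem_endShadow (hT : T.IsTree) (hval : BoundedValence T) (P : TreeEnd T)
    (v : V) (t : ℕ) : ∃ x, T.dist v x = t ∧ P ∈ endShadow T v x := by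
  have : Nonempty V := ⟨v⟩
  have hball := finite_closedBall hT.connected hval v t
  have hsphere : {x | T.dist v x = t}.Finite := hball.subset fun x hx ↦ le_of_eq hx
  obtain ⟨x, hx, hP⟩ := P.exists_mem_of_finite_compl_biUnion hsphere.toFinset (shadow T v)
    (fun x _ ↦ boundedCoboundary_shadow hT v x) <| hball.subset fun z hz ↦ by
      contrapose! hz
      obtain ⟨x, hx, hzx⟩ := exists_dist_eq_mem_shadow hT.connected (not_le.1 hz).le
      simp only [Set.mem_compl_iff, not_not, Set.mem_iUnion]
      exact ⟨x, by simpa using hx, hzx⟩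
  exact ⟨x, by simpa using hx, hP⟩

end Ends

section Branching

variable {V : Type*} {T : SimpleGraph V}

/-- The `n i` are three distinct neighbours of `w`, each the start of an infinite branch at `w`. -/
structure IsBranching (T : SimpleGraph V) (w : V) (n : Fin 3 → V) : Prop where
  injective : Function.Injective n
  adj : ∀ i, T.Adj w (n i)
  infinite_shadow : ∀ i, (shadow T w (n i)).Infinite

/-- Bushiness with constant `β`, in terms of shadows instead of connected components. -/
def BranchingWithin (T : SimpleGraph V) (β : ℕ) : Prop :=
  ∀ v, ∃ w, T.dist v w ≤ β ∧ ∃ n, IsBranching T w n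

theorem reachable_of_mem_shadow (hT : T.IsTree) {w n z : V} (hn : n ∈ ({w}ᶜ : Set V))
    (hz : z ∈ ({w}ᶜ : Set V)) (h : z ∈ shadow T w n) :
    (T.induce ({w}ᶜ : Set V)).Reachable ⟨n, hn⟩ ⟨z, hz⟩ := by
  induction hd : T.dist n z generalizing z with
  | zero =>
    obtain rfl := hT.connected.dist_eq_zero_iff.1 hd
    exact Reachable.refl _
  | succ k ih =>
    obtain ⟨p, hp⟩ := exists_isParent hT.connected (Ne.symm hz)
    have hne : n ≠ z := by rintro rfl; simp at hd
    have hnp := (hp.of_mem_shadow hT h hne).dist_eq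
    have hwp := hp.parent_mem_shadow hT h hne
    have hpw : p ∈ ({w}ᶜ : Set V) := by
      rintro rfl
      rw [mem_shadow, dist_self] at hwp
      exact hn (hT.connected.dist_eq_zero_iff.1 (by omega))
    exact (ih hpw hwp (by omega)).trans (Adj.reachable (by simpa using hp.adj))

theorem mem_shadow_iff_of_reachable (hT : T.IsTree) {w n : V} (h : T.Adj w n)
    {a b : ({w}ᶜ : Set V)} (hab : (T.induce ({w}ᶜ : Set V)).Reachable a b) :
    (a : V) ∈ shadow T w n ↔ (b : V) ∈ shadow T w n := by
  obtain ⟨p⟩ := hab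
  induction p with
  | nil => rfl
  | @cons a c _ hac _ ih =>
    rw [← ih, ← compl_shadow hT h.symm]
    exact not_congr (mem_shadow_iff_of_adj hT hac (Ne.symm a.2) (Ne.symm c.2))

theorem exists_branchingWithin_of_bushy (hT : T.IsTree) (hbushy : Bushy T) :
    ∃ β, BranchingWithin T β := by
  obtain ⟨β, hβ⟩ := hbushy
  refine ⟨β, fun v ↦ ?_⟩
  obtain ⟨w, hw, c, hc, hunbounded⟩ := hβ v
  have exists_neighbor : ∀ i, ∃ n, ∃ hn : n ∈ ({w}ᶜ : Set V), T.Adj w n ∧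
      (T.induce ({w}ᶜ : Set V)).connectedComponentMk ⟨n, hn⟩ = c i := by
    intro i
    obtain ⟨u, huc, -⟩ := hunbounded i 0
    have hpos : 0 < T.dist w u := hT.connected.pos_dist_of_ne (Ne.symm u.2)
    obtain ⟨n, hwn, hn⟩ := exists_dist_eq_mem_shadow hT.connected hpos
    have hadj := dist_eq_one_iff_adj.1 hwn
    exact ⟨n, hadj.ne', hadj, by
      rw [← huc]; exact ConnectedComponent.sound (reachable_of_mem_shadow hT _ u.2 hn)⟩
  choose n hn hadj hcomp using exists_neighbor
  refine ⟨w, hw, n, ⟨fun i j hij ↦ hc ?_, hadj, fun i hfin ↦ ?_⟩⟩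
  · rw [← hcomp i, ← hcomp j]
    congr 1
    exact Subtype.ext hij
  · obtain ⟨R, hR⟩ := (hfin.image fun z ↦ T.dist w z).bddAbove
    obtain ⟨u, huc, hu⟩ := hunbounded i (R + 1)
    have hreach := ConnectedComponent.exact ((hcomp i).trans huc.symm)
    have hmem := (mem_shadow_iff_of_reachable hT (hadj i) hreach).1 (self_mem_shadow _ _)
    have hle : T.dist w u ≤ R := hR ⟨u, hmem, rfl⟩
    omega

theorem IsBranching.eq_of_mem_shadow (hT : T.IsTree) {w a : V} {n : Fin 3 → V}
    (hn : IsBranching T w n) {i j : Fin 3} (hi : a ∈ shadow T w (n i)) (hj : a ∈ shadow T w (n j)) :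
    i = j :=
  hn.injective <| eq_of_mem_shadow_of_dist_eq hT hi hj <| by
    rw [dist_eq_one_iff_adj.2 (hn.adj i), dist_eq_one_iff_adj.2 (hn.adj j)]

theorem IsBranching.exists_notMem_shadow (hT : T.IsTree) {w : V} {n : Fin 3 → V}
    (hn : IsBranching T w n) (a b : V) : ∃ i, a ∉ shadow T w (n i) ∧ b ∉ shadow T w (n i) := by
  classical
  by_contra! hc
  obtain ⟨i, j, hij, heq⟩ := Fintype.exists_ne_map_eq_of_card_lt
    (fun i : Fin 3 ↦ decide (a ∈ shadow T w (n i))) (by simp)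
  rw [decide_eq_decide] at heq
  by_cases hi : a ∈ shadow T w (n i)
  · exact hij (hn.eq_of_mem_shadow hT hi (heq.1 hi))
  · exact hij (hn.eq_of_mem_shadow hT (hc i hi) (hc j (mt heq.2 hi)))

theorem exists_mem_endShadow_notMem_endShadow {β : ℕ} (hT : T.IsTree) (hβ : BranchingWithin T β)
    {v x z : V} (hz : z ∈ shadow T v x) (hd : 2 * β + 2 ≤ T.dist x z) :
    (endShadow T v x \ endShadow T v z).Nonempty := by
  obtain ⟨m, hxm, hmz⟩ :=
    exists_dist_eq_mem_shadow hT.connected (v := x) (z := z) (t := β + 1) (by omega)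
  obtain ⟨w, hmw, n, hn⟩ := hβ m
  obtain ⟨i, hvi, hzi⟩ := hn.exists_notMem_shadow hT v z
  have hm : m ∈ shadow T v x := by
    have hvz : T.dist v z ≤ T.dist v m + T.dist m z := hT.connected.dist_triangle
    have hvm : T.dist v m ≤ T.dist v x + T.dist x m := hT.connected.dist_triangle
    rw [mem_shadow] at *
    omega
  have hw : w ∈ shadow T v x :=
    ((coboundaryIn_shadow hT v x).mem_iff_of_dist_lt hT.connected (by omega)).1 hm
  have hparent : IsParent T v w (n i) := by
    refine ⟨hn.adj i, ?_⟩
    rw [← Set.mem_compl_iff, compl_shadow hT (hn.adj i), mem_shadow,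
      dist_eq_one_iff_adj.2 (hn.adj i).symm] at hvi
    rw [T.dist_comm, hvi, T.dist_comm, add_comm]
  have hshadow := hparent.shadow_eq hT
  obtain ⟨P, hP⟩ := endsIn_nonempty hT.connected (boundedCoboundary_shadow hT w (n i))
    (hn.infinite_shadow i)
  have hPv : P ∈ endShadow T v (n i) := by rwa [endShadow, hshadow]
  refine ⟨P, endShadow_subset_endShadow hT (hparent.mem_shadow_of_parent hT.connected hw) hPv,
    fun hPz ↦ ?_⟩
  obtain ⟨y, hyi, hyz⟩ := P.nonempty_of_mem (P.inter_mem _ hPv _ hPz)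
  have hyz' : y ∈ shadow T z (n i) := by
    rwa [← shadow_eq_of_notMem hT (hn.adj i).ne hzi, ← hshadow]
  have hvn := hparent.dist_eq
  have hvw : T.dist v w ≤ T.dist v m + T.dist m w := hT.connected.dist_triangle
  have hzn : z = n i := by
    refine hT.connected.dist_eq_zero_iff.1 ?_
    rw [mem_shadow] at *
    omega
  exact hzi (hzn ▸ self_mem_shadow _ _)

end Branching

section Crossing

variable {α : Type*} {u w F : Set α} {𝓕 : Set (Set α)}

/-- Two sets cross when they are not nested, even after passing to complements: all four corners
`u ∩ w`, `u ∩ wᶜ`, `uᶜ ∩ w` and `uᶜ ∩ wᶜ` are nonempty. -/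
structure Crosses (u w : Set α) : Prop where
  inter : (u ∩ w).Nonempty
  inter_compl : (u ∩ wᶜ).Nonempty
  compl_inter : (uᶜ ∩ w).Nonempty
  compl_inter_compl : (uᶜ ∩ wᶜ).Nonempty

theorem Crosses.symm (h : Crosses u w) : Crosses w u := by
  obtain ⟨h₁, h₂, h₃, h₄⟩ := h
  constructor <;> rwa [Set.inter_comm]

theorem Crosses.compl_right (h : Crosses u w) : Crosses u wᶜ :=
  ⟨h.inter_compl, by simpa using h.inter, h.compl_inter_compl, by simpa using h.compl_inter⟩

theorem crosses_compl_right : Crosses u wᶜ ↔ Crosses u w :=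
  ⟨fun h ↦ by simpa only [compl_compl] using h.compl_right, Crosses.compl_right⟩

theorem Crosses.compl_left (h : Crosses u w) : Crosses uᶜ w := h.symm.compl_right.symm

theorem Crosses.nonempty_left (h : Crosses u w) : u.Nonempty := h.inter.mono Set.inter_subset_left

theorem Crosses.smul {G : Type*} [Group G] [MulAction G α] (h : Crosses u w) (g : G) :
    Crosses (g • u) (g • w) := by
  obtain ⟨h₁, h₂, h₃, h₄⟩ := h
  constructor <;> simpa only [← Set.smul_set_compl, ← Set.smul_set_inter, Set.smul_set_nonempty]

theorem not_crosses_iff : ¬ Crosses F u ↔ F ⊆ u ∨ F ⊆ uᶜ ∨ Fᶜ ⊆ u ∨ Fᶜ ⊆ uᶜ := by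
  rw [← not_iff_not, not_not]
  simp only [not_or, Set.not_subset, Set.notMem_compl_iff]
  exact ⟨fun ⟨a, b, c, d⟩ ↦ ⟨b, a, d, c⟩, fun ⟨b, a, d, c⟩ ↦ ⟨a, b, c, d⟩⟩

/-- The members of `𝓕` that cross `u`. -/
def crossing (𝓕 : Set (Set α)) (u : Set α) : Set (Set α) := {F ∈ 𝓕 | Crosses F u}

theorem crossing_compl : crossing 𝓕 uᶜ = crossing 𝓕 u := by
  simp only [crossing, crosses_compl_right]

theorem ncard_crossing_smul {G : Type*} [Group G] [MulAction G α]
    (h𝓕 : ∀ g : G, ∀ F ∈ 𝓕, g • F ∈ 𝓕) (g : G) (u : Set α) :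
    (crossing 𝓕 (g • u)).ncard = (crossing 𝓕 u).ncard := by
  have himage : crossing 𝓕 (g • u) = (fun F ↦ g • F) '' crossing 𝓕 u := by
    ext F
    constructor
    · rintro ⟨hF, h⟩
      exact ⟨g⁻¹ • F, ⟨h𝓕 _ _ hF, by simpa using h.smul g⁻¹⟩, by simp⟩
    · rintro ⟨F, ⟨hF, h⟩, rfl⟩
      exact ⟨h𝓕 _ _ hF, h.smul g⟩
  rw [himage, Set.ncard_image_of_injective _ (MulAction.injective g)]

theorem Crosses.crosses_or_of_inter (hcr : Crosses u w) (h : Crosses F (u ∩ w)) :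
    Crosses F u ∨ Crosses F w := by
  obtain ⟨a, ha, hau, haw⟩ := h.inter
  obtain ⟨b, hb, hb'⟩ := h.inter_compl
  obtain ⟨c, hc, hcu, hcw⟩ := h.compl_inter
  obtain ⟨d, hd, hd'⟩ := h.compl_inter_compl
  obtain ⟨e, heu, hew⟩ := hcr.compl_inter_compl
  by_contra! hnot
  have side {x : Set α} (hx : ¬ Crosses F x) (hax : a ∈ x) (hcx : c ∈ x) : F ⊆ x ∨ Fᶜ ⊆ x := by
    rcases not_crosses_iff.1 hx with h | h | h | h
    exacts [.inl h, (h ha hax).elim, .inr h, (h hc hcx).elim]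
  rcases side hnot.1 hau hcu with hu | hu <;> rcases side hnot.2 haw hcw with hw | hw
  · exact hb' ⟨hu hb, hw hb⟩
  · exact (em (e ∈ F)).elim (fun he ↦ heu (hu he)) fun he ↦ hew (hw he)
  · exact (em (e ∈ F)).elim (fun he ↦ hew (hw he)) fun he ↦ heu (hu he)
  · exact hd' ⟨hu hd, hw hd⟩

theorem Crosses.crossing_union_subset (hcr : Crosses u w) :
    crossing 𝓕 (u ∩ w) ∪ crossing 𝓕 (uᶜ ∩ wᶜ) ⊆ crossing 𝓕 u ∪ crossing 𝓕 w := by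
  rintro F (⟨hF, h⟩ | ⟨hF, h⟩)
  · exact (hcr.crosses_or_of_inter h).imp (⟨hF, ·⟩) (⟨hF, ·⟩)
  · exact (hcr.compl_left.compl_right.crosses_or_of_inter h).imp
      (⟨hF, crosses_compl_right.1 ·⟩) (⟨hF, crosses_compl_right.1 ·⟩)

theorem crossing_inter_subset :
    crossing 𝓕 (u ∩ w) ∩ crossing 𝓕 (uᶜ ∩ wᶜ) ⊆ crossing 𝓕 u ∩ crossing 𝓕 w := by
  rintro F ⟨⟨hF, h⟩, -, h'⟩
  obtain ⟨a, ha, hau, haw⟩ := h.inter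
  obtain ⟨c, hc, hcu, hcw⟩ := h.compl_inter
  obtain ⟨a', ha', hau', haw'⟩ := h'.inter
  obtain ⟨c', hc', hcu', hcw'⟩ := h'.compl_inter
  exact ⟨⟨hF, ⟨a, ha, hau⟩, ⟨a', ha', hau'⟩, ⟨c, hc, hcu⟩, ⟨c', hc', hcu'⟩⟩,
    ⟨hF, ⟨a, ha, haw⟩, ⟨a', ha', haw'⟩, ⟨c, hc, hcw⟩, ⟨c', hc', hcw'⟩⟩⟩

theorem ncard_add_ncard_eq_of_subset_union {β : Type*} {X Y Z : Set β} (hZ : Z.Finite)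
    (h : X ∪ Y ⊆ Z) : X.ncard + Y.ncard = (X ∪ Y).ncard + (X ∩ Y).ncard :=
  (Set.ncard_union_add_ncard_inter _ _ (hZ.subset (Set.subset_union_left.trans h))
    (hZ.subset (Set.subset_union_right.trans h))).symm

theorem Crosses.ncard_crossing_add_le (hcr : Crosses u w) (hu : (crossing 𝓕 u).Finite)
    (hw : (crossing 𝓕 w).Finite) :
    (crossing 𝓕 (u ∩ w)).ncard + (crossing 𝓕 (uᶜ ∩ wᶜ)).ncard ≤
      (crossing 𝓕 u).ncard + (crossing 𝓕 w).ncard := by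
  have hunion := hu.union hw
  rw [ncard_add_ncard_eq_of_subset_union hunion hcr.crossing_union_subset,
    ncard_add_ncard_eq_of_subset_union hunion subset_rfl]
  exact Nat.add_le_add (Set.ncard_le_ncard hcr.crossing_union_subset hunion)
    (Set.ncard_le_ncard crossing_inter_subset (hu.inter_of_left _))

/-- Strictness comes from `u` itself: it crosses `w`, but neither of the two corners. -/
theorem Crosses.ncard_crossing_add_lt (hcr : Crosses u w) (hu : (crossing 𝓕 u).Finite)
    (hw : (crossing 𝓕 w).Finite) (hmem : u ∈ 𝓕) :
    (crossing 𝓕 (u ∩ w)).ncard + (crossing 𝓕 (uᶜ ∩ wᶜ)).ncard <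
      (crossing 𝓕 u).ncard + (crossing 𝓕 w).ncard := by
  have hunion := hu.union hw
  rw [ncard_add_ncard_eq_of_subset_union hunion hcr.crossing_union_subset,
    ncard_add_ncard_eq_of_subset_union hunion subset_rfl]
  refine Nat.add_lt_add_of_lt_of_le (Set.ncard_lt_ncard ⟨hcr.crossing_union_subset, fun h ↦ ?_⟩
    hunion) (Set.ncard_le_ncard crossing_inter_subset (hu.inter_of_left _))
  rcases h (Or.inr ⟨hmem, hcr⟩ : u ∈ crossing 𝓕 u ∪ crossing 𝓕 w) with ⟨-, h⟩ | ⟨-, h⟩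
  · obtain ⟨x, hx, hx', -⟩ := h.compl_inter
    exact hx hx'
  · obtain ⟨x, hx, hx', -⟩ := h.inter
    exact hx' hx

end Crossing

section Uncrossing

/-- The input to the uncrossing argument: a `G`-invariant supply of subsets of `α`, a complexity
that decreases strictly on average when two crossing sets are replaced by two opposite corners, and
a proximity `Near ρ E u` (`E` lies within `ρ` of `u`), under which a set near a corner of two
crossing sets is also near the two sets. -/
structure UncrossingSystem (G α : Type*) [Group G] [MulAction G α] where
  /-- The sets under consideration. -/
  sets : Set (Set α)
  /-- The quantity that uncrossing decreases. -/
  complexity : Set α → ℕ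
  /-- The largest complexity allowed. -/
  bound : ℕ
  /-- Proximity of the first set to the second at a given scale. -/
  Near : ℕ → Set α → Set α → Prop
  /-- The scale at which each set is near itself. -/
  baseRadius : ℕ
  /-- The loss of scale in passing from a corner to one of the sets that form it. -/
  cornerRadius : ℕ → ℕ
  compl_mem : ∀ u ∈ sets, uᶜ ∈ sets
  smul_mem : ∀ g : G, ∀ u ∈ sets, g • u ∈ sets
  inter_mem : ∀ u ∈ sets, ∀ w ∈ sets, complexity (u ∩ w) ≤ complexity u → u ∩ w ∈ sets
  complexity_le : ∀ u ∈ sets, complexity u ≤ bound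
  complexity_compl : ∀ u, complexity uᶜ = complexity u
  complexity_smul : ∀ (g : G) u, complexity (g • u) = complexity u
  complexity_add_lt : ∀ u ∈ sets, ∀ w ∈ sets, Crosses u w →
    complexity (u ∩ w) + complexity (uᶜ ∩ wᶜ) < complexity u + complexity w
  le_cornerRadius : ∀ ρ, ρ ≤ cornerRadius ρ
  near_mono : ∀ ρ ρ' E u, ρ ≤ ρ' → Near ρ E u → Near ρ' E u
  near_compl : ∀ ρ E u, Near ρ E u → Near ρ E uᶜ
  near_smul : ∀ ρ E u (g : G), Near ρ E u → Near ρ (g • E) (g • u)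
  near_self : ∀ u ∈ sets, u.Nonempty → uᶜ.Nonempty → Near baseRadius u u
  near_of_near_inter : ∀ ρ E, ∀ u ∈ sets, ∀ w ∈ sets, Crosses u w →
    Near ρ E (u ∩ w) → Near (cornerRadius ρ) E u

namespace UncrossingSystem

variable {G α : Type*} [Group G] [MulAction G α] (S : UncrossingSystem G α) {m : ℕ}
  {u w E : Set α} {a b p q : α} {𝓓 : Set (Set α)} {ρ : ℕ}

/-- The scale used for sets of complexity `m`; passing to a corner of smaller complexity leaves room
for the loss `cornerRadius`. -/
def radius (m : ℕ) : ℕ := S.cornerRadius^[m] S.baseRadius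

/-- No member of `𝓓` near `u` separates `a` from `b`. -/
def Unseparated (𝓓 : Set (Set α)) (ρ : ℕ) (u : Set α) (a b : α) : Prop :=
  ∀ E ∈ 𝓓, S.Near ρ E u → (a ∈ E ↔ b ∈ E)

/-- The sets of complexity less than `m` that are needed, in the sense that they separate two points
which are not separated by any nearby needed set of smaller complexity. -/
def essentials : ℕ → Set (Set α)
  | 0 => ∅
  | m + 1 => essentials m ∪ {u ∈ S.sets | S.complexity u = m ∧
      ∃ a ∈ u, ∃ b ∈ uᶜ, S.Unseparated (essentials m) (S.radius m) u a b}

/-- The set `u` is needed in order to separate `a` from `b`. -/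
structure IsWitness (u : Set α) (a b : α) : Prop where
  mem_sets : u ∈ S.sets
  left_mem : a ∈ u
  right_mem : b ∈ uᶜ
  unseparated : S.Unseparated (S.essentials (S.complexity u)) (S.radius (S.complexity u)) u a b

variable {S}

theorem radius_mono : Monotone S.radius :=
  fun _ _ h ↦ Function.monotone_iterate_of_id_le S.le_cornerRadius h _

theorem Unseparated.symm (h : S.Unseparated 𝓓 ρ u a b) : S.Unseparated 𝓓 ρ u b a :=
  fun E hE hnear ↦ (h E hE hnear).symm

theorem Unseparated.compl (h : S.Unseparated 𝓓 ρ u a b) : S.Unseparated 𝓓 ρ uᶜ a b :=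
  fun E hE hnear ↦ h E hE (by simpa only [compl_compl] using S.near_compl _ _ _ hnear)

theorem essentials_mono : Monotone S.essentials :=
  monotone_nat_of_le_succ fun _ ↦ Set.subset_union_left

theorem mem_essentials_iff :
    u ∈ S.essentials m ↔ S.complexity u < m ∧ ∃ a b, S.IsWitness u a b := by
  constructor
  · induction m with
    | zero => exact False.elim
    | succ m ih =>
      rintro (h | ⟨hu, rfl, a, ha, b, hb, hab⟩)
      · exact (ih h).imp_left Nat.lt_succ_of_lt
      · exact ⟨Nat.lt_succ_self _, a, b, hu, ha, hb, hab⟩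
  · rintro ⟨hm, a, b, h⟩
    exact essentials_mono (Nat.succ_le_of_lt hm)
      (Or.inr ⟨h.mem_sets, rfl, a, h.left_mem, b, h.right_mem, h.unseparated⟩)

theorem IsWitness.compl (h : S.IsWitness u a b) : S.IsWitness uᶜ b a where
  mem_sets := S.compl_mem u h.mem_sets
  left_mem := h.right_mem
  right_mem := (compl_compl u).symm ▸ h.left_mem
  unseparated := by
    rw [S.complexity_compl]
    exact h.unseparated.symm.compl

theorem compl_mem_essentials (h : u ∈ S.essentials m) : uᶜ ∈ S.essentials m := by
  obtain ⟨hm, a, b, hab⟩ := mem_essentials_iff.1 h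
  exact mem_essentials_iff.2 ⟨(S.complexity_compl u).trans_lt hm, b, a, hab.compl⟩

theorem smul_mem_essentials (g : G) (h : u ∈ S.essentials m) : g • u ∈ S.essentials m := by
  induction m generalizing u g with
  | zero => exact False.elim h
  | succ m ih =>
    rcases h with h | ⟨hu, hm, a, ha, b, hb, hab⟩
    · exact Or.inl (ih g h)
    · refine Or.inr ⟨S.smul_mem g u hu, (S.complexity_smul g u).trans hm, g • a,
        Set.smul_mem_smul_set ha, g • b, ?_, fun E hE hnear ↦ ?_⟩
      · simpa only [Set.mem_compl_iff, Set.smul_mem_smul_set_iff] using hb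
      · have := hab (g⁻¹ • E) (ih g⁻¹ hE) (by simpa using S.near_smul _ _ _ g⁻¹ hnear)
        rwa [Set.mem_inv_smul_set_iff, Set.mem_inv_smul_set_iff] at this

theorem exists_near_essential_separating (hu : u ∈ S.sets) (ha : a ∈ u) (hb : b ∈ uᶜ) :
    ∃ E ∈ S.essentials (S.complexity u + 1),
      S.Near (S.radius (S.complexity u)) E u ∧ ¬ (a ∈ E ↔ b ∈ E) := by
  by_contra! hunsep
  have hwit : S.IsWitness u a b :=
    ⟨hu, ha, hb, fun E hE hnear ↦ hunsep E (essentials_mono (Nat.le_succ _) hE) hnear⟩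
  exact hb ((hunsep u (mem_essentials_iff.2 ⟨Nat.lt_succ_self _, a, b, hwit⟩)
    (S.near_mono _ _ _ _ (radius_mono (Nat.zero_le _)) (S.near_self u hu ⟨a, ha⟩ ⟨b, hb⟩))).1 ha)

theorem IsWitness.complexity_le_inter (h : S.IsWitness w a b) (hu : u ∈ S.sets)
    (hcr : Crosses w u) (ha : a ∈ u) : S.complexity w ≤ S.complexity (w ∩ u) := by
  by_contra! hlt
  have hcorner := S.inter_mem w h.mem_sets u hu hlt.le
  obtain ⟨E, hE, hnear, hsep⟩ :=
    exists_near_essential_separating hcorner ⟨h.left_mem, ha⟩ fun hb ↦ h.right_mem hb.1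
  have hscale : S.cornerRadius (S.radius (S.complexity (w ∩ u))) ≤ S.radius (S.complexity w) := by
    simp only [radius, ← Function.iterate_succ_apply' S.cornerRadius]
    exact radius_mono hlt
  exact hsep (h.unseparated E (essentials_mono hlt hE) (S.near_mono _ _ _ _ hscale
    (S.near_of_near_inter _ E w h.mem_sets u hu hcr hnear)))

theorem IsWitness.not_crosses_of_mem_of_mem_compl (hu : S.IsWitness u p q) (hw : S.IsWitness w a b)
    (ha : a ∈ u) (hq : q ∈ wᶜ) : ¬ Crosses u w := fun hcr ↦ by
  have hw_le := hw.complexity_le_inter hu.mem_sets hcr.symm ha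
  have hu_le := hu.compl.complexity_le_inter (S.compl_mem w hw.mem_sets)
    hcr.compl_left.compl_right hq
  have hlt := S.complexity_add_lt u hu.mem_sets w hw.mem_sets hcr
  rw [Set.inter_comm] at hw_le
  rw [S.complexity_compl] at hu_le
  omega

theorem IsWitness.not_crosses_of_mem_iff (hu : S.IsWitness u p q) (hw : S.IsWitness w a b)
    (hab : a ∈ u ↔ b ∈ u) : ¬ Crosses u w := fun hcr ↦ by
  wlog ha : a ∈ u generalizing u p q
  · exact this hu.compl (not_congr hab) hcr.compl_left ha
  by_cases hq : q ∈ w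
  · exact hu.not_crosses_of_mem_of_mem_compl hw.compl (hab.1 ha) (by rwa [compl_compl])
      hcr.compl_right
  · exact hu.not_crosses_of_mem_of_mem_compl hw ha hq hcr

theorem IsWitness.not_crosses_of_not_iff (hu : u ∈ S.sets) (hw : S.IsWitness w a b)
    (hle : S.complexity u ≤ S.complexity w) (hab : ¬ (a ∈ u ↔ b ∈ u)) : ¬ Crosses u w :=
  fun hcr ↦ by
  wlog ha : a ∈ u generalizing u
  · exact this (S.compl_mem u hu) ((S.complexity_compl u).trans_le hle)
      (fun h ↦ hab (not_iff_not.1 h)) hcr.compl_left ha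
  have hb : b ∈ uᶜ := fun hb ↦ hab (iff_of_true ha hb)
  have hle_corner := hw.complexity_le_inter hu hcr.symm ha
  have hle_opposite := hw.compl.complexity_le_inter (S.compl_mem u hu)
    hcr.symm.compl_left.compl_right hb
  have hlt := S.complexity_add_lt w hw.mem_sets u hu hcr.symm
  rw [S.complexity_compl] at hle_opposite
  omega

theorem not_crosses_of_mem_essentials (hu : u ∈ S.essentials m) (hw : w ∈ S.essentials m) :
    ¬ Crosses u w := fun hcr ↦ by
  wlog hle : S.complexity u ≤ S.complexity w generalizing u w
  · exact this hw hu hcr.symm (le_of_not_ge hle)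
  obtain ⟨-, p, q, hu⟩ := mem_essentials_iff.1 hu
  obtain ⟨-, a, b, hw⟩ := mem_essentials_iff.1 hw
  by_cases hab : a ∈ u ↔ b ∈ u
  · exact hu.not_crosses_of_mem_iff hw hab hcr
  · exact hw.not_crosses_of_not_iff hu.mem_sets hle hab hcr

variable (S) in
theorem exists_nested_separating : ∃ (𝓔 : Set (Set α)) (ρ : ℕ),
    (∀ E ∈ 𝓔, E ∈ S.sets ∧ E.Nonempty ∧ Eᶜ.Nonempty) ∧ (∀ E ∈ 𝓔, Eᶜ ∈ 𝓔) ∧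
    (∀ g : G, ∀ E ∈ 𝓔, g • E ∈ 𝓔) ∧ (∀ E ∈ 𝓔, ∀ F ∈ 𝓔, ¬ Crosses E F) ∧
    ∀ u ∈ S.sets, ∀ a ∈ u, ∀ b ∈ uᶜ, ∃ E ∈ 𝓔, S.Near ρ E u ∧ ¬ (a ∈ E ↔ b ∈ E) := by
  refine ⟨S.essentials (S.bound + 1), S.radius S.bound, fun E hE ↦ ?_,
    fun _ ↦ compl_mem_essentials, fun g _ ↦ smul_mem_essentials g,
    fun _ hE _ ↦ not_crosses_of_mem_essentials hE, fun u hu a ha b hb ↦ ?_⟩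
  · obtain ⟨-, a, b, h⟩ := mem_essentials_iff.1 hE
    exact ⟨h.mem_sets, ⟨a, h.left_mem⟩, ⟨b, h.right_mem⟩⟩
  · have hle := S.complexity_le u hu
    obtain ⟨E, hE, hnear, hsep⟩ := exists_near_essential_separating hu ha hb
    exact ⟨E, essentials_mono (Nat.succ_le_succ hle) hE,
      S.near_mono _ _ _ _ (radius_mono hle) hnear, hsep⟩

end UncrossingSystem

end Uncrossing

section Decides

variable {α : Type*} {A B u w : Set α}

/-- The set `A` lies on one side of the partition of `α` into `u` and `uᶜ`. -/
def Decides (A u : Set α) : Prop := A ⊆ u ∨ A ⊆ uᶜ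

theorem Decides.compl (h : Decides A u) : Decides A uᶜ := by
  rw [Decides, compl_compl]
  exact h.symm

theorem Decides.inter (hu : Decides A u) (hw : Decides A w) : Decides A (u ∩ w) := by
  rw [Decides, Set.compl_inter, Set.subset_inter_iff]
  rcases hu with hu | hu
  · exact hw.imp (⟨hu, ·⟩) fun hw ↦ hw.trans Set.subset_union_right
  · exact Or.inr (hu.trans Set.subset_union_left)

theorem Decides.mono (h : Decides A u) (hBA : B ⊆ A) : Decides B u :=
  h.imp hBA.trans hBA.trans

theorem Decides.subset_of_mem (h : Decides A u) {a : α} (ha : a ∈ A) (hau : a ∈ u) : A ⊆ u :=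
  h.resolve_right fun h ↦ h ha hau

theorem not_decides_univ (hu : u.Nonempty) (hu' : uᶜ.Nonempty) : ¬ Decides Set.univ u := by
  rw [Decides, Set.univ_subset_iff, Set.univ_subset_iff, Set.compl_univ_iff]
  rintro (rfl | rfl)
  · simp at hu'
  · exact hu.ne_empty rfl

theorem Decides.union (hA : Decides A u) (hB : Decides B u) (h : (A ∩ B).Nonempty) :
    Decides (A ∪ B) u := by
  obtain ⟨a, haA, haB⟩ := h
  rcases hA with hA | hA
  · exact Or.inl (Set.union_subset hA (hB.subset_of_mem haB (hA haA)))
  · exact Or.inr (Set.union_subset hA (hB.compl.subset_of_mem haB (hA haA)))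

theorem Decides.not_crosses (hu : Decides A u) (hw : Decides Aᶜ w) : ¬ Crosses u w := by
  rintro ⟨⟨a, ha, ha'⟩, ⟨b, hb, hb'⟩, ⟨c, hc, hc'⟩, ⟨d, hd, hd'⟩⟩
  rcases hu with hu | hu <;> rcases hw with hw | hw
  · exact (em (d ∈ A)).elim (fun h ↦ hd (hu h)) fun h ↦ hd' (hw h)
  · exact (em (c ∈ A)).elim (fun h ↦ hc (hu h)) fun h ↦ hw h hc'
  · exact (em (b ∈ A)).elim (fun h ↦ hu h hb) fun h ↦ hb' (hw h)
  · exact (em (a ∈ A)).elim (fun h ↦ hu h ha) fun h ↦ hw h ha'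

theorem Decides.eq_or_eq {U X F : Set α} (hU : Decides A U) (hF : Decides A F)
    (hX : Decides Aᶜ X) (hUX : U ⊆ X) (hXF : X ⊆ F) (hne : U.Nonempty) (hne' : Fᶜ.Nonempty) :
    X = U ∨ X = F := by
  obtain ⟨a, ha⟩ := hne
  obtain ⟨b, hb⟩ := hne'
  rcases hX with hX | hX
  · have hbA : b ∈ A := not_not.1 fun h ↦ hb (hXF (hX h))
    have hAF := hF.compl.subset_of_mem hbA hb
    exact Or.inr (hXF.antisymm fun P hP ↦ hX fun h ↦ hAF h hP)
  · have haA : a ∈ A := not_not.1 fun h ↦ hX h (hUX ha)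
    have hAU := hU.subset_of_mem haA ha
    exact Or.inl (Set.Subset.antisymm (fun P hP ↦ hAU (not_not.1 fun h ↦ hX h hP)) hUX)

end Decides

section Locality

variable {V : Type*} {T : SimpleGraph V} {u u' : Set (TreeEnd T)} {v w x : V} {r s : ℕ}

/-- Whether an end belongs to `u` is decided by where it leaves the closed ball of radius `r` about
`v`. -/
def LocalTo (T : SimpleGraph V) (u : Set (TreeEnd T)) (v : V) (r : ℕ) : Prop :=
  ∀ x, r < T.dist v x → Decides (endShadow T v x) u

theorem LocalTo.compl (h : LocalTo T u v r) : LocalTo T uᶜ v r := fun x hx ↦ (h x hx).compl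

theorem LocalTo.inter (hu : LocalTo T u v r) (hu' : LocalTo T u' v r) : LocalTo T (u ∩ u') v r :=
  fun x hx ↦ (hu x hx).inter (hu' x hx)

theorem LocalTo.decides_of_notMem (hT : T.IsTree) (hu : LocalTo T u w s) (hw : w ∉ shadow T v x)
    (hd : s < T.dist w x) : Decides (endShadow T v x) u := by
  rcases eq_or_ne v x with rfl | hvx
  · exact absurd (by simp [shadow_self]) hw
  · rw [endShadow_eq_of_notMem hT hvx hw]
    exact hu x hd

theorem exists_compl_endShadow_eq (hT : T.IsTree) (hvx : v ≠ x) (hw : w ∈ shadow T v x) :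
    ∃ p, (endShadow T v x)ᶜ = endShadow T w p ∧ T.dist w p = T.dist w x + 1 := by
  obtain ⟨p, hp⟩ := exists_isParent hT.connected hvx
  have hpx : IsParent T w x p := by
    have hvw : T.dist v w ≤ T.dist v p + T.dist p w := hT.connected.dist_triangle
    have hstep := hT.dist_eq_dist_add_one_of_adj w hp.adj
    have hdist := hp.dist_eq
    rw [T.dist_comm (u := p)] at hvw
    rw [mem_shadow, T.dist_comm (u := x)] at hw
    exact ⟨hp.adj.symm, by omega⟩
  exact ⟨p, by rw [hp.endShadow_eq hT, compl_endShadow hT hp.adj, hpx.endShadow_eq hT], hpx.dist_eq⟩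

theorem LocalTo.decides_compl (hT : T.IsTree) (hu : LocalTo T u w s) (hvx : v ≠ x)
    (hw : w ∈ shadow T v x) (hd : s ≤ T.dist w x) : Decides (endShadow T v x)ᶜ u := by
  obtain ⟨p, hp, hwp⟩ := exists_compl_endShadow_eq hT hvx hw
  rw [hp]
  exact hu p (by omega)

theorem LocalTo.of_add_dist_le (hT : T.IsTree) (h : LocalTo T u v r)
    (hs : r + T.dist v w ≤ s) : LocalTo T u w s := by
  intro x hx
  have hwx : T.dist w x ≤ T.dist w v + T.dist v x := hT.connected.dist_triangle
  rw [T.dist_comm (u := w) (v := v)] at hwx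
  refine h.decides_of_notMem hT (fun hv ↦ ?_) (by omega)
  rw [mem_shadow, T.dist_comm (u := w) (v := v)] at hv
  omega

theorem LocalTo.mono (h : LocalTo T u v r) (hrs : r ≤ s) : LocalTo T u v s :=
  fun x hx ↦ h x (hrs.trans_lt hx)

theorem CoboundaryIn.localTo_endsIn (hT : T.IsTree) {U : Set V} (h : CoboundaryIn T U v r) :
    LocalTo T (endsIn T U) v r := by
  intro x hx
  have hU : BoundedCoboundary T U := ⟨v, r, h⟩
  by_cases hxU : x ∈ U
  · exact Or.inl (endsIn_mono hU fun z hz ↦ (h.mem_iff_of_mem_shadow hT hx hz).1 hxU)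
  · refine Or.inr ?_
    rw [← endsIn_compl hU]
    exact endsIn_mono hU.compl fun z hz hzU ↦ hxU ((h.mem_iff_of_mem_shadow hT hx hz).2 hzU)

theorem localTo_endShadow (hT : T.IsTree) (v x : V) : LocalTo T (endShadow T v x) x 0 :=
  (coboundaryIn_shadow hT v x).localTo_endsIn hT

theorem LocalTo.eq_biUnion (hT : T.IsTree) (hval : BoundedValence T) (h : LocalTo T u v r) :
    u = ⋃ q ∈ {q | T.dist v q = r + 1 ∧ endShadow T v q ⊆ u}, endShadow T v q := by
  refine Set.Subset.antisymm (fun P hP ↦ ?_) (Set.iUnion₂_subset fun q hq ↦ hq.2)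
  obtain ⟨q, hq, hPq⟩ := exists_dist_eq_mem_endShadow hT hval P v (r + 1)
  exact Set.mem_biUnion ⟨hq, (h q (by omega)).subset_of_mem hPq hP⟩ hPq

theorem coboundaryIn_shadow_of_dist_eq (hT : T.IsTree) (hx : T.dist v x = r + 1) :
    CoboundaryIn T (shadow T v x) v r := by
  have mem_of_adj : ∀ b, T.Adj x b → r < T.dist v b → b ∈ shadow T v x := fun b hxb hb ↦ by
    refine IsParent.mem_shadow_of_parent hT.connected ⟨hxb, ?_⟩ (self_mem_shadow v x)
    have := hT.dist_eq_dist_add_one_of_adj v hxb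
    omega
  intro a b hab ha hb
  rcases eq_or_ne x a with rfl | hxa
  · exact iff_of_true (self_mem_shadow v x) (mem_of_adj b hab hb)
  rcases eq_or_ne x b with rfl | hxb
  · exact iff_of_true (mem_of_adj a hab.symm ha) (self_mem_shadow v x)
  exact mem_shadow_iff_of_adj hT hab hxa hxb

theorem LocalTo.exists_eq_endsIn (hT : T.IsTree) (hval : BoundedValence T) (h : LocalTo T u v r) :
    ∃ U, u = endsIn T U ∧ CoboundaryIn T U v r := by
  let Q := {q | T.dist v q = r + 1 ∧ endShadow T v q ⊆ u}
  have hU : CoboundaryIn T (⋃ q ∈ Q, shadow T v q) v r := fun a b hab ha hb ↦ by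
    simp only [Set.mem_iUnion]
    exact exists_congr fun q ↦ exists_congr fun hq ↦
      coboundaryIn_shadow_of_dist_eq hT hq.1 a b hab ha hb
  refine ⟨⋃ q ∈ Q, shadow T v q, Set.Subset.antisymm ?_ fun P hP ↦ ?_, hU⟩
  · rw [h.eq_biUnion hT hval]
    exact Set.iUnion₂_subset fun q hq ↦ endsIn_mono ⟨v, r, hU⟩ (Set.subset_biUnion_of_mem hq)
  · obtain ⟨q, hq, hPq⟩ := exists_dist_eq_mem_endShadow hT hval P v (r + 1)
    obtain ⟨z, hzq, hz⟩ := P.nonempty_of_mem (P.inter_mem _ hPq _ hP)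
    obtain ⟨q', hq', hzq'⟩ := Set.mem_iUnion₂.1 hz
    obtain rfl := eq_of_mem_shadow_of_dist_eq hT hzq hzq' (hq.trans hq'.1.symm)
    exact hq'.2 hPq

theorem exists_ncard_localTo_le (hT : T.IsTree) (hval : BoundedValence T) (r : ℕ) :
    ∃ N, ∀ v, {u | LocalTo T u v r}.Finite ∧ {u | LocalTo T u v r}.ncard ≤ N := by
  classical
  obtain ⟨D, hD⟩ := id hval
  refine ⟨2 ^ D ^ (r + 1), fun v ↦ ?_⟩
  obtain ⟨S, hScard, hS⟩ := exists_finset_sphere_subset hT.connected hD v (r + 1)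
  let code : Set (TreeEnd T) → Finset V :=
    fun u ↦ S.filter fun x ↦ T.dist v x = r + 1 ∧ endShadow T v x ⊆ u
  have hmaps : ∀ u ∈ {u | LocalTo T u v r}, code u ∈ (S.powerset : Set (Finset V)) :=
    fun u _ ↦ Finset.mem_coe.2 (Finset.mem_powerset.2 (Finset.filter_subset _ _))
  have hcode : ∀ u, {q | T.dist v q = r + 1 ∧ endShadow T v q ⊆ u} = code u := fun u ↦ by
    ext q
    simp only [code, Finset.coe_filter, Set.mem_ofPred_eq]
    exact ⟨fun hq ↦ ⟨hS q hq.1, hq⟩, And.right⟩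
  have hinj : Set.InjOn code {u | LocalTo T u v r} := fun u hu u' hu' h ↦ by
    rw [hu.eq_biUnion hT hval, hu'.eq_biUnion hT hval, hcode, hcode, h]
  refine ⟨Set.Finite.of_injOn hmaps hinj (Finset.finite_toSet _), ?_⟩
  calc {u | LocalTo T u v r}.ncard
      ≤ (S.powerset : Set (Finset V)).ncard :=
        Set.ncard_le_ncard_of_injOn code hmaps hinj (Finset.finite_toSet _)
    _ = 2 ^ S.card := by rw [Set.ncard_coe_finset, Finset.card_powerset]
    _ ≤ 2 ^ D ^ (r + 1) := Nat.pow_le_pow_right two_pos hScard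

theorem LocalTo.not_crosses_of_far (hT : T.IsTree) (hu : LocalTo T u v r) (hu' : LocalTo T u' w s)
    (hd : r + s < T.dist v w) : ¬ Crosses u u' := by
  obtain ⟨x, hx, hw⟩ := exists_dist_eq_mem_shadow hT.connected (show r + 1 ≤ T.dist v w by omega)
  have hvx : v ≠ x := by rintro rfl; simp at hx
  refine (hu x (by omega)).not_crosses (hu'.decides_compl hT hvx hw ?_)
  rw [mem_shadow, T.dist_comm (u := x)] at hw
  omega

theorem LocalTo.dist_le {β : ℕ} (hT : T.IsTree) (hβ : BranchingWithin T β) (hu : u.Nonempty)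
    (hu' : uᶜ.Nonempty) (hv : LocalTo T u v r) (hw : LocalTo T u w s) :
    T.dist v w ≤ r + s + (2 * β + 2) := by
  by_contra! hd
  obtain ⟨z, hz, hwz⟩ := exists_dist_eq_mem_shadow hT.connected
    (show r + 1 + (2 * β + 2) ≤ T.dist v w by omega)
  obtain ⟨x, hx, hzx⟩ := exists_dist_eq_mem_shadow hT.connected (show r + 1 ≤ T.dist v z by omega)
  have hvz : v ≠ z := by rintro rfl; simp at hz
  have hdiff := exists_mem_endShadow_notMem_endShadow hT hβ hzx (by rw [mem_shadow] at hzx; omega)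
  have hdec : Decides (endShadow T v z)ᶜ u := hw.decides_compl hT hvz hwz <| by
    rw [mem_shadow, T.dist_comm (u := z)] at hwz
    omega
  have hcover : endShadow T v x ∪ (endShadow T v z)ᶜ = Set.univ :=
    Set.univ_subset_iff.1 ((Set.union_compl_self (endShadow T v z)).symm.subset.trans
      (Set.union_subset_union_left _ (endShadow_subset_endShadow hT hzx)))
  exact not_decides_univ hu hu' (hcover ▸ (hv x (by omega)).union hdec hdiff)

theorem LocalTo.exists_localTo_between (hT : T.IsTree) {y : V} {U X F : Set (TreeEnd T)}
    (hUX : U ⊆ X) (hXF : X ⊆ F) (hne : U.Nonempty) (hne' : Fᶜ.Nonempty) (hU : LocalTo T U v r)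
    (hF : LocalTo T F w r) (hX : LocalTo T X y r) :
    ∃ m, w ∈ shadow T v m ∧ LocalTo T X m (3 * r + 1) := by
  obtain ⟨m, hwm, hym, hym'⟩ := exists_median hT v w y
  by_cases hd : T.dist y m ≤ 2 * r + 1
  · exact ⟨m, hwm, hX.of_add_dist_le hT (by omega)⟩
  rw [mem_shadow] at hwm hym hym'
  obtain ⟨x, hx, hyx⟩ := exists_dist_eq_mem_shadow hT.connected
    (show T.dist v m + (r + 1) ≤ T.dist v y by rw [T.dist_comm (u := m) (v := y)] at hym; omega)
  have hyx' := mem_shadow.1 hyx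
  have hvx : v ≠ x := by rintro rfl; simp at hx
  have hwy : T.dist w y ≤ T.dist w x + T.dist x y := hT.connected.dist_triangle
  have hw : w ∉ shadow T v x := fun hw ↦ by
    rw [mem_shadow, T.dist_comm (u := x)] at hw
    rw [T.dist_comm (u := w) (v := m)] at hym'
    omega
  have hXdec : Decides (endShadow T v x)ᶜ X := hX.decides_compl hT hvx hyx <| by
    rw [T.dist_comm (u := y)] at hd ⊢
    omega
  have hFdec := hF.decides_of_notMem hT hw (by omega)
  rcases (hU x (by omega)).eq_or_eq hFdec hXdec hUX hXF hne hne' with rfl | rfl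
  · exact ⟨v, by simp [shadow_self], hU.mono (by omega)⟩
  · exact ⟨w, self_mem_shadow v w, hF.mono (by omega)⟩

end Locality

section QuasiActions

variable {V G : Type*} [Group G] {T : SimpleGraph V} {A : G → V → V} {κ : ℕ}

/-- The maps `A g` quasi-act on `T` with constant `κ`. The condition that they are coarsely
surjective is omitted, since it follows from `dist_mul_le` and `dist_one_le`. -/
structure QuasiAction (T : SimpleGraph V) (A : G → V → V) (κ : ℕ) : Prop where
  dist_map_le : ∀ g x y, T.dist (A g x) (A g y) ≤ κ * T.dist x y + κ
  dist_le : ∀ g x y, T.dist x y ≤ κ * T.dist (A g x) (A g y) + κ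
  dist_mul_le : ∀ g h x, T.dist (A (g * h) x) (A g (A h x)) ≤ κ
  dist_one_le : ∀ x, T.dist (A 1 x) x ≤ κ

namespace QuasiAction

variable {U : Set V} {v w : V} {r : ℕ} {f : V → V} {P : TreeEnd T} {g : G}

theorem dist_inv_le (hA : QuasiAction T A κ) (hconn : T.Connected) (g : G) (x : V) :
    T.dist (A g⁻¹ (A g x)) x ≤ 2 * κ := by
  have hmul := hA.dist_mul_le g⁻¹ g x
  have hone := hA.dist_one_le x
  have htri : T.dist (A g⁻¹ (A g x)) x ≤ T.dist (A g⁻¹ (A g x)) (A 1 x) + T.dist (A 1 x) x :=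
    hconn.dist_triangle
  rw [inv_mul_cancel, T.dist_comm] at hmul
  omega

theorem coboundaryIn_preimage (hA : QuasiAction T A κ) (hconn : T.Connected)
    (h : CoboundaryIn T U (A g w) r) :
    CoboundaryIn T (A g ⁻¹' U) w (κ * (r + 2 * κ) + κ) := by
  intro x y hxy hx _
  refine h.mem_iff_of_dist_lt hconn (a := A g x) (b := A g y) ?_
  have hxy_le := hA.dist_map_le g x y
  rw [dist_eq_one_iff_adj.2 hxy] at hxy_le
  by_contra! hle
  have hmul := Nat.mul_le_mul_left κ (hle.trans (show _ ≤ r + 2 * κ by omega))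
  have hwx := hA.dist_le g w x
  omega

theorem boundedCoboundary_preimage (hA : QuasiAction T A κ) (hconn : T.Connected) (g : G)
    (h : BoundedCoboundary T U) : BoundedCoboundary T (A g ⁻¹' U) :=
  let ⟨v, _, h⟩ := h
  ⟨v, _, hA.coboundaryIn_preimage hconn (h.of_add_dist_le hconn (w := A g v) le_rfl)⟩

theorem finite_preimage (hA : QuasiAction T A κ) (hconn : T.Connected) (hval : BoundedValence T)
    (g : G) (h : U.Finite) : (A g ⁻¹' U).Finite := by
  refine h.preimage' fun b _ ↦ ?_
  rcases (A g ⁻¹' {b}).eq_empty_or_nonempty with hempty | ⟨x, rfl⟩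
  · exact hempty ▸ Set.finite_empty
  refine (finite_closedBall hconn hval x κ).subset fun y hy ↦ ?_
  have hxy := hA.dist_le g x y
  rw [Set.mem_singleton_iff.1 hy] at hxy
  simpa using hxy

theorem mem_iff_of_dist_le (hA : QuasiAction T A κ) (hconn : T.Connected) (hval : BoundedValence T)
    (hf : ∀ x, T.dist (A g x) (f x) ≤ κ) (hU : BoundedCoboundary T U)
    (hfU : BoundedCoboundary T (f ⁻¹' U)) : A g ⁻¹' U ∈ P.sets ↔ f ⁻¹' U ∈ P.sets := by
  obtain ⟨v, r, h⟩ := id hU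
  have hfin := hA.finite_preimage hconn hval g (finite_closedBall hconn hval v (r + κ))
  have heq : ∀ x, x ∉ A g ⁻¹' {x | T.dist v x ≤ r + κ} → (A g x ∈ U ↔ f x ∈ U) := fun x hx ↦ by
    have hfx := hf x
    exact h.mem_iff_of_dist_lt hconn (by simp at hx; omega)
  constructor <;> intro hmem
  · refine P.mem_of_finite_diff hmem hfU (hfin.subset fun x hx ↦ ?_)
    exact not_not.1 fun hfar ↦ hx.2 ((heq x hfar).1 hx.1)
  · refine P.mem_of_finite_diff hmem (hA.boundedCoboundary_preimage hconn g hU)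
      (hfin.subset fun x hx ↦ ?_)
    exact not_not.1 fun hfar ↦ hx.2 ((heq x hfar).2 hx.1)

/-- The image of an end under the quasi-isometry `A g`. -/
def mapEnd (hA : QuasiAction T A κ) (hconn : T.Connected) (hval : BoundedValence T) (g : G)
    (P : TreeEnd T) : TreeEnd T where
  sets := {U | BoundedCoboundary T U ∧ A g ⁻¹' U ∈ P.sets}
  boundedCoboundary U h := h.1
  inter_mem U h W h' := ⟨h.1.inter hconn h'.1, P.inter_mem _ h.2 _ h'.2⟩
  compl_mem_iff U h := by
    have hiff := P.compl_mem_iff _ (hA.boundedCoboundary_preimage hconn g h)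
    exact ⟨fun hc hU ↦ hiff.1 hc.2 hU.2, fun hU ↦ ⟨h.compl, hiff.2 fun hmem ↦ hU ⟨h, hmem⟩⟩⟩
  notMem_of_finite U h h' := P.notMem_of_finite _ (hA.finite_preimage hconn hval g h) h'.2

/-- A quasi-action on a tree induces a genuine action on its ends. -/
@[reducible] def mulAction (hA : QuasiAction T A κ) (hconn : T.Connected)
    (hval : BoundedValence T) : MulAction G (TreeEnd T) where
  smul := hA.mapEnd hconn hval
  one_smul P := by
    have hiff {U} (hU : BoundedCoboundary T U) : A 1 ⁻¹' U ∈ P.sets ↔ U ∈ P.sets :=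
      hA.mem_iff_of_dist_le (f := id) hconn hval hA.dist_one_le hU hU
    ext U
    exact ⟨fun h ↦ (hiff h.1).1 h.2,
      fun h ↦ ⟨P.boundedCoboundary U h, (hiff (P.boundedCoboundary U h)).2 h⟩⟩
  mul_smul g h P := by
    have hbdd {U} (hU : BoundedCoboundary T U) := hA.boundedCoboundary_preimage hconn g hU
    have hiff {U} (hU : BoundedCoboundary T U) :
        A (g * h) ⁻¹' U ∈ P.sets ↔ A h ⁻¹' (A g ⁻¹' U) ∈ P.sets :=
      hA.mem_iff_of_dist_le (f := A g ∘ A h) hconn hval (hA.dist_mul_le g h) hU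
        (hA.boundedCoboundary_preimage hconn h (hbdd hU))
    ext U
    exact ⟨fun hU ↦ ⟨hU.1, hbdd hU.1, (hiff hU.1).1 hU.2⟩,
      fun hU ↦ ⟨hU.1, (hiff hU.1).2 hU.2.2⟩⟩

theorem smul_endsIn (hA : QuasiAction T A κ) (hconn : T.Connected) (hval : BoundedValence T)
    (g : G) (hU : BoundedCoboundary T U) :
    letI := hA.mulAction hconn hval
    g • endsIn T U = endsIn T (A g⁻¹ ⁻¹' U) := by
  let _ := hA.mulAction hconn hval
  ext P
  rw [Set.mem_smul_set_iff_inv_smul_mem]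
  exact ⟨fun h ↦ h.2, fun h ↦ ⟨hU, h⟩⟩

theorem localTo_smul (hA : QuasiAction T A κ) (hT : T.IsTree) (hval : BoundedValence T) (g : G)
    {u : Set (TreeEnd T)} (h : LocalTo T u v r) :
    letI := hA.mulAction hT.connected hval
    LocalTo T (g • u) (A g v) (κ * (r + 2 * κ + 2 * κ) + κ) := by
  let _ := hA.mulAction hT.connected hval
  obtain ⟨U, rfl, hU⟩ := h.exists_eq_endsIn hT hval
  rw [hA.smul_endsIn hT.connected hval g ⟨v, r, hU⟩]
  refine (hA.coboundaryIn_preimage hT.connected ?_).localTo_endsIn hT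
  have hdist := hA.dist_inv_le hT.connected g v
  rw [T.dist_comm] at hdist
  exact hU.of_add_dist_le hT.connected (by omega)

end QuasiAction

/-- The action of `G` on the ends of `T` carries sets local to a vertex `v` to sets local to
`A g v`, with radii controlled by `φ`. -/
structure EndAction (T : SimpleGraph V) [MulAction G (TreeEnd T)] (A : G → V → V) (k : ℕ)
    (φ : ℕ → ℕ) : Prop where
  localTo_smul : ∀ (g : G) {u v r}, LocalTo T u v r → LocalTo T (g • u) (A g v) (φ r)
  dist_inv_le : ∀ g x, T.dist (A g⁻¹ (A g x)) x ≤ k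

theorem QuasiAction.endAction (hA : QuasiAction T A κ) (hT : T.IsTree) (hval : BoundedValence T) :
    letI := hA.mulAction hT.connected hval
    EndAction T A (2 * κ) fun r ↦ κ * (r + 2 * κ + 2 * κ) + κ :=
  let _ := hA.mulAction hT.connected hval
  ⟨fun g _ _ _ ↦ hA.localTo_smul hT hval g, hA.dist_inv_le hT.connected⟩

end QuasiActions

section CrossingNumbers

variable {V : Type*} {T : SimpleGraph V} {u : Set (TreeEnd T)} {v w x : V} {β n r : ℕ}

theorem crosses_iff_not_decides {α : Type*} {u F : Set α} :
    Crosses F u ↔ ¬ Decides F u ∧ ¬ Decides Fᶜ u := by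
  rw [← not_iff_not, not_crosses_iff, not_and_or, not_not, not_not, Decides, Decides, or_assoc]

theorem exists_ncard_crossing_le (hT : T.IsTree) (hval : BoundedValence T) (r s : ℕ) :
    ∃ N, ∀ 𝓕 : Set (Set (TreeEnd T)), (∀ F ∈ 𝓕, ∃ w, LocalTo T F w r) → ∀ u v, LocalTo T u v s →
      (crossing 𝓕 u).Finite ∧ (crossing 𝓕 u).ncard ≤ N := by
  obtain ⟨N, hN⟩ := exists_ncard_localTo_le hT hval (s + 2 * r)
  refine ⟨N, fun 𝓕 h𝓕 u v hu ↦ ?_⟩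
  have hsub : crossing 𝓕 u ⊆ {F | LocalTo T F v (s + 2 * r)} := by
    rintro F ⟨hF, hcr⟩
    obtain ⟨w, hw⟩ := h𝓕 F hF
    have hwv : T.dist w v ≤ r + s := not_lt.1 fun h ↦ hw.not_crosses_of_far hT hu h hcr
    exact hw.of_add_dist_le hT (by omega)
  exact ⟨(hN v).1.subset hsub, (Set.ncard_le_ncard hsub (hN v).1).trans (hN v).2⟩

theorem LocalTo.exists_not_decides_forall_decides (h : LocalTo T u w r) (hu : u.Nonempty)
    (hu' : uᶜ.Nonempty) : ∃ v, ¬ Decides (endShadow T w v) u ∧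
      ∀ y, T.dist w v < T.dist w y → Decides (endShadow T w y) u := by
  let S := {v | ¬ Decides (endShadow T w v) u}
  have hne : (T.dist w '' S).Nonempty := by
    refine ⟨_, w, fun hw ↦ ?_, rfl⟩
    rw [endShadow_self] at hw
    exact not_decides_univ hu hu' hw
  have hbdd : BddAbove (T.dist w '' S) :=
    ⟨r, by rintro _ ⟨v, hv, rfl⟩; exact not_lt.1 fun hd ↦ hv (h v hd)⟩
  obtain ⟨v, hv, hmax⟩ := Nat.sSup_mem hne hbdd
  exact ⟨v, hv, fun y hy ↦ not_not.1 fun hyS ↦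
    hy.not_ge ((le_csSup hbdd ⟨y, hyS, rfl⟩).trans hmax.ge)⟩

theorem crosses_endShadow_of_not_decides (hT : T.IsTree) (hv : ¬ Decides (endShadow T w v) u)
    (hmax : ∀ y, T.dist w v < T.dist w y → Decides (endShadow T w y) u) (hvx : v ≠ x)
    (hx : ¬ Decides (endShadow T v x) u) : Crosses (endShadow T v x) u := by
  obtain ⟨y, hy, hxy⟩ :=
    exists_dist_eq_mem_shadow hT.connected (hT.connected.pos_dist_of_ne hvx)
  have hadj : T.Adj v y := dist_eq_one_iff_adj.1 hy
  have hsub : endShadow T v x ⊆ endShadow T v y := endShadow_subset_endShadow hT hxy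
  have hparent : IsParent T w y v := by
    refine ⟨hadj.symm, (hT.dist_eq_dist_add_one_of_adj w hadj).resolve_right fun hdist ↦ hx ?_⟩
    have hdec := hmax y (by omega)
    rw [IsParent.endShadow_eq hT ⟨hadj, hdist⟩] at hdec
    exact hdec.mono hsub
  refine crosses_iff_not_decides.2 ⟨hx, fun hdec ↦ hv ?_⟩
  rw [hparent.endShadow_eq hT, ← compl_endShadow hT hadj]
  exact hdec.mono (Set.compl_subset_compl.2 hsub)

theorem lt_ncard_of_forall_endShadow_mem (hT : T.IsTree) (hβ : BranchingWithin T β)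
    (hd : n * (2 * β + 2) < T.dist v x) {𝓒 : Set (Set (TreeEnd T))} (hfin : 𝓒.Finite)
    (hmem : ∀ y, v ≠ y → x ∈ shadow T v y → endShadow T v y ∈ 𝓒) : n < 𝓒.ncard := by
  have hle (i : Fin (n + 1)) : i * (2 * β + 2) + 1 ≤ T.dist v x :=
    (Nat.succ_le_succ (Nat.mul_le_mul_right _ i.is_le)).trans hd
  choose y hy hxy using fun i ↦ exists_dist_eq_mem_shadow hT.connected (hle i)
  have hanti : StrictAnti fun i ↦ endShadow T v (y i) := fun i j hij ↦ by
    have hmul := Nat.mul_le_mul_right (2 * β + 2) (Nat.succ_le_of_lt (Fin.lt_def.1 hij))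
    rw [Nat.succ_mul] at hmul
    have hyi := hy i
    have hyj := hy j
    have hyy := mem_shadow_of_dist_le hT (hxy i) (hxy j) (by omega)
    refine ⟨endShadow_subset_endShadow hT hyy, Set.not_subset.2 ?_⟩
    refine exists_mem_endShadow_notMem_endShadow hT hβ hyy ?_
    rw [mem_shadow] at hyy
    omega
  have hmaps : Set.range (fun i ↦ endShadow T v (y i)) ⊆ 𝓒 := by
    rintro _ ⟨i, rfl⟩
    refine hmem _ (fun hvy ↦ ?_) (hxy i)
    have hyi := hy i
    simp [← hvy] at hyi
  have hcard := Set.ncard_le_ncard hmaps hfin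
  rw [Set.ncard_range_of_injective hanti.injective, Nat.card_fin] at hcard
  exact hcard

/-- If `u` is not local at this scale about a vertex `v` that is furthest from `w` among those whose
shadow does not decide `u`, then all half-spaces along some long path starting at `v` cross `u`. -/
theorem LocalTo.exists_localTo_of_ncard_crossing_le (hT : T.IsTree) (hβ : BranchingWithin T β)
    {𝓕 : Set (Set (TreeEnd T))} (h𝓕 : ∀ p q, T.Adj p q → endShadow T p q ∈ 𝓕)
    (hu : u.Nonempty) (hu' : uᶜ.Nonempty) (h : LocalTo T u w r) (hfin : (crossing 𝓕 u).Finite)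
    (hn : (crossing 𝓕 u).ncard ≤ n) : ∃ v, LocalTo T u v (n * (2 * β + 2)) := by
  obtain ⟨v, hv, hmax⟩ := h.exists_not_decides_forall_decides hu hu'
  refine ⟨v, fun x hx ↦ not_not.1 fun hdec ↦ hn.not_gt ?_⟩
  refine lt_ncard_of_forall_endShadow_mem hT hβ hx hfin fun y hvy hxy ↦ ⟨?_, ?_⟩
  · obtain ⟨p, hp⟩ := exists_isParent hT.connected hvy
    rw [hp.endShadow_eq hT]
    exact h𝓕 p y hp.adj
  · exact crosses_endShadow_of_not_decides hT hv hmax hvy fun hy ↦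
      hdec (hy.mono (endShadow_subset_endShadow hT hxy))

end CrossingNumbers

section SeparatingFamilies

variable {V G : Type*} [Group G] {T : SimpleGraph V} [MulAction G (TreeEnd T)] {A : G → V → V}
  {u w : Set (TreeEnd T)} {β k n₁ n₂ r : ℕ} {φ : ℕ → ℕ}

/-- A set of ends is clopen when it is local to some vertex. -/
def IsClopenEnds (T : SimpleGraph V) (u : Set (TreeEnd T)) : Prop := ∃ v r, LocalTo T u v r

theorem IsClopenEnds.inter (hT : T.IsTree) (hu : IsClopenEnds T u) (hw : IsClopenEnds T w) :
    IsClopenEnds T (u ∩ w) := by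
  obtain ⟨v, r, hu⟩ := hu
  obtain ⟨v', r', hw⟩ := hw
  exact ⟨v, max r (r' + T.dist v' v), (hu.mono (le_max_left _ _)).inter
    (hw.of_add_dist_le hT (le_max_right _ _))⟩

theorem IsClopenEnds.smul (hE : EndAction T A k φ) (g : G) (hu : IsClopenEnds T u) :
    IsClopenEnds T (g • u) :=
  let ⟨_, _, h⟩ := hu
  ⟨_, _, hE.localTo_smul g h⟩

theorem IsClopenEnds.finite_crossing (hT : T.IsTree) (hval : BoundedValence T)
    (hu : IsClopenEnds T u) {𝓕 : Set (Set (TreeEnd T))} (h𝓕 : ∀ F ∈ 𝓕, ∃ w, LocalTo T F w r) :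
    (crossing 𝓕 u).Finite := by
  obtain ⟨v, s, hu⟩ := hu
  obtain ⟨N, hN⟩ := exists_ncard_crossing_le hT hval r s
  exact (hN 𝓕 h𝓕 u v hu).1

/-- The translates of the half-spaces cut off by the edges of `T`. -/
def halfSpaces (G : Type*) [Group G] (T : SimpleGraph V) [MulAction G (TreeEnd T)] :
    Set (Set (TreeEnd T)) :=
  {F | ∃ (g : G) (p q : V), T.Adj p q ∧ g • endShadow T p q = F}

theorem endShadow_mem_halfSpaces {p q : V} (h : T.Adj p q) : endShadow T p q ∈ halfSpaces G T :=
  ⟨1, p, q, h, one_smul _ _⟩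

theorem smul_mem_halfSpaces (g : G) (h : u ∈ halfSpaces G T) : g • u ∈ halfSpaces G T := by
  obtain ⟨g', p, q, h, rfl⟩ := h
  exact ⟨g * g', p, q, h, mul_smul _ _ _⟩

theorem exists_localTo_of_mem_halfSpaces (hT : T.IsTree) (hE : EndAction T A k φ)
    (hu : u ∈ halfSpaces G T) : ∃ v, LocalTo T u v (φ 0) := by
  obtain ⟨g, p, q, -, rfl⟩ := hu
  exact ⟨_, hE.localTo_smul g (localTo_endShadow hT p q)⟩

/-- The proper clopen sets of ends which are crossed by at most `n` translates of half-spaces. -/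
def thinSets (G : Type*) [Group G] (T : SimpleGraph V) [MulAction G (TreeEnd T)] (n : ℕ) :
    Set (Set (TreeEnd T)) :=
  {u | IsClopenEnds T u ∧ u.Nonempty ∧ uᶜ.Nonempty ∧ (crossing (halfSpaces G T) u).ncard ≤ n}

theorem smul_mem_thinSets (hE : EndAction T A k φ) (g : G) (hu : u ∈ thinSets G T n₁) :
    g • u ∈ thinSets G T n₁ := by
  obtain ⟨hclopen, hne, hne', hn⟩ := hu
  refine ⟨hclopen.smul hE g, hne.smul_set, ?_, ?_⟩
  · rw [← Set.smul_set_compl]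
    exact hne'.smul_set
  · rwa [ncard_crossing_smul fun g _ ↦ smul_mem_halfSpaces g]

theorem exists_localTo_of_mem_thinSets (hT : T.IsTree) (hval : BoundedValence T)
    (hβ : BranchingWithin T β) (hE : EndAction T A k φ) (hu : u ∈ thinSets G T n₁) :
    ∃ v, LocalTo T u v (n₁ * (2 * β + 2)) := by
  obtain ⟨hclopen, hne, hne', hn⟩ := hu
  have hfin := hclopen.finite_crossing hT hval fun F ↦ exists_localTo_of_mem_halfSpaces hT hE
  obtain ⟨w, r, hr⟩ := hclopen
  exact hr.exists_localTo_of_ncard_crossing_le hT hβ (fun _ _ ↦ endShadow_mem_halfSpaces) hne hne'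
    hfin hn

/-- A lexicographic count of the half-spaces and then of the thin sets that cross `u`. Crossing
numbers with half-spaces are only submodular; the count of thin sets makes the inequality strict,
because the two sets being uncrossed are thin themselves. -/
noncomputable def crossingComplexity (G : Type*) [Group G] (T : SimpleGraph V)
    [MulAction G (TreeEnd T)] (n₁ n₂ : ℕ) (u : Set (TreeEnd T)) : ℕ :=
  (n₂ + 1) * (crossing (halfSpaces G T) u).ncard + (crossing (thinSets G T n₁) u).ncard

/-- The clopen sets whose complexity does not exceed the largest value it can take when `u` is
crossed by at most `n₁` half-spaces and `n₂` thin sets. -/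
def simpleSets (G : Type*) [Group G] (T : SimpleGraph V) [MulAction G (TreeEnd T)] (n₁ n₂ : ℕ) :
    Set (Set (TreeEnd T)) :=
  {u | IsClopenEnds T u ∧ crossingComplexity G T n₁ n₂ u ≤ (n₂ + 1) * n₁ + n₂}

theorem crossingComplexity_smul (hE : EndAction T A k φ) (g : G) (u : Set (TreeEnd T)) :
    crossingComplexity G T n₁ n₂ (g • u) = crossingComplexity G T n₁ n₂ u := by
  rw [crossingComplexity, ncard_crossing_smul fun g _ ↦ smul_mem_halfSpaces g,
    ncard_crossing_smul fun g _ ↦ smul_mem_thinSets hE g, crossingComplexity]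

theorem smul_mem_simpleSets (hE : EndAction T A k φ) (g : G) (hu : u ∈ simpleSets G T n₁ n₂) :
    g • u ∈ simpleSets G T n₁ n₂ :=
  ⟨hu.1.smul hE g, (crossingComplexity_smul hE g u).trans_le hu.2⟩

theorem mem_thinSets_of_mem_simpleSets (hu : u ∈ simpleSets G T n₁ n₂) (hne : u.Nonempty)
    (hne' : uᶜ.Nonempty) : u ∈ thinSets G T n₁ := by
  refine ⟨hu.1, hne, hne', not_lt.1 fun hlt ↦ ?_⟩
  have hle := hu.2
  have hmul := Nat.mul_le_mul_left (n₂ + 1) (Nat.succ_le_of_lt hlt)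
  rw [crossingComplexity] at hle
  rw [Nat.mul_succ] at hmul
  omega

theorem crossingComplexity_add_lt (hT : T.IsTree) (hval : BoundedValence T)
    (hβ : BranchingWithin T β) (hE : EndAction T A k φ) (hu : u ∈ simpleSets G T n₁ n₂)
    (hw : w ∈ simpleSets G T n₁ n₂) (hcr : Crosses u w) :
    crossingComplexity G T n₁ n₂ (u ∩ w) + crossingComplexity G T n₁ n₂ (uᶜ ∩ wᶜ) <
      crossingComplexity G T n₁ n₂ u + crossingComplexity G T n₁ n₂ w := by
  have hfin {x} (hx : x ∈ simpleSets G T n₁ n₂) :=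
    hx.1.finite_crossing hT hval fun F ↦ exists_localTo_of_mem_halfSpaces hT hE
  have hfin' {x} (hx : x ∈ simpleSets G T n₁ n₂) :=
    hx.1.finite_crossing hT hval fun F ↦ exists_localTo_of_mem_thinSets hT hval hβ hE (n₁ := n₁)
  have hle := Nat.mul_le_mul_left (n₂ + 1) (hcr.ncard_crossing_add_le (hfin hu) (hfin hw))
  have hlt := hcr.ncard_crossing_add_lt (hfin' hu) (hfin' hw)
    (mem_thinSets_of_mem_simpleSets hu hcr.nonempty_left hcr.compl_left.nonempty_left)
  rw [Nat.mul_add, Nat.mul_add] at hle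
  simp only [crossingComplexity]
  omega

theorem Crosses.exists_localTo (hT : T.IsTree) (hval : BoundedValence T)
    (hβ : BranchingWithin T β) (hE : EndAction T A k φ) (hu : u ∈ simpleSets G T n₁ n₂)
    (hw : w ∈ simpleSets G T n₁ n₂) (hcr : Crosses u w) :
    ∃ v, LocalTo T u v (3 * (n₁ * (2 * β + 2))) ∧ LocalTo T w v (3 * (n₁ * (2 * β + 2))) := by
  obtain ⟨v, hv⟩ := exists_localTo_of_mem_thinSets hT hval hβ hE
    (mem_thinSets_of_mem_simpleSets hu hcr.nonempty_left hcr.compl_left.nonempty_left)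
  obtain ⟨v', hv'⟩ := exists_localTo_of_mem_thinSets hT hval hβ hE
    (mem_thinSets_of_mem_simpleSets hw hcr.symm.nonempty_left hcr.compl_right.symm.nonempty_left)
  have hd := not_lt.1 fun hd ↦ hv.not_crosses_of_far hT hv' hd hcr
  rw [T.dist_comm] at hd
  exact ⟨v, hv.mono (by omega), hv'.of_add_dist_le hT (by omega)⟩

/-- Two sets of ends are near at scale `ρ` when some common translates of them are local, with
radius `ρ`, to the same vertex. -/
def NearEnds (G : Type*) [Group G] (T : SimpleGraph V) [MulAction G (TreeEnd T)] (ρ : ℕ)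
    (E u : Set (TreeEnd T)) : Prop :=
  ∃ (g : G) (v : V), LocalTo T (g • E) v ρ ∧ LocalTo T (g • u) v ρ

theorem NearEnds.of_inter (hT : T.IsTree) (hval : BoundedValence T) (hβ : BranchingWithin T β)
    (hE : EndAction T A k φ) (hu : u ∈ simpleSets G T n₁ n₂) (hw : w ∈ simpleSets G T n₁ n₂)
    (hcr : Crosses u w) {ρ : ℕ} {E : Set (TreeEnd T)} (h : NearEnds G T ρ E (u ∩ w)) :
    NearEnds G T (2 * ρ + 3 * (n₁ * (2 * β + 2)) + (2 * β + 2)) E u := by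
  obtain ⟨g, v, hEv, hv⟩ := h
  have hcr' := hcr.smul g
  obtain ⟨v', hu', hw'⟩ :=
    hcr'.exists_localTo hT hval hβ hE (smul_mem_simpleSets hE g hu) (smul_mem_simpleSets hE g hw)
  rw [Set.smul_set_inter] at hv
  have hne' : (g • u ∩ g • w)ᶜ.Nonempty :=
    hcr'.inter_compl.mono fun _ hx hx' ↦ hx.2 hx'.2
  have hd := hv.dist_le hT hβ hcr'.inter hne' (hu'.inter hw')
  exact ⟨g, v', hEv.of_add_dist_le hT (by omega), hu'.mono (by omega)⟩

/-- The clopen sets of ends form an uncrossing system. -/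
noncomputable def uncrossingSystem (hT : T.IsTree) (hval : BoundedValence T)
    (hβ : BranchingWithin T β) (hE : EndAction T A k φ) (n₁ n₂ : ℕ) :
    UncrossingSystem G (TreeEnd T) where
  sets := simpleSets G T n₁ n₂
  complexity := crossingComplexity G T n₁ n₂
  bound := (n₂ + 1) * n₁ + n₂
  Near := NearEnds G T
  baseRadius := n₁ * (2 * β + 2)
  cornerRadius ρ := 2 * ρ + 3 * (n₁ * (2 * β + 2)) + (2 * β + 2)
  compl_mem := by
    rintro u ⟨⟨v, r, h⟩, hle⟩
    exact ⟨⟨v, r, h.compl⟩, by simpa only [crossingComplexity, crossing_compl] using hle⟩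
  smul_mem g _ := smul_mem_simpleSets hE g
  inter_mem _ hu _ hw hle := ⟨hu.1.inter hT hw.1, hle.trans hu.2⟩
  complexity_le _ hu := hu.2
  complexity_compl _ := by simp only [crossingComplexity, crossing_compl]
  complexity_smul := crossingComplexity_smul hE
  complexity_add_lt _ hu _ hw := crossingComplexity_add_lt hT hval hβ hE hu hw
  le_cornerRadius _ := by omega
  near_mono _ _ _ _ hle := fun ⟨g, v, hEv, huv⟩ ↦ ⟨g, v, hEv.mono hle, huv.mono hle⟩
  near_compl _ _ _ := fun ⟨g, v, hEv, huv⟩ ↦ ⟨g, v, hEv, by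
    rw [Set.smul_set_compl]
    exact huv.compl⟩
  near_smul _ _ _ g := fun ⟨g', v, h⟩ ↦ ⟨g' * g⁻¹, v, by simpa only [mul_smul, inv_smul_smul]⟩
  near_self u hu hne hne' := by
    obtain ⟨v, hv⟩ := exists_localTo_of_mem_thinSets hT hval hβ hE
      (mem_thinSets_of_mem_simpleSets hu hne hne')
    exact ⟨1, v, by simpa only [one_smul, and_self]⟩
  near_of_near_inter _ _ _ hu _ hw hcr := NearEnds.of_inter hT hval hβ hE hu hw hcr

theorem exists_endShadow_mem_simpleSets (hT : T.IsTree) (hval : BoundedValence T)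
    (hβ : BranchingWithin T β) (hE : EndAction T A k φ) :
    ∃ n₁ n₂, ∀ p q, endShadow T p q ∈ simpleSets G T n₁ n₂ := by
  obtain ⟨n₁, hn₁⟩ := exists_ncard_crossing_le hT hval (φ 0) 0
  obtain ⟨n₂, hn₂⟩ := exists_ncard_crossing_le hT hval (n₁ * (2 * β + 2)) 0
  refine ⟨n₁, n₂, fun p q ↦ ⟨⟨q, 0, localTo_endShadow hT p q⟩, ?_⟩⟩
  exact Nat.add_le_add
    (Nat.mul_le_mul_left _ (hn₁ _ (fun _ ↦ exists_localTo_of_mem_halfSpaces hT hE) _ _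
      (localTo_endShadow hT p q)).2)
    (hn₂ _ (fun _ ↦ exists_localTo_of_mem_thinSets hT hval hβ hE) _ _ (localTo_endShadow hT p q)).2

theorem NearEnds.localTo (hT : T.IsTree) (hβ : BranchingWithin T β) (hE : EndAction T A k φ)
    {ρ : ℕ} {E : Set (TreeEnd T)} {v : V} (h : NearEnds G T ρ E u) (hu : u.Nonempty)
    (hu' : uᶜ.Nonempty) (huv : LocalTo T u v r) :
    LocalTo T E v (φ (2 * ρ + φ r + (2 * β + 2)) + k) := by
  obtain ⟨g, w, hEw, huw⟩ := h
  have hd := huw.dist_le hT hβ hu.smul_set (by rw [← Set.smul_set_compl]; exact hu'.smul_set)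
    (hE.localTo_smul g huv)
  have hEv : LocalTo T (g • E) (A g v) (2 * ρ + φ r + (2 * β + 2)) :=
    hEw.of_add_dist_le hT (by omega)
  have hinv := hE.localTo_smul g⁻¹ hEv
  rw [inv_smul_smul] at hinv
  exact hinv.of_add_dist_le hT (Nat.add_le_add_left (hE.dist_inv_le g v) _)

/-- A family of pairwise nested sets of ends, all of them local at scale `R`, such that any two ends
separated by an edge of `T` are separated by a member of the family near this edge. -/
structure SeparatingFamily (T : SimpleGraph V) (R : ℕ) (𝓔 : Set (Set (TreeEnd T))) : Prop where
  nonempty : ∀ E ∈ 𝓔, E.Nonempty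
  exists_localTo : ∀ E ∈ 𝓔, ∃ v, LocalTo T E v R
  compl_mem : ∀ E ∈ 𝓔, Eᶜ ∈ 𝓔
  not_crosses : ∀ E ∈ 𝓔, ∀ F ∈ 𝓔, ¬ Crosses E F
  exists_separating : ∀ p q, T.Adj p q → ∀ a ∈ endShadow T p q, ∀ b ∈ (endShadow T p q)ᶜ,
    ∃ E ∈ 𝓔, LocalTo T E q R ∧ ¬ (a ∈ E ↔ b ∈ E)

theorem exists_separatingFamily (hT : T.IsTree) (hval : BoundedValence T)
    (hβ : BranchingWithin T β) (hE : EndAction T A k φ) :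
    ∃ R 𝓔, SeparatingFamily T R 𝓔 ∧ ∀ g : G, ∀ E ∈ 𝓔, g • E ∈ 𝓔 := by
  obtain ⟨n₁, n₂, hn⟩ := exists_endShadow_mem_simpleSets hT hval hβ hE
  obtain ⟨𝓔, ρ, hsets, hcompl, hsmul, hnested, hsep⟩ :=
    (uncrossingSystem hT hval hβ hE n₁ n₂).exists_nested_separating
  refine ⟨max (n₁ * (2 * β + 2)) (φ (2 * ρ + φ 0 + (2 * β + 2)) + k), 𝓔,
    ⟨fun F hF ↦ (hsets F hF).2.1, fun F hF ↦ ?_, hcompl, hnested, fun p q _ a ha b hb ↦ ?_⟩, hsmul⟩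
  · obtain ⟨hmem, hne, hne'⟩ := hsets F hF
    obtain ⟨v, hv⟩ := exists_localTo_of_mem_thinSets hT hval hβ hE
      (mem_thinSets_of_mem_simpleSets hmem hne hne')
    exact ⟨v, hv.mono (le_max_left _ _)⟩
  · obtain ⟨F, hF, hnear, hFab⟩ := hsep _ (hn p q) a ha b hb
    have hloc := NearEnds.localTo hT hβ hE hnear ⟨a, ha⟩ ⟨b, hb⟩ (localTo_endShadow hT p q)
    exact ⟨F, hF, hloc.mono (le_max_right _ _), hFab⟩

end SeparatingFamilies

section DualTree

variable {α : Type*} {𝓔 s t : Set (Set α)} {F U X : Set α}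

/-- A family of pairwise nested nonempty sets, closed under complements and with finite intervals.
Such a family is the set of oriented edges of a tree, in which complementation reverses edges. -/
structure NestedFamily (𝓔 : Set (Set α)) : Prop where
  nonempty : ∀ E ∈ 𝓔, E.Nonempty
  compl_mem : ∀ E ∈ 𝓔, Eᶜ ∈ 𝓔
  not_crosses : ∀ E ∈ 𝓔, ∀ F ∈ 𝓔, ¬ Crosses E F
  finite_between : ∀ E ∈ 𝓔, ∀ F ∈ 𝓔, (𝓔 ∩ Set.Icc E F).Finite

/-- A consistent choice of one set from each complementary pair of `𝓔`. -/
structure IsOrientation (𝓔 s : Set (Set α)) : Prop where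
  subset : s ⊆ 𝓔
  compl_mem_iff : ∀ X ∈ 𝓔, (Xᶜ ∈ s ↔ X ∉ s)
  mem_of_subset : ∀ X ∈ s, ∀ Y ∈ 𝓔, X ⊆ Y → Y ∈ s

theorem IsOrientation.compl_notMem (hs : IsOrientation 𝓔 s) (h : X ∈ s) : Xᶜ ∉ s :=
  fun hc ↦ (hs.compl_mem_iff X (hs.subset h)).1 hc h

theorem IsOrientation.eq_of_subset (hs : IsOrientation 𝓔 s) (ht : IsOrientation 𝓔 t)
    (h : s ⊆ t) : s = t := by
  refine h.antisymm fun X hX ↦ by_contra fun hXs ↦ ?_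
  exact ht.compl_notMem hX (h ((hs.compl_mem_iff X (ht.subset hX)).2 hXs))

/-- The orientation in which `U` is minimal; it is the vertex of the dual tree from which the
oriented edge `U` issues. -/
def orientationAt (𝓔 : Set (Set α)) (U : Set α) : Set (Set α) := {X ∈ 𝓔 | U ⊆ X ∨ Uᶜ ⊂ X}

theorem self_mem_orientationAt (hU : U ∈ 𝓔) : U ∈ orientationAt 𝓔 U := ⟨hU, .inl subset_rfl⟩

namespace NestedFamily

theorem not_subset_compl (hN : NestedFamily 𝓔) (hU : U ∈ 𝓔) : ¬ U ⊆ Uᶜ := fun h ↦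
  let ⟨_, ha⟩ := hN.nonempty U hU
  h ha ha

theorem isOrientation_orientationAt (hN : NestedFamily 𝓔) (hU : U ∈ 𝓔) :
    IsOrientation 𝓔 (orientationAt 𝓔 U) where
  subset X h := h.1
  compl_mem_iff X hX := by
    constructor
    · rintro ⟨-, h | h⟩ ⟨-, h' | h'⟩
      · exact hN.not_subset_compl hU (h.trans (Set.compl_subset_compl.2 h'))
      · exact h'.2 (Set.subset_compl_comm.1 h)
      · exact h.2 (Set.compl_subset_compl.2 h')
      · refine hN.not_subset_compl (hN.compl_mem U hU) ?_
        exact h.1.trans (Set.compl_subset_compl.2 h'.1)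
    · intro h
      have hUX : ¬ U ⊆ X := fun h' ↦ h ⟨hX, .inl h'⟩
      have hUX' : ¬ Uᶜ ⊂ X := fun h' ↦ h ⟨hX, .inr h'⟩
      refine ⟨hN.compl_mem X hX, ?_⟩
      rcases not_crosses_iff.1 (hN.not_crosses U hU X hX) with h | h | h | h
      · exact (hUX h).elim
      · exact .inl h
      · exact .inl (compl_eq_comm.1 (h.eq_of_not_ssubset hUX')).ge
      · exact .inr (h.ssubset_of_ne fun heq ↦ hUX (compl_injective heq).le)
  mem_of_subset := fun X ⟨_, h⟩ Y hY hXY ↦ ⟨hY, h.imp (·.trans hXY) (·.trans_subset hXY)⟩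

theorem eq_orientationAt (hN : NestedFamily 𝓔) (hs : IsOrientation 𝓔 s)
    (hF : Minimal (· ∈ s) F) : s = orientationAt 𝓔 F := by
  refine ((hN.isOrientation_orientationAt (hs.subset hF.prop)).eq_of_subset hs ?_).symm
  rintro X ⟨hX, h | h⟩
  · exact hs.mem_of_subset F hF.prop X hX h
  · by_contra hXs
    have hle := hF.le_of_le ((hs.compl_mem_iff X hX).2 hXs) (Set.compl_subset_comm.1 h.1)
    exact h.2 (Set.subset_compl_comm.1 hle)

theorem mem_orientationAt_compl (hN : NestedFamily 𝓔) (hF : F ∈ 𝓔) :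
    X ∈ orientationAt 𝓔 Fᶜ ↔ X ∈ orientationAt 𝓔 F ∧ X ≠ F ∨ X = Fᶜ := by
  constructor
  · rintro ⟨hX, h | h⟩
    · refine or_iff_not_imp_right.2 fun hne ↦ ⟨⟨hX, .inr (h.ssubset_of_ne (Ne.symm hne))⟩, ?_⟩
      rintro rfl
      exact hN.not_subset_compl (hN.compl_mem X hF) (by rwa [compl_compl])
    · rw [compl_compl] at h
      exact .inl ⟨⟨hX, .inl h.1⟩, h.ne'⟩
  · rintro (⟨⟨hX, h | h⟩, hne⟩ | rfl)
    · exact ⟨hX, .inr (by rw [compl_compl]; exact h.ssubset_of_ne hne.symm)⟩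
    · exact ⟨hX, .inl h.1⟩
    · exact self_mem_orientationAt (hN.compl_mem F hF)

theorem orientationAt_sdiff_subset (hN : NestedFamily 𝓔) (hF : F ∈ 𝓔) :
    orientationAt 𝓔 U \ orientationAt 𝓔 F ⊆
      (𝓔 ∩ Set.Icc U F ∪ 𝓔 ∩ Set.Icc U Fᶜ) ∪ (𝓔 ∩ Set.Icc Uᶜ F ∪ 𝓔 ∩ Set.Icc Uᶜ Fᶜ) := by
  rintro X ⟨⟨hX, h⟩, hXF⟩
  have hle : X ⊆ F ∨ X ⊆ Fᶜ := by
    rcases ((hN.isOrientation_orientationAt hF).compl_mem_iff X hX).2 hXF with ⟨-, h' | h'⟩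
    exacts [.inr (Set.subset_compl_comm.1 h'), .inl (Set.compl_subset_compl.1 h'.1)]
  rcases h with h | ⟨h, -⟩ <;> rcases hle with hle | hle
  exacts [.inl (.inl ⟨hX, h, hle⟩), .inl (.inr ⟨hX, h, hle⟩), .inr (.inl ⟨hX, h, hle⟩),
    .inr (.inr ⟨hX, h, hle⟩)]

theorem finite_orientationAt_sdiff (hN : NestedFamily 𝓔) (hU : U ∈ 𝓔) (hF : F ∈ 𝓔) :
    (orientationAt 𝓔 U \ orientationAt 𝓔 F).Finite := by
  have hUc := hN.compl_mem U hU
  have hFc := hN.compl_mem F hF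
  exact (((hN.finite_between U hU F hF).union (hN.finite_between U hU _ hFc)).union
    ((hN.finite_between _ hUc F hF).union (hN.finite_between _ hUc _ hFc))).subset
      (hN.orientationAt_sdiff_subset hF)

theorem exists_orientationAt_compl_sdiff (hN : NestedFamily 𝓔) (hs : IsOrientation 𝓔 s)
    (ht : IsOrientation 𝓔 t) (hne : s ≠ t) (hfin : (s \ t).Finite) :
    ∃ F ∈ s \ t, s = orientationAt 𝓔 F ∧ orientationAt 𝓔 Fᶜ \ t = (s \ t) \ {F} := by
  have hnonempty : (s \ t).Nonempty :=
    Set.sdiff_nonempty.2 fun h ↦ hne (hs.eq_of_subset ht h)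
  obtain ⟨F, hF⟩ := hfin.exists_minimal hnonempty
  have hF𝓔 := hs.subset hF.prop.1
  have hmin : Minimal (· ∈ s) F := ⟨hF.prop.1, fun X hX hXF ↦
    hF.2 ⟨hX, fun hXt ↦ hF.prop.2 (ht.mem_of_subset X hXt F hF𝓔 hXF)⟩ hXF⟩
  have hsF := hN.eq_orientationAt hs hmin
  refine ⟨F, hF.prop, hsF, ?_⟩
  ext X
  simp only [Set.mem_sdiff, hN.mem_orientationAt_compl hF𝓔, ← hsF, Set.mem_singleton_iff]
  constructor
  · rintro ⟨⟨hXs, hXF⟩ | rfl, hXt⟩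
    · exact ⟨⟨hXs, hXt⟩, hXF⟩
    · exact (hXt ((ht.compl_mem_iff F hF𝓔).2 hF.prop.2)).elim
  · rintro ⟨⟨hXs, hXt⟩, hXF⟩
    exact ⟨.inl ⟨hXs, hXF⟩, hXt⟩

end NestedFamily

/-- The vertices of the dual tree: the orientations of `𝓔` which have a minimal member. -/
def DualVertex (𝓔 : Set (Set α)) : Type _ := {s : Set (Set α) // ∃ U ∈ 𝓔, s = orientationAt 𝓔 U}

/-- The initial vertex of the oriented edge `U`. -/
def DualVertex.ofMem (hU : U ∈ 𝓔) : DualVertex 𝓔 := ⟨orientationAt 𝓔 U, U, hU, rfl⟩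

theorem DualVertex.isOrientation (hN : NestedFamily 𝓔) (x : DualVertex 𝓔) :
    IsOrientation 𝓔 x.1 := by
  obtain ⟨s, U, hU, rfl⟩ := x
  exact hN.isOrientation_orientationAt hU

theorem DualVertex.finite_sdiff (hN : NestedFamily 𝓔) (x y : DualVertex 𝓔) :
    (x.1 \ y.1).Finite := by
  obtain ⟨s, U, hU, rfl⟩ := x
  obtain ⟨t, F, hF, rfl⟩ := y
  exact hN.finite_orientationAt_sdiff hU hF

namespace NestedFamily

theorem notMem_orientationAt_compl (hN : NestedFamily 𝓔) (hU : U ∈ 𝓔) :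
    U ∉ orientationAt 𝓔 Uᶜ := fun h ↦ by
  have hUc := hN.compl_mem U hU
  exact (hN.isOrientation_orientationAt hUc).compl_notMem h (self_mem_orientationAt hUc)

/-- Dunwoody's dual tree of a nested family: each `U ∈ 𝓔` is an edge from the orientation in which
`U` is minimal to the one obtained by reversing `U`. -/
def dualTree (hN : NestedFamily 𝓔) : SimpleGraph (DualVertex 𝓔) where
  Adj x y := ∃ U ∈ 𝓔, x.1 = orientationAt 𝓔 U ∧ y.1 = orientationAt 𝓔 Uᶜ
  symm := ⟨fun _ _ ⟨U, hU, hx, hy⟩ ↦ ⟨Uᶜ, hN.compl_mem U hU, hy, by rwa [compl_compl]⟩⟩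
  loopless := ⟨fun _ ⟨_, hU, hx, hx'⟩ ↦
    hN.notMem_orientationAt_compl hU (hx' ▸ hx ▸ self_mem_orientationAt hU)⟩

theorem eq_orientationAt_of_adj (hN : NestedFamily 𝓔) {x y : DualVertex 𝓔}
    (h : hN.dualTree.Adj x y) (hx : U ∈ x.1) (hy : U ∉ y.1) :
    x.1 = orientationAt 𝓔 U ∧ y.1 = orientationAt 𝓔 Uᶜ := by
  obtain ⟨F, hF, hxF, hyF⟩ := h
  obtain rfl : U = F := by
    by_contra hne
    rw [hyF, hN.mem_orientationAt_compl hF, ← hxF] at hy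
    exact hy (.inl ⟨hx, hne⟩)
  exact ⟨hxF, hyF⟩

theorem exists_walk_length_eq (hN : NestedFamily 𝓔) (x y : DualVertex 𝓔) :
    ∃ w : hN.dualTree.Walk x y, w.length = (x.1 \ y.1).ncard := by
  induction hn : (x.1 \ y.1).ncard generalizing x with
  | zero =>
    rw [Set.ncard_eq_zero (x.finite_sdiff hN y), Set.sdiff_eq_empty] at hn
    obtain rfl : x = y := Subtype.ext ((x.isOrientation hN).eq_of_subset (y.isOrientation hN) hn)
    exact ⟨.nil, rfl⟩
  | succ n ih =>
    have hne : x.1 ≠ y.1 := fun h ↦ by simp [h] at hn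
    obtain ⟨F, hF, hxF, hdiff⟩ := hN.exists_orientationAt_compl_sdiff (x.isOrientation hN)
      (y.isOrientation hN) hne (x.finite_sdiff hN y)
    have hF𝓔 : F ∈ 𝓔 := (x.isOrientation hN).subset hF.1
    have hcard : (orientationAt 𝓔 Fᶜ \ y.1).ncard = n := by
      rw [hdiff, Set.ncard_sdiff_singleton_of_mem hF, hn, Nat.add_sub_cancel]
    obtain ⟨w, hw⟩ := ih (.ofMem (hN.compl_mem F hF𝓔)) hcard
    exact ⟨.cons ⟨F, hF𝓔, hxF, rfl⟩ w, congrArg (· + 1) hw⟩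

theorem ncard_sdiff_le_length (hN : NestedFamily 𝓔) {x y : DualVertex 𝓔}
    (w : hN.dualTree.Walk x y) : (x.1 \ y.1).ncard ≤ w.length := by
  induction w with
  | nil => simp
  | @cons x x' y h w ih =>
    obtain ⟨F, hF, hx, hx'⟩ := h
    have hsub : x.1 \ y.1 ⊆ insert F (x'.1 \ y.1) := by
      rintro X ⟨hXx, hXy⟩
      refine or_iff_not_imp_left.2 fun hne ↦ ⟨?_, hXy⟩
      rw [hx', hN.mem_orientationAt_compl hF, ← hx]
      exact .inl ⟨hXx, hne⟩
    calc (x.1 \ y.1).ncard ≤ (insert F (x'.1 \ y.1)).ncard :=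
          Set.ncard_le_ncard hsub ((x'.finite_sdiff hN y).insert F)
      _ ≤ (x'.1 \ y.1).ncard + 1 := Set.ncard_insert_le _ _
      _ ≤ w.length + 1 := Nat.add_le_add_right ih 1

theorem dist_dualTree (hN : NestedFamily 𝓔) (x y : DualVertex 𝓔) :
    hN.dualTree.dist x y = (x.1 \ y.1).ncard := by
  obtain ⟨w, hw⟩ := hN.exists_walk_length_eq x y
  obtain ⟨w', hw'⟩ := w.reachable.exists_walk_length_eq_dist
  exact le_antisymm (hw ▸ dist_le w) (hw' ▸ hN.ncard_sdiff_le_length w')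

theorem mem_of_walk_deleteEdges (hN : NestedFamily 𝓔) {x y : DualVertex 𝓔}
    (hx : x.1 = orientationAt 𝓔 U) (hy : y.1 = orientationAt 𝓔 Uᶜ) {a b : DualVertex 𝓔}
    (w : (hN.dualTree.deleteEdges {s(x, y)}).Walk a b) (ha : U ∈ a.1) : U ∈ b.1 := by
  induction w with
  | nil => exact ha
  | @cons a a' b h w ih =>
    refine ih (by_contra fun ha' ↦ ?_)
    rw [deleteEdges_adj] at h
    obtain ⟨hax, hay⟩ := hN.eq_orientationAt_of_adj h.1 ha ha'
    obtain rfl : a = x := Subtype.ext (hax.trans hx.symm)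
    obtain rfl : a' = y := Subtype.ext (hay.trans hy.symm)
    exact h.2 rfl

theorem isTree_dualTree (hN : NestedFamily 𝓔) (hne : 𝓔.Nonempty) : hN.dualTree.IsTree := by
  obtain ⟨U, hU⟩ := hne
  have : Nonempty (DualVertex 𝓔) := ⟨.ofMem hU⟩
  refine ⟨⟨fun x y ↦ (hN.exists_walk_length_eq x y).choose.reachable⟩, ?_⟩
  refine isAcyclic_iff_forall_adj_isBridge.2 fun x y ⟨U, hU, hx, hy⟩ ↦ isBridge_iff.2 ?_
  rintro ⟨w⟩
  have hUy := hN.mem_of_walk_deleteEdges hx hy w (hx ▸ self_mem_orientationAt hU)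
  exact hN.notMem_orientationAt_compl hU (hy ▸ hUy)

end NestedFamily

variable {G : Type*} [Group G] [MulAction G α]

theorem smul_orientationAt (h𝓔 : ∀ g : G, ∀ E ∈ 𝓔, g • E ∈ 𝓔) (g : G) (U : Set α) :
    g • orientationAt 𝓔 U = orientationAt 𝓔 (g • U) := by
  have hsub (g : G) (U : Set α) : g • orientationAt 𝓔 U ⊆ orientationAt 𝓔 (g • U) := by
    rintro _ ⟨X, ⟨hX, h⟩, rfl⟩
    refine ⟨h𝓔 g X hX, ?_⟩
    rwa [← Set.smul_set_compl, Set.smul_set_subset_smul_set_iff, ssubset_iff_subset_not_subset,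
      Set.smul_set_subset_smul_set_iff, Set.smul_set_subset_smul_set_iff]
  refine (hsub g U).antisymm ?_
  rw [Set.subset_smul_set_iff]
  simpa only [inv_smul_smul] using hsub g⁻¹ (g • U)

/-- The action on orientations induced by an action that preserves `𝓔`. -/
@[reducible]
def DualVertex.mulAction (h𝓔 : ∀ g : G, ∀ E ∈ 𝓔, g • E ∈ 𝓔) : MulAction G (DualVertex 𝓔) where
  smul g x := ⟨g • x.1, by
    obtain ⟨s, U, hU, rfl⟩ := x
    exact ⟨g • U, h𝓔 g U hU, smul_orientationAt h𝓔 g U⟩⟩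
  one_smul x := Subtype.ext (one_smul G x.1)
  mul_smul g h x := Subtype.ext (mul_smul g h x.1)

theorem NestedFamily.adj_smul_iff (hN : NestedFamily 𝓔) (h𝓔 : ∀ g : G, ∀ E ∈ 𝓔, g • E ∈ 𝓔) (g : G)
    (x y : DualVertex 𝓔) : letI := DualVertex.mulAction h𝓔
    hN.dualTree.Adj (g • x) (g • y) ↔ hN.dualTree.Adj x y := by
  let := DualVertex.mulAction h𝓔
  have hadj (g : G) {x y : DualVertex 𝓔} :
      hN.dualTree.Adj x y → hN.dualTree.Adj (g • x) (g • y) := by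
    rintro ⟨U, hU, hx, hy⟩
    refine ⟨g • U, h𝓔 g U hU, ?_, ?_⟩
    · exact (congrArg (g • ·) hx).trans (smul_orientationAt h𝓔 g U)
    · rw [← Set.smul_set_compl]
      exact (congrArg (g • ·) hy).trans (smul_orientationAt h𝓔 g Uᶜ)
  exact ⟨fun h ↦ by simpa only [inv_smul_smul] using hadj g⁻¹ h, hadj g⟩

end DualTree

section DistanceEstimates

variable {V : Type*} {T : SimpleGraph V} {β R r : ℕ} {𝓔 : Set (Set (TreeEnd T))}
  {U F : Set (TreeEnd T)} {v w x y : V}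

theorem finite_and_ncard_setOf_mem_shadow_le (hT : T.IsTree) (v w : V) :
    {m | w ∈ shadow T v m}.Finite ∧ {m | w ∈ shadow T v m}.ncard ≤ T.dist v w + 1 := by
  have hinj : Set.InjOn (T.dist v) {m | w ∈ shadow T v m} :=
    fun m hm m' hm' ↦ eq_of_mem_shadow_of_dist_eq hT hm hm'
  have himage : T.dist v '' {m | w ∈ shadow T v m} ⊆ Set.Iio (T.dist v w + 1) := by
    rintro _ ⟨m, hm, rfl⟩
    rw [Set.mem_ofPred_eq, mem_shadow] at hm
    exact Set.mem_Iio.2 (by omega)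
  refine ⟨((Set.finite_Iio _).subset himage).of_finite_image hinj, ?_⟩
  rw [← hinj.ncard_image]
  exact (Set.ncard_le_ncard himage).trans (by simp [Set.ncard_eq_toFinset_card'])

namespace SeparatingFamily

theorem exists_ncard_between_le (h : SeparatingFamily T R 𝓔) (hT : T.IsTree)
    (hval : BoundedValence T) :
    ∃ N, ∀ U ∈ 𝓔, ∀ F ∈ 𝓔, ∀ v w, LocalTo T U v R → LocalTo T F w R →
      (𝓔 ∩ Set.Icc U F).Finite ∧ (𝓔 ∩ Set.Icc U F).ncard ≤ (T.dist v w + 1) * N := by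
  obtain ⟨N, hN⟩ := exists_ncard_localTo_le hT hval (3 * R + 1)
  refine ⟨N, fun U hU F hF v w hUv hFw ↦ ?_⟩
  obtain ⟨hfin, hcard⟩ := finite_and_ncard_setOf_mem_shadow_le hT v w
  have hsub : 𝓔 ∩ Set.Icc U F ⊆ ⋃ m ∈ hfin.toFinset, {X | LocalTo T X m (3 * R + 1)} := by
    rintro X ⟨hX, hUX, hXF⟩
    obtain ⟨y, hXy⟩ := h.exists_localTo X hX
    obtain ⟨m, hwm, hXm⟩ := LocalTo.exists_localTo_between hT hUX hXF (h.nonempty U hU)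
      (h.nonempty _ (h.compl_mem F hF)) hUv hFw hXy
    exact Set.mem_biUnion (hfin.mem_toFinset.2 hwm) hXm
  have hfin' := hfin.toFinset.finite_toSet.biUnion fun m _ ↦ (hN m).1
  refine ⟨hfin'.subset hsub, ?_⟩
  calc (𝓔 ∩ Set.Icc U F).ncard ≤ _ := Set.ncard_le_ncard hsub hfin'
    _ ≤ ∑ m ∈ hfin.toFinset, _ := Finset.set_ncard_biUnion_le _ _
    _ ≤ hfin.toFinset.card * N := Finset.sum_le_card_nsmul _ _ _ fun m _ ↦ (hN m).2
    _ ≤ (T.dist v w + 1) * N :=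
      Nat.mul_le_mul_right _ ((Set.ncard_eq_toFinset_card _ hfin).symm.trans_le hcard)

theorem nestedFamily (h : SeparatingFamily T R 𝓔) (hT : T.IsTree) (hval : BoundedValence T) :
    NestedFamily 𝓔 where
  nonempty := h.nonempty
  compl_mem := h.compl_mem
  not_crosses := h.not_crosses
  finite_between E hE F hF := by
    obtain ⟨N, hN⟩ := h.exists_ncard_between_le hT hval
    obtain ⟨v, hv⟩ := h.exists_localTo E hE
    obtain ⟨w, hw⟩ := h.exists_localTo F hF
    exact (hN E hE F hF v w hv hw).1

theorem exists_ncard_orientationAt_sdiff_le (h : SeparatingFamily T R 𝓔) (hT : T.IsTree)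
    (hval : BoundedValence T) :
    ∃ N, ∀ U ∈ 𝓔, ∀ F ∈ 𝓔, ∀ v w, LocalTo T U v R → LocalTo T F w R →
      (orientationAt 𝓔 U \ orientationAt 𝓔 F).ncard ≤ N * T.dist v w + N := by
  obtain ⟨N, hN⟩ := h.exists_ncard_between_le hT hval
  refine ⟨4 * N, fun U hU F hF v w hUv hFw ↦ ?_⟩
  have hUc := h.compl_mem U hU
  have hFc := h.compl_mem F hF
  obtain ⟨hfin₁, hle₁⟩ := hN U hU F hF v w hUv hFw
  obtain ⟨hfin₂, hle₂⟩ := hN U hU _ hFc v w hUv hFw.compl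
  obtain ⟨hfin₃, hle₃⟩ := hN _ hUc F hF v w hUv.compl hFw
  obtain ⟨hfin₄, hle₄⟩ := hN _ hUc _ hFc v w hUv.compl hFw.compl
  calc (orientationAt 𝓔 U \ orientationAt 𝓔 F).ncard ≤ _ :=
        Set.ncard_le_ncard ((h.nestedFamily hT hval).orientationAt_sdiff_subset hF)
          ((hfin₁.union hfin₂).union (hfin₃.union hfin₄))
    _ ≤ _ := (Set.ncard_union_le _ _).trans
      (Nat.add_le_add (Set.ncard_union_le _ _) (Set.ncard_union_le _ _))
    _ ≤ _ := Nat.add_le_add (Nat.add_le_add hle₁ hle₂) (Nat.add_le_add hle₃ hle₄)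
    _ = 4 * N * T.dist v w + 4 * N := by ring

theorem exists_separating_of_mem_endShadow (h : SeparatingFamily T R 𝓔) (hT : T.IsTree) {q : V}
    (hne : v ≠ q) {a b : TreeEnd T} (ha : a ∈ endShadow T v q) (hb : b ∉ endShadow T v q) :
    ∃ E ∈ 𝓔, LocalTo T E q R ∧ ¬ (a ∈ E ↔ b ∈ E) := by
  obtain ⟨p, hp⟩ := exists_isParent hT.connected hne
  rw [hp.endShadow_eq hT] at ha hb
  exact h.exists_separating p q hp.adj a ha b hb

theorem exists_mem_Ioo_compl_endShadow (h : SeparatingFamily T R 𝓔) (hT : T.IsTree)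
    (hβ : BranchingWithin T β) (hy : y ∈ shadow T v x) (hxy : 4 * β + 2 * R + 5 ≤ T.dist x y) :
    ∃ E ∈ 𝓔, E ∈ Set.Ioo (endShadow T v x)ᶜ (endShadow T v y)ᶜ := by
  have hvy := mem_shadow.1 hy
  have exists_mid (t : ℕ) (ht : t ≤ T.dist x y) :
      ∃ z, T.dist v z = T.dist v x + t ∧ y ∈ shadow T v z :=
    exists_dist_eq_mem_shadow hT.connected (by omega)
  obtain ⟨x', hx'd, hx'⟩ := exists_mid (2 * β + 2) (by omega)
  obtain ⟨q, hqd, hq⟩ := exists_mid (2 * β + 2 + R) (by omega)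
  obtain ⟨y', hy'd, hy'⟩ := exists_mid (2 * β + 2 + (2 * R + 1)) (by omega)
  have hxx' := mem_shadow_of_dist_le hT hy hx' (by omega)
  have hx'q := mem_shadow_of_dist_le hT hx' hq (by omega)
  have hqy' := mem_shadow_of_dist_le hT hq hy' (by omega)
  have hdxx' := mem_shadow.1 hxx'
  have hdx'q := mem_shadow.1 hx'q
  have hdqy' := mem_shadow.1 hqy'
  have hdy'y := mem_shadow.1 hy'
  obtain ⟨b, hbx, hbx'⟩ := exists_mem_endShadow_notMem_endShadow hT hβ hxx' (by omega)
  obtain ⟨a, hay', hay⟩ := exists_mem_endShadow_notMem_endShadow hT hβ hy' (by omega)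
  have ne_of_pos {z : V} (hz : 0 < T.dist v z) : v ≠ z := by
    rintro rfl
    simp at hz
  obtain ⟨E, hE, hEq, hsep⟩ := h.exists_separating_of_mem_endShadow hT (ne_of_pos (by omega))
    (endShadow_subset_endShadow hT hqy' hay') fun hb ↦ hbx' (endShadow_subset_endShadow hT hx'q hb)
  have hdec : Decides (endShadow T v x')ᶜ E :=
    hEq.decides_compl hT (ne_of_pos (by omega)) hx'q (by rw [T.dist_comm]; omega)
  have hdec' : Decides (endShadow T v y') E := by
    have hqy'ne : q ≠ y' := by
      rintro rfl
      omega
    rw [endShadow, shadow_eq_shadow hT hqy'ne hqy']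
    exact hEq y' (by omega)
  have mem_Ioo {E : Set (TreeEnd T)} (hl : (endShadow T v x')ᶜ ⊆ E) (hr : endShadow T v y' ⊆ Eᶜ) :
      E ∈ Set.Ioo (endShadow T v x)ᶜ (endShadow T v y)ᶜ :=
    ⟨⟨(Set.compl_subset_compl.2 (endShadow_subset_endShadow hT hxx')).trans hl,
      fun hle ↦ hle (hl hbx') hbx⟩,
    ⟨Set.subset_compl_comm.1 ((endShadow_subset_endShadow hT hy').trans hr),
      fun hle ↦ hr hay' (hle hay)⟩⟩
  rcases hdec with hl | hl <;> rcases hdec' with hr | hr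
  · exact (hsep (iff_of_true (hr hay') (hl hbx'))).elim
  · exact ⟨E, hE, mem_Ioo hl hr⟩
  · exact ⟨Eᶜ, h.compl_mem E hE, mem_Ioo hl (by rwa [compl_compl])⟩
  · exact (hsep (iff_of_false (hr hay') (hl hbx'))).elim

theorem le_encard_Ioo_compl_endShadow (h : SeparatingFamily T R 𝓔) (hT : T.IsTree)
    (hβ : BranchingWithin T β) {n : ℕ} (hy : y ∈ shadow T v x)
    (hxy : n * (4 * β + 2 * R + 5) ≤ T.dist x y) :
    n ≤ (𝓔 ∩ Set.Ioo (endShadow T v x)ᶜ (endShadow T v y)ᶜ).encard := by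
  induction n generalizing y with
  | zero => simp
  | succ n ih =>
    have hvy := mem_shadow.1 hy
    rw [Nat.succ_mul] at hxy
    obtain ⟨y', hy'd, hy'⟩ := exists_dist_eq_mem_shadow hT.connected (v := v) (z := y)
      (t := T.dist v x + n * (4 * β + 2 * R + 5)) (by omega)
    have hxy' := mem_shadow_of_dist_le hT hy hy' (by omega)
    have hdxy' := mem_shadow.1 hxy'
    have hdy'y := mem_shadow.1 hy'
    obtain ⟨E, hE, hlE, hEr⟩ :=
      h.exists_mem_Ioo_compl_endShadow hT hβ hy' (by omega)
    have hE' : E ∉ 𝓔 ∩ Set.Ioo (endShadow T v x)ᶜ (endShadow T v y')ᶜ :=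
      fun hmem ↦ lt_asymm hlE hmem.2.2
    have hsub : insert E (𝓔 ∩ Set.Ioo (endShadow T v x)ᶜ (endShadow T v y')ᶜ) ⊆
        𝓔 ∩ Set.Ioo (endShadow T v x)ᶜ (endShadow T v y)ᶜ :=
      Set.insert_subset
        ⟨hE, (Set.compl_subset_compl.2 (endShadow_subset_endShadow hT hxy')).trans_lt hlE, hEr⟩
        fun X hX ↦ ⟨hX.1, hX.2.1, hX.2.2.trans (hlE.trans hEr)⟩
    refine le_trans ?_ (Set.encard_le_encard hsub)
    rw [Set.encard_insert_of_notMem hE', Nat.cast_succ]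
    exact add_le_add_left (ih hxy' (by omega)) 1

theorem inter_Ioo_subset_orientationAt_sdiff (h : SeparatingFamily T R 𝓔) (hT : T.IsTree)
    (hval : BoundedValence T) (hF : F ∈ 𝓔) (hU : Decides (endShadow T v x) U)
    (hF' : Decides (endShadow T v y)ᶜ F) :
    𝓔 ∩ Set.Ioo (endShadow T v x)ᶜ (endShadow T v y)ᶜ ⊆
      orientationAt 𝓔 U \ orientationAt 𝓔 F := by
  rintro E ⟨hE, hlE, hEr⟩
  refine ⟨⟨hE, ?_⟩, fun hmem ↦ ?_⟩
  · exact hU.symm.imp (fun hxU ↦ (Set.subset_compl_comm.1 hxU).trans hlE.1)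
      fun hxU ↦ (Set.compl_subset_compl.2 hxU).trans_ssubset hlE
  · have hori := (h.nestedFamily hT hval).isOrientation_orientationAt hF
    refine hori.compl_notMem hmem ⟨h.compl_mem E hE, ?_⟩
    exact hF'.symm.imp (fun hyF ↦ Set.subset_compl_comm.1 (hEr.1.trans hyF))
      fun hyF ↦ compl_lt_compl_iff_lt.2 (hEr.trans_le hyF)

theorem dist_le_of_localTo (h : SeparatingFamily T R 𝓔) (hT : T.IsTree) (hval : BoundedValence T)
    (hβ : BranchingWithin T β) (hU : U ∈ 𝓔) (hF : F ∈ 𝓔) (hUv : LocalTo T U v r)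
    (hFw : LocalTo T F w r) :
    T.dist v w ≤
      2 * r + ((orientationAt 𝓔 U \ orientationAt 𝓔 F).ncard + 1) * (4 * β + 2 * R + 5) := by
  set n := (orientationAt 𝓔 U \ orientationAt 𝓔 F).ncard with hn
  by_contra! hd
  obtain ⟨x, hxd, hx⟩ := exists_dist_eq_mem_shadow hT.connected (v := v) (z := w) (t := r + 1)
    (by omega)
  obtain ⟨y, hyd, hy⟩ := exists_dist_eq_mem_shadow hT.connected (v := v) (z := w)
    (t := T.dist v w - r) (by omega)
  have hxy := mem_shadow_of_dist_le hT hx hy (by omega)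
  have hdxy := mem_shadow.1 hxy
  have hdyw := mem_shadow.1 hy
  have hvy : v ≠ y := by
    rintro rfl
    rw [dist_self] at hyd
    omega
  have hsub := h.inter_Ioo_subset_orientationAt_sdiff hT hval hF (hUv x (by omega))
    (hFw.decides_compl hT hvy hy (by rw [T.dist_comm]; omega))
  have hle := (h.le_encard_Ioo_compl_endShadow hT hβ (n := n + 1) hxy (by omega)).trans
    (Set.encard_le_encard hsub)
  rw [← ((h.nestedFamily hT hval).finite_orientationAt_sdiff hU hF).cast_ncard_eq, ← hn] at hle
  exact absurd (Nat.cast_le.1 hle) (by omega)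

theorem exists_localTo_near (h : SeparatingFamily T R 𝓔) (hT : T.IsTree)
    (hβ : BranchingWithin T β) (y : V) :
    ∃ E ∈ 𝓔, ∃ q, LocalTo T E q R ∧ T.dist y q ≤ β + 1 := by
  obtain ⟨w, hyw, n, hn⟩ := hβ y
  have hw (i : Fin 3) : T.dist w (n i) = 1 := dist_eq_one_iff_adj.2 (hn.adj i)
  have hend (i : Fin 3) : (endShadow T w (n i)).Nonempty :=
    endsIn_nonempty hT.connected (boundedCoboundary_shadow hT w (n i)) (hn.infinite_shadow i)
  obtain ⟨a, ha⟩ := hend 0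
  obtain ⟨b, hb⟩ := hend 1
  have hb' : b ∉ endShadow T w (n 0) := fun hb' ↦ by
    have heq := eq_of_mem_endShadow_of_dist_eq hT hb' hb ((hw 0).trans (hw 1).symm)
    exact absurd (hn.injective heq) (by decide)
  obtain ⟨E, hE, hEq, -⟩ := h.exists_separating w (n 0) (hn.adj 0) a ha b hb'
  have hyn : T.dist y (n 0) ≤ T.dist y w + T.dist w (n 0) := hT.connected.dist_triangle
  exact ⟨E, hE, n 0, hEq, by rw [hw] at hyn; omega⟩

end SeparatingFamily

end DistanceEstimates

section QuasiIsometries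

variable {V V' : Type*} {T : SimpleGraph V} {T' : SimpleGraph V'} {f : V' → V} {M : ℕ}

theorem mem_shadow_of_mem_support (hconn : T.Connected) {a b c : V} {p : T.Walk a b}
    (hp : p.length = T.dist a b) (hc : c ∈ p.support) : b ∈ shadow T a c := by
  classical
  have hlen := congrArg Walk.length (p.take_spec hc)
  rw [Walk.length_append] at hlen
  have hac : T.dist a c ≤ (p.takeUntil c hc).length := dist_le _
  have hcb : T.dist c b ≤ (p.dropUntil c hc).length := dist_le _
  have hab : T.dist a b ≤ T.dist a c + T.dist c b := hconn.dist_triangle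
  rw [mem_shadow]
  omega

theorem reachable_of_dist_lt (hconn : T.Connected) {m a b : V} (h : T.dist a b < T.dist m a)
    (ha : a ∈ ({m}ᶜ : Set V)) (hb : b ∈ ({m}ᶜ : Set V)) :
    (T.induce ({m}ᶜ : Set V)).Reachable ⟨a, ha⟩ ⟨b, hb⟩ := by
  obtain ⟨p, hp⟩ := hconn.exists_walk_length_eq_dist a b
  refine ⟨p.induce _ fun c hc ↦ ?_⟩
  rintro rfl
  have hab := mem_shadow.1 (mem_shadow_of_mem_support hconn hp hc)
  rw [T.dist_comm (u := c)] at h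
  omega

theorem notMem_shadow_of_adj (hconn : T.Connected) {m p a b : V} (hmp : T.Adj m p)
    (ha : a ∈ shadow T m p) (hb : b ∈ shadow T m p) : b ∉ shadow T a m := by
  have hab : T.dist a b ≤ T.dist a p + T.dist p b := hconn.dist_triangle
  rw [mem_shadow] at *
  rw [dist_eq_one_iff_adj.2 hmp] at ha hb
  rw [T.dist_comm (u := a) (v := m)]
  rw [T.dist_comm (u := a) (v := p)] at hab
  omega

theorem not_reachable_of_mem_shadow (hT : T.IsTree) {m : V} {a b : ({m}ᶜ : Set V)}
    (h : (b : V) ∈ shadow T a m) : ¬ (T.induce ({m}ᶜ : Set V)).Reachable a b := fun hab ↦ by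
  have hpos : 0 < T.dist m a := hT.connected.pos_dist_of_ne (Ne.symm a.2)
  obtain ⟨p, hmp, hp⟩ := exists_dist_eq_mem_shadow hT.connected hpos
  have hadj := dist_eq_one_iff_adj.1 hmp
  exact notMem_shadow_of_adj hT.connected hadj hp ((mem_shadow_iff_of_reachable hT hadj hab).1 hp) h

theorem mem_shadow_or_mem_shadow (hT : T.IsTree) {s m a b : V} (h : b ∈ shadow T a m) :
    a ∈ shadow T s m ∨ b ∈ shadow T s m := by
  rcases eq_or_ne s m with rfl | hne
  · exact .inl (shadow_self (T := T) s ▸ Set.mem_univ a)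
  obtain ⟨p, hp⟩ := exists_isParent hT.connected hne
  rw [hp.shadow_eq hT]
  by_contra! hab
  rw [← Set.mem_compl_iff, ← Set.mem_compl_iff, compl_shadow hT hp.adj] at hab
  exact notMem_shadow_of_adj hT.connected hp.adj.symm hab.1 hab.2 h

theorem exists_dist_le_of_forall_exists (hT : T.IsTree) {b : Fin 3 → V} {s : V} {N : ℕ}
    (h : ∀ i j, i ≠ j → ∃ c, b j ∈ shadow T (b i) c ∧ T.dist s c ≤ N) :
    ∃ m, T.dist s m ≤ N ∧ ∀ i j, i ≠ j → b j ∈ shadow T (b i) m := by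
  obtain ⟨m, h₀₁, h₀₂, h₁₂⟩ := exists_median hT (b 0) (b 1) (b 2)
  have hm : ∀ i j, i ≠ j → b j ∈ shadow T (b i) m := by
    intro i j hij
    fin_cases i <;> fin_cases j <;>
      first | exact absurd rfl hij | assumption | exact mem_shadow_comm.1 ‹_›
  obtain ⟨i, j, hij, hi, hj⟩ : ∃ i j, i ≠ j ∧ b i ∈ shadow T s m ∧ b j ∈ shadow T s m := by
    rcases mem_shadow_or_mem_shadow hT (s := s) h₀₁ with h₀ | h₁
    · exact (mem_shadow_or_mem_shadow hT (s := s) h₁₂).elim (⟨0, 1, by decide, h₀, ·⟩)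
        (⟨0, 2, by decide, h₀, ·⟩)
    · exact (mem_shadow_or_mem_shadow hT (s := s) h₀₂).elim (⟨0, 1, by decide, ·, h₁⟩)
        (⟨1, 2, by decide, h₁, ·⟩)
  obtain ⟨c, hc, hsc⟩ := h i j hij
  refine ⟨m, ?_, hm⟩
  have hci : T.dist s (b i) ≤ T.dist s c + T.dist c (b i) := hT.connected.dist_triangle
  have hcj : T.dist s (b j) ≤ T.dist s c + T.dist c (b j) := hT.connected.dist_triangle
  have hmij : T.dist (b i) (b j) ≤ T.dist (b i) m + T.dist m (b j) := hT.connected.dist_triangle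
  rw [mem_shadow, T.dist_comm (u := b i) (v := c)] at hc
  rw [T.dist_comm (u := b i) (v := m)] at hmij
  rw [mem_shadow] at hi hj
  omega

theorem exists_components_of_steps (hT : T.IsTree) {m : V} {x : Fin 3 → ℕ → V}
    (hstep : ∀ i t, T.dist (x i t) (x i (t + 1)) < T.dist m (x i t))
    (hunbounded : ∀ i R, ∃ t, R ≤ T.dist m (x i t))
    (hm : ∀ i j, i ≠ j → x j 0 ∈ shadow T (x i 0) m) :
    ∃ c : Fin 3 → (T.induce ({m}ᶜ : Set V)).ConnectedComponent, Function.Injective c ∧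
      ∀ (i : Fin 3) (R : ℕ), ∃ u : ({m}ᶜ : Set V),
        (T.induce ({m}ᶜ : Set V)).connectedComponentMk u = c i ∧ R ≤ T.dist m u := by
  have hne (i : Fin 3) (t : ℕ) : x i t ∈ ({m}ᶜ : Set V) := by
    intro h
    have hlt := hstep i t
    rw [Set.mem_singleton_iff.1 h, dist_self] at hlt
    omega
  have hreach (i : Fin 3) (t : ℕ) :
      (T.induce ({m}ᶜ : Set V)).Reachable ⟨x i t, hne i t⟩ ⟨x i 0, hne i 0⟩ := by
    induction t with
    | zero => rfl
    | succ t ih => exact (reachable_of_dist_lt hT.connected (hstep i t) _ _).symm.trans ih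
  refine ⟨fun i ↦ connectedComponentMk _ ⟨x i 0, hne i 0⟩, fun i j hij ↦ ?_, fun i R ↦ ?_⟩
  · by_contra hne
    exact not_reachable_of_mem_shadow hT (hm i j hne) (ConnectedComponent.exact hij)
  · obtain ⟨t, ht⟩ := hunbounded i R
    exact ⟨⟨x i t, hne i t⟩, ConnectedComponent.sound (hreach i t), ht⟩

theorem exists_ray_of_infinite_shadow (hT : T.IsTree) (hval : BoundedValence T) {w n : V}
    (hwn : T.Adj w n) (hinf : (shadow T w n).Infinite) :
    ∃ x : ℕ → V, ∀ t, x t ∈ shadow T w n ∧ T.dist w (x t) = t + 1 ∧ T.Adj (x t) (x (t + 1)) := by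
  obtain ⟨P, hP⟩ := endsIn_nonempty hT.connected (boundedCoboundary_shadow hT w n) hinf
  choose x hx hPx using fun t ↦ exists_dist_eq_mem_endShadow hT hval P w (t + 1)
  refine ⟨x, fun t ↦ ⟨?_, hx t, ?_⟩⟩
  · refine mem_shadow_of_mem_endShadow hT hP (hPx t) ?_
    rw [dist_eq_one_iff_adj.2 hwn, hx]
    omega
  · have hsucc := mem_shadow_of_mem_endShadow hT (hPx t) (hPx (t + 1)) (by rw [hx, hx]; omega)
    rw [mem_shadow, hx, hx] at hsucc
    exact dist_eq_one_iff_adj.1 (by omega)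

/-- `f` is an `(M, M)`-quasi-isometry from `T'` to `T`, with the lower bound cleared of
denominators. -/
structure QuasiIsometry (T' : SimpleGraph V') (T : SimpleGraph V) (f : V' → V) (M : ℕ) : Prop where
  dist_le : ∀ x y, T'.dist x y ≤ M * T.dist (f x) (f y) + M
  dist_map_le : ∀ x y, T.dist (f x) (f y) ≤ M * T'.dist x y + M
  exists_dist_le : ∀ v, ∃ x, T.dist (f x) v ≤ M

namespace QuasiIsometry

theorem exists_dist_le_of_mem_shadow (hf : QuasiIsometry T' T f M) (hconn : T'.Connected)
    (hT : T.IsTree) {w n : V} (hwn : T.Adj w n) {a b : V'} (ha : f a ∈ shadow T w n)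
    (hb : f b ∉ shadow T w n) : ∃ c, b ∈ shadow T' a c ∧ T.dist w (f c) ≤ 2 * M + 1 := by
  obtain ⟨p, hp⟩ := hconn.exists_walk_length_eq_dist a b
  obtain ⟨d, hd, hfst, hsnd⟩ := p.exists_boundary_dart (f ⁻¹' shadow T w n) ha hb
  refine ⟨d.fst, mem_shadow_of_mem_support hconn hp (p.dart_fst_mem_support_of_mem_darts hd), ?_⟩
  have hstep := hf.dist_map_le d.fst d.snd
  rw [dist_eq_one_iff_adj.2 d.adj] at hstep
  have hn : T.dist n (f d.fst) ≤ T.dist (f d.fst) (f d.snd) := by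
    by_contra! hlt
    exact hsnd (((coboundaryIn_shadow hT w n).mem_iff_of_dist_lt hT.connected (by omega)).1 hfst)
  rw [mem_shadow.1 hfst, dist_eq_one_iff_adj.2 hwn]
  omega

theorem dist_inverse_le (hf : QuasiIsometry T' T f M) (hconn : T.Connected) {g : V → V'}
    (hg : ∀ v, T.dist (f (g v)) v ≤ M) (v v' : V) :
    T'.dist (g v) (g v') ≤ M * (T.dist v v' + 2 * M) + M := by
  refine (hf.dist_le _ _).trans ?_
  have hgv : T.dist (f (g v)) (f (g v')) ≤ T.dist (f (g v)) v + T.dist v (f (g v')) :=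
    hconn.dist_triangle
  have hvg : T.dist v (f (g v')) ≤ T.dist v v' + T.dist v' (f (g v')) := hconn.dist_triangle
  have hv := hg v
  have hv' := hg v'
  rw [T.dist_comm] at hv'
  gcongr
  omega

theorem dist_le_dist_inverse (hf : QuasiIsometry T' T f M) (hconn : T.Connected) {g : V → V'}
    (hg : ∀ v, T.dist (f (g v)) v ≤ M) (s : V') (v : V) :
    T.dist (f s) v ≤ M * T'.dist s (g v) + 2 * M := by
  have hsv : T.dist (f s) v ≤ T.dist (f s) (f (g v)) + T.dist (f (g v)) v := hconn.dist_triangle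
  have hsg := hf.dist_map_le s (g v)
  have hv := hg v
  omega

theorem exists_dist_le_mem_shadow (hf : QuasiIsometry T' T f M) (hT' : T'.IsTree) (hT : T.IsTree)
    {w : V} {n : Fin 3 → V} (hn : IsBranching T w n) {b : Fin 3 → V'}
    (hb : ∀ i, f (b i) ∈ shadow T w (n i)) {s : V'} {β : ℕ} (hs : T.dist (f s) w ≤ β) :
    ∃ m, T'.dist s m ≤ M * (β + (2 * M + 1)) + M ∧ ∀ i j, i ≠ j → b j ∈ shadow T' (b i) m := by
  refine exists_dist_le_of_forall_exists hT' fun i j hij ↦ ?_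
  obtain ⟨c, hc, hwc⟩ := hf.exists_dist_le_of_mem_shadow hT'.connected hT (hn.adj i) (hb i)
    fun hj ↦ hij (hn.eq_of_mem_shadow hT hj (hb j))
  have hsc : T.dist (f s) (f c) ≤ T.dist (f s) w + T.dist w (f c) := hT.connected.dist_triangle
  refine ⟨c, hc, (hf.dist_le s c).trans ?_⟩
  gcongr
  omega

theorem bushy (hf : QuasiIsometry T' T f M) (hT' : T'.IsTree) (hT : T.IsTree)
    (hval : BoundedValence T) {β : ℕ} (hβ : BranchingWithin T β) : Bushy T' := by
  obtain ⟨g, hg⟩ := Classical.axiomOfChoice hf.exists_dist_le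
  set N := M * (β + (2 * M + 1)) + M
  set J := M * (1 + 2 * M) + M
  refine ⟨N, fun s ↦ ?_⟩
  obtain ⟨w, hsw, n, hn⟩ := hβ (f s)
  choose x hx hwx hadj using fun i ↦
    exists_ray_of_infinite_shadow hT hval (hn.adj i) (hn.infinite_shadow i)
  have hfar {m : V'} (hsm : T'.dist s m ≤ N) (i : Fin 3) (R : ℕ) {t : ℕ}
      (ht : M * (N + R) + β + 2 * M ≤ t) : R < T'.dist m (g (x i t)) := by
    by_contra! hle
    have hsg : T'.dist s (g (x i t)) ≤ T'.dist s m + T'.dist m (g (x i t)) :=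
      hT'.connected.dist_triangle
    have hsx := (hf.dist_le_dist_inverse hT.connected hg s (x i t)).trans
      (Nat.add_le_add_right (Nat.mul_le_mul_left M (hsg.trans (Nat.add_le_add hsm hle))) (2 * M))
    have hwt : T.dist w (x i t) ≤ T.dist w (f s) + T.dist (f s) (x i t) :=
      hT.connected.dist_triangle
    rw [hwx, T.dist_comm] at hwt
    omega
  set L := M * (N + J) + β + 2 * M + 1
  have hgx (i : Fin 3) : f (g (x i L)) ∈ shadow T w (n i) := by
    refine ((coboundaryIn_shadow hT w (n i)).mem_iff_of_dist_lt hT.connected ?_).1 (hx i L)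
    have hxi := mem_shadow.1 (hx i L)
    rw [hwx, dist_eq_one_iff_adj.2 (hn.adj i)] at hxi
    have hgx := hg (x i L)
    rw [T.dist_comm] at hgx
    omega
  obtain ⟨m, hsm, hm⟩ := hf.exists_dist_le_mem_shadow hT' hT hn hgx hsw
  refine ⟨m, hsm, exists_components_of_steps hT' (x := fun i t ↦ g (x i (L + t)))
    (fun i t ↦ ?_) (fun i R ↦ ⟨M * (N + R) + β + 2 * M, (hfar hsm i R (by omega)).le⟩) hm⟩
  calc T'.dist (g (x i (L + t))) (g (x i (L + t + 1))) ≤ J := by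
        have hstep := hf.dist_inverse_le hT.connected hg (x i (L + t)) (x i (L + t + 1))
        rwa [dist_eq_one_iff_adj.2 (hadj i (L + t))] at hstep
    _ < T'.dist m (g (x i (L + t))) := hfar hsm i J (by omega)

theorem isQI (hf : QuasiIsometry T' T f M) (hM : 1 ≤ M) :
    IsQI (M : ℝ) M (gdist T') (gdist T) f := by
  have hM' : (1 : ℝ) ≤ M := by exact_mod_cast hM
  simp only [IsQI, gdist]
  refine ⟨fun x y ↦ ?_, fun x y ↦ mod_cast hf.dist_map_le x y, fun y ↦ mod_cast hf.exists_dist_le y⟩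
  have hle : (T'.dist x y : ℝ) ≤ M * T.dist (f x) (f y) + M := mod_cast hf.dist_le x y
  have hdiv : (T'.dist x y : ℝ) / M ≤ T.dist (f x) (f y) + 1 := by
    rw [div_le_iff₀ (by linarith)]
    linarith
  linarith

end QuasiIsometry

end QuasiIsometries

section DualQuasiIsometry

variable {V G : Type*} [Group G] {T : SimpleGraph V} {A : G → V → V} {β k M R r s : ℕ}
  {φ : ℕ → ℕ} {𝓔 : Set (Set (TreeEnd T))} {v w : V} {x y : DualVertex 𝓔} {f : DualVertex 𝓔 → V}

namespace DualVertex

/-- The vertex `x` of the dual tree lies over the ball of radius `r` at `v`: it is an endpoint of an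
edge which, as a set of ends of `T`, is local to that ball. -/
def LiesOver (x : DualVertex 𝓔) (v : V) (r : ℕ) : Prop :=
  ∃ U ∈ 𝓔, x.1 = orientationAt 𝓔 U ∧ LocalTo T U v r

theorem LiesOver.mono (h : x.LiesOver v r) (hrs : r ≤ s) : x.LiesOver v s :=
  let ⟨U, hU, hx, hUv⟩ := h
  ⟨U, hU, hx, hUv.mono hrs⟩

theorem LiesOver.of_add_dist_le (hT : T.IsTree) (h : x.LiesOver v r) (hs : r + T.dist v w ≤ s) :
    x.LiesOver w s :=
  let ⟨U, hU, hx, hUv⟩ := h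
  ⟨U, hU, hx, hUv.of_add_dist_le hT hs⟩

theorem LiesOver.smul [MulAction G (TreeEnd T)] (h𝓔 : ∀ g : G, ∀ E ∈ 𝓔, g • E ∈ 𝓔)
    (hE : EndAction T A k φ) (h : x.LiesOver v r) (g : G) :
    letI := DualVertex.mulAction h𝓔
    (g • x).LiesOver (A g v) (φ r) :=
  let _ := DualVertex.mulAction h𝓔
  let ⟨U, hU, hx, hUv⟩ := h
  ⟨g • U, h𝓔 g U hU, (congrArg (g • ·) hx).trans (smul_orientationAt h𝓔 g U),
    hE.localTo_smul g hUv⟩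

theorem exists_ncard_liesOver_le (hT : T.IsTree) (hval : BoundedValence T)
    (𝓔 : Set (Set (TreeEnd T))) (r : ℕ) :
    ∃ N, ∀ v, {x : DualVertex 𝓔 | x.LiesOver v r}.Finite ∧
      {x : DualVertex 𝓔 | x.LiesOver v r}.ncard ≤ N := by
  obtain ⟨N, hN⟩ := exists_ncard_localTo_le hT hval r
  refine ⟨N, fun v ↦ ?_⟩
  obtain ⟨hfin, hcard⟩ := hN v
  have hsub : Subtype.val '' {x : DualVertex 𝓔 | x.LiesOver v r} ⊆
      orientationAt 𝓔 '' {U | LocalTo T U v r} := by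
    rintro _ ⟨x, ⟨U, -, hx, hUv⟩, rfl⟩
    exact ⟨U, hUv, hx.symm⟩
  refine ⟨((hfin.image _).subset hsub).of_finite_image Subtype.val_injective.injOn, ?_⟩
  exact (Set.ncard_image_of_injective _ Subtype.val_injective).symm.trans_le <|
    (Set.ncard_le_ncard hsub (hfin.image _)).trans ((Set.ncard_image_le hfin).trans hcard)

end DualVertex

namespace SeparatingFamily

theorem exists_liesOver (h : SeparatingFamily T R 𝓔) (x : DualVertex 𝓔) :
    ∃ v, x.LiesOver v R := by
  obtain ⟨_, U, hU, rfl⟩ := x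
  obtain ⟨v, hv⟩ := h.exists_localTo U hU
  exact ⟨v, U, hU, rfl, hv⟩

theorem dist_le_of_liesOver (h : SeparatingFamily T R 𝓔) (hT : T.IsTree) (hval : BoundedValence T)
    (hβ : BranchingWithin T β) (hx : x.LiesOver v r) (hy : y.LiesOver w r) :
    T.dist v w ≤
      2 * r + ((h.nestedFamily hT hval).dualTree.dist x y + 1) * (4 * β + 2 * R + 5) := by
  obtain ⟨U, hU, hxU, hUv⟩ := hx
  obtain ⟨F, hF, hyF, hFw⟩ := hy
  rw [NestedFamily.dist_dualTree, hxU, hyF]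
  exact h.dist_le_of_localTo hT hval hβ hU hF hUv hFw

theorem exists_quasiIsometry (h : SeparatingFamily T R 𝓔) (hT : T.IsTree) (hval : BoundedValence T)
    (hβ : BranchingWithin T β) (hf : ∀ x : DualVertex 𝓔, x.LiesOver (f x) R) :
    ∃ M, 1 ≤ M ∧ QuasiIsometry (h.nestedFamily hT hval).dualTree T f M := by
  set T' := (h.nestedFamily hT hval).dualTree
  obtain ⟨N, hN⟩ := h.exists_ncard_orientationAt_sdiff_le hT hval
  set c := 4 * β + 2 * R + 5
  refine ⟨N + 2 * R + c + β + 1, by omega, fun x y ↦ ?_, fun x y ↦ ?_, fun v ↦ ?_⟩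
  · obtain ⟨U, hU, hxU, hUx⟩ := hf x
    obtain ⟨F, hF, hyF, hFy⟩ := hf y
    calc T'.dist x y = (orientationAt 𝓔 U \ orientationAt 𝓔 F).ncard := by
          rw [NestedFamily.dist_dualTree, hxU, hyF]
      _ ≤ N * T.dist (f x) (f y) + N := hN U hU F hF _ _ hUx hFy
      _ ≤ _ := Nat.add_le_add (Nat.mul_le_mul_right _ (by omega)) (by omega)
  · calc T.dist (f x) (f y) ≤ 2 * R + (T'.dist x y + 1) * c :=
          h.dist_le_of_liesOver hT hval hβ (hf x) (hf y)
      _ = c * T'.dist x y + (2 * R + c) := by ring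
      _ ≤ _ := Nat.add_le_add (Nat.mul_le_mul_right _ (by omega)) (by omega)
  · obtain ⟨E, hE, q, hEq, hvq⟩ := h.exists_localTo_near hT hβ v
    have hq : (DualVertex.ofMem hE).LiesOver q R := ⟨E, hE, rfl, hEq⟩
    have hle := h.dist_le_of_liesOver hT hval hβ (hf (.ofMem hE)) hq
    have htri : T.dist (f (.ofMem hE)) v ≤ T.dist (f (.ofMem hE)) q + T.dist q v :=
      hT.connected.dist_triangle
    rw [dist_self] at hle
    rw [T.dist_comm] at hvq
    exact ⟨.ofMem hE, by omega⟩

theorem boundedValence_dualTree (h : SeparatingFamily T R 𝓔) (hT : T.IsTree)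
    (hval : BoundedValence T) (hf : ∀ x : DualVertex 𝓔, x.LiesOver (f x) R)
    (hM : QuasiIsometry (h.nestedFamily hT hval).dualTree T f M) :
    BoundedValence (h.nestedFamily hT hval).dualTree := by
  obtain ⟨N, hN⟩ := DualVertex.exists_ncard_liesOver_le hT hval 𝓔 (R + 2 * M)
  refine ⟨N, fun x ↦ ?_⟩
  obtain ⟨hfin, hcard⟩ := hN (f x)
  have hsub : (h.nestedFamily hT hval).dualTree.neighborSet x ⊆
      {y | y.LiesOver (f x) (R + 2 * M)} := fun y hy ↦ by
    have hyx := dist_eq_one_iff_adj.2 ((mem_neighborSet _ x y).1 hy).symm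
    have hle := hM.dist_map_le y x
    rw [hyx] at hle
    exact (hf y).of_add_dist_le hT (by omega)
  exact ⟨hfin.subset hsub, (Set.ncard_le_ncard hsub hfin).trans hcard⟩

end SeparatingFamily

theorem EndAction.exists_isometric_action [MulAction G (TreeEnd T)] (hE : EndAction T A k φ)
    (hT : T.IsTree) (hval : BoundedValence T) (hbushy : Bushy T) :
    ∃ (𝓔 : Set (Set (TreeEnd T))) (T' : SimpleGraph (DualVertex 𝓔)),
      T'.IsTree ∧ BoundedValence T' ∧ Bushy T' ∧
      ∃ ρ : G →* Equiv.Perm (DualVertex 𝓔), (∀ g x y, T'.Adj (ρ g x) (ρ g y) ↔ T'.Adj x y) ∧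
        ∃ f M, 1 ≤ M ∧ QuasiIsometry T' T f M ∧
          ∃ B, ∀ g x, T.dist (f (ρ g x)) (A g (f x)) ≤ B := by
  obtain ⟨β, hβ⟩ := exists_branchingWithin_of_bushy hT hbushy
  obtain ⟨R, 𝓔, h, h𝓔⟩ := exists_separatingFamily hT hval hβ hE
  obtain ⟨v⟩ := hT.connected.nonempty
  obtain ⟨E, hE𝓔, -⟩ := h.exists_localTo_near hT hβ v
  have hT' := (h.nestedFamily hT hval).isTree_dualTree ⟨E, hE𝓔⟩
  choose f hf using h.exists_liesOver
  obtain ⟨M, hM, hfM⟩ := h.exists_quasiIsometry hT hval hβ hf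
  let := DualVertex.mulAction h𝓔
  refine ⟨𝓔, _, hT', h.boundedValence_dualTree hT hval hf hfM, hfM.bushy hT' hT hval hβ,
    MulAction.toPermHom G (DualVertex 𝓔), (h.nestedFamily hT hval).adj_smul_iff h𝓔, f, M, hM, hfM,
    2 * max R (φ R) + (4 * β + 2 * R + 5), fun g x ↦ ?_⟩
  have hle := h.dist_le_of_liesOver hT hval hβ ((hf (g • x)).mono (le_max_left R (φ R)))
    (((hf x).smul h𝓔 hE g).mono (le_max_right R (φ R)))
  rwa [dist_self, zero_add, one_mul] at hle

theorem exists_quasiAction_of_isQI (T : SimpleGraph V) {K C B : ℝ} (hK : 1 ≤ K) (hC : 0 ≤ C)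
    (hQI : ∀ g, IsQI K C (gdist T) (gdist T) (A g)) (hid : ∀ v, gdist T (A 1 v) v ≤ B)
    (hcomp : ∀ g h v, gdist T (A (g * h) v) (A g (A h v)) ≤ B) : ∃ κ, QuasiAction T A κ := by
  obtain ⟨κ, hκ⟩ := exists_nat_ge (K + K * C + C + |B|)
  have hKC : 0 ≤ K * C := by positivity
  have hBB := le_abs_self B
  have hKκ : K ≤ κ := by linarith [abs_nonneg B]
  have hCκ : C ≤ κ := by linarith [abs_nonneg B]
  have hKCκ : K * C ≤ κ := by linarith [abs_nonneg B]
  have hBκ : B ≤ κ := by linarith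
  refine ⟨κ, fun g x y ↦ ?_, fun g x y ↦ ?_, fun g h x ↦ ?_, fun x ↦ ?_⟩
  · have hle : (T.dist (A g x) (A g y) : ℝ) ≤ κ * T.dist x y + κ :=
      ((hQI g).2.1 x y).trans (by unfold gdist; gcongr)
    exact_mod_cast hle
  · have hdiv : T.dist x y / K ≤ T.dist (A g x) (A g y) + C := sub_le_iff_le_add.1 ((hQI g).1 x y)
    rw [div_le_iff₀ (by linarith), add_mul, mul_comm, mul_comm C] at hdiv
    have hle : (T.dist x y : ℝ) ≤ κ * T.dist (A g x) (A g y) + κ :=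
      hdiv.trans (by gcongr)
    exact_mod_cast hle
  · exact Nat.cast_le.1 ((hcomp g h x).trans hBκ)
  · exact Nat.cast_le.1 ((hid x).trans hBκ)

end DualQuasiIsometry

end BushyTree

/-- **Mosher–Sageev–Whyte.**  A quasi-action of a group `G` on a bounded
valence bushy tree `T` is quasi-conjugate to an isometric action of `G` on a
bounded valence bushy tree `T'`. -/
theorem quasiAction_on_bushy_tree {V : Type} (T : SimpleGraph V) (hT : T.IsTree)
    (hval : BoundedValence T) (hbushy : Bushy T)
    (G : Type) [Group G] (K C B : ℝ) (hK : 1 ≤ K) (hC : 0 ≤ C)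
    (A : G → V → V)
    (hQI : ∀ g : G, IsQI K C (gdist T) (gdist T) (A g))
    (hid : ∀ v : V, gdist T (A 1 v) v ≤ B)
    (hcomp : ∀ (g h : G) (v : V), gdist T (A (g * h) v) (A g (A h v)) ≤ B) :
    ∃ (V' : Type) (T' : SimpleGraph V'), T'.IsTree ∧ BoundedValence T' ∧
      Bushy T' ∧
      ∃ ρ : G →* Equiv.Perm V',
        (∀ (g : G) (u v : V'), T'.Adj (ρ g u) (ρ g v) ↔ T'.Adj u v) ∧
        ∃ (f : V' → V) (K' C' : ℝ), 1 ≤ K' ∧ 0 ≤ C' ∧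
          IsQI K' C' (gdist T') (gdist T) f ∧
          ∃ B' : ℝ, ∀ (g : G) (x : V'), gdist T (f (ρ g x)) (A g (f x)) ≤ B' := by
  obtain ⟨κ, hA⟩ := BushyTree.exists_quasiAction_of_isQI T hK hC hQI hid hcomp
  let := hA.mulAction hT.connected hval
  obtain ⟨𝓔, T', hT', hval', hbushy', ρ, hρ, f, M, hM, hf, B', hB'⟩ :=
    (hA.endAction hT hval).exists_isometric_action hT hval hbushy
  exact ⟨BushyTree.DualVertex 𝓔, T', hT', hval', hbushy', ρ, hρ, f, M, M, mod_cast hM,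
    M.cast_nonneg, hf.isQI hM, B', fun g x ↦ Nat.cast_le.2 (hB' g x)⟩
end
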